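/- Let u and ũ be smooth global solutions for t ≥ 0 of the semilinear system □u^I = Q^I(u,∂u) (I = 1,…,N) with smooth compactly supported initial data (u,∂_t u)|_{t=0} and (ũ,∂_t ũ)|_{t=0}, where Q satisfies the null condition, and assume u and ũ admit radiation fields F₀ and F̃₀ in the stated sense. Let R₁ > 0 and R₂ ∈ ℝ with |R₂| < R₁. If (u,∂_t u)|_{t=0}(x) = (ũ,∂_t ũ)|_{t=0}(x) for all |x| ≥ R₁, and F₀(q,ω) = F̃₀(q,ω) for all q > R₂ and all ω ∈ S², then u(t,x) = ũ(t,x) at every point with t > 0 and |x|² − (t+R₂)² ≥ R₁² − R₂². -/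

import Mathlib

noncomputable section
open MeasureTheory Real Set Filter Topology

namespace UCP

/-- Spacetime `ℝ^{1+3}`: a point is `(t, x)` with `x ∈ ℝ³`. -/
abbrev Spc : Type := ℝ × EuclideanSpace ℝ (Fin 3)

/-- Coordinate directions `e_α`, `α = 0,1,2,3` (`e_0` is the time direction). -/
def eVec (α : Fin 4) : Spc :=
  Fin.cases ((1 : ℝ), (0 : EuclideanSpace ℝ (Fin 3)))
    (fun i => ((0 : ℝ), EuclideanSpace.single i (1 : ℝ))) α

/-- The partial derivative `∂_α u`. -/
def pd (α : Fin 4) (u : Spc → ℝ) (p : Spc) : ℝ := fderiv ℝ u p (eVec α)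

/-- `∂_t u`. -/
def dt (u : Spc → ℝ) : Spc → ℝ := pd 0 u

/-- `∂_i u`, `i = 1,2,3`. -/
def dxi (i : Fin 3) (u : Spc → ℝ) : Spc → ℝ := pd i.succ u

/-- The d'Alembertian `□u = -∂_t² u + Δ_x u`. -/
def box (u : Spc → ℝ) (p : Spc) : ℝ :=
  - dt (dt u) p + ∑ i : Fin 3, dxi i (dxi i u) p

/-- Signs of the Minkowski metric `diag(-1,1,1,1)`, so that `∂^α = eta α • ∂_α`. -/
def eta (α : Fin 4) : ℝ := if α = 0 then -1 else 1

/-- `r = |x|`. -/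
def rr (p : Spc) : ℝ := ‖p.2‖

/-- The radial derivative `∂_r u = Σ_i (x_i/r) ∂_i u`. -/
def dr (u : Spc → ℝ) (p : Spc) : ℝ := ∑ i : Fin 3, (p.2 i / rr p) * dxi i u p

/-- `ω̂ = (-1, x/r)` as a `Fin 4`-indexed family. -/
def hatom (p : Spc) (α : Fin 4) : ℝ := Fin.cases (-1 : ℝ) (fun i => p.2 i / rr p) α

/-- The scaling field `S = t∂_t + r∂_r`. -/
def Sc (u : Spc → ℝ) (p : Spc) : ℝ := p.1 * dt u p + ∑ i : Fin 3, p.2 i * dxi i u p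

/-- The rotations `Ω_{ij} = x_i∂_j - x_j∂_i`. -/
def Rot (i j : Fin 3) (u : Spc → ℝ) (p : Spc) : ℝ := p.2 i * dxi j u p - p.2 j * dxi i u p

/-- The Lorentz boosts `Ω_{0i} = x_i∂_t + t∂_i`. -/
def Lor (i : Fin 3) (u : Spc → ℝ) (p : Spc) : ℝ := p.2 i * dt u p + p.1 * dxi i u p

/-- The eleven commuting vector fields `Z`: the four translations, the scaling, the
three rotations and the three Lorentz boosts. -/
def ZList : List ((Spc → ℝ) → Spc → ℝ) :=
  [pd 0, pd 1, pd 2, pd 3, Sc, Rot 0 1, Rot 0 2, Rot 1 2, Lor 0, Lor 1, Lor 2]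

/-- `Σ_{|I| ≤ 1} |Z^I g| = |g| + Σ_Z |Zg|` at a point. -/
def Z1sum (g : Spc → ℝ) (p : Spc) : ℝ := |g p| + (ZList.map fun Z => |Z g p|).sum

/-- `u - r⁻¹ F₀(r - t, x/r)`, componentwise. -/
def radProfile {N : ℕ} (u : Fin N → Spc → ℝ)
    (F : ℝ → EuclideanSpace ℝ (Fin 3) → Fin N → ℝ) (I : Fin N) (p : Spc) : ℝ :=
  u I p - (rr p)⁻¹ * F (rr p - p.1) ((rr p)⁻¹ • p.2) I

/-- `F` is the radiation field of `u`: it is `C¹`, it is the limit of `r u(r-q, rω)`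
as `r → ∞`, and `Σ_{|I|≤1} |Z^I (u - r⁻¹F(r-t,ω))| ≤ C t⁻² ⟨r-t⟩` for `r > t/2 ≥ c`. -/
def IsRadiationField {N : ℕ} (u : Fin N → Spc → ℝ)
    (F : ℝ → EuclideanSpace ℝ (Fin 3) → Fin N → ℝ) : Prop :=
  (ContDiff ℝ 1 fun z : ℝ × EuclideanSpace ℝ (Fin 3) => F z.1 z.2) ∧
  (∀ (q : ℝ) (ω : EuclideanSpace ℝ (Fin 3)), ‖ω‖ = 1 → ∀ I,
    Filter.Tendsto (fun ρ : ℝ => ρ * u I (ρ - q, ρ • ω)) Filter.atTop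
      (nhds (F q ω I))) ∧
  (∃ C c : ℝ, 0 < C ∧ 0 < c ∧ ∀ p : Spc, c ≤ p.1 / 2 → p.1 / 2 < rr p →
    (∑ I, Z1sum (radProfile u F I) p)
      ≤ C * (p.1 ^ 2)⁻¹ * Real.sqrt (1 + (rr p - p.1) ^ 2))

/-- `ω̂ = (-1, ω)` for a unit vector `ω ∈ 𝕊²`. -/
def hatSph (ω : EuclideanSpace ℝ (Fin 3)) (α : Fin 4) : ℝ :=
  Fin.cases (-1 : ℝ) (fun i => ω i) α

/-- `Q` is smooth, has the quadratic Taylor expansion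
`Q^I(u,v) = Σ_{J,K,α,β} A_{I,JK}^{αβ} v_α^J v_β^K + O((|u|+|v|)³)` near `0`, and the
coefficients `A` satisfy the null condition `A_{I,JK}^{αβ} ω̂_α ω̂_β = 0`. -/
def HasNullForm {N : ℕ} (Q : ((Fin N → ℝ) × (Fin N → Fin 4 → ℝ)) → Fin N → ℝ)
    (A : Fin N → Fin N → Fin N → Fin 4 → Fin 4 → ℝ) : Prop :=
  ContDiff ℝ (⊤ : ℕ∞) Q ∧
  (∃ C ε : ℝ, 0 < C ∧ 0 < ε ∧ ∀ z : (Fin N → ℝ) × (Fin N → Fin 4 → ℝ),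
    ‖z.1‖ + ‖z.2‖ ≤ ε → ∀ I,
    |Q z I - ∑ J : Fin N, ∑ K : Fin N, ∑ α : Fin 4, ∑ β : Fin 4,
        A I J K α β * z.2 J α * z.2 K β|
      ≤ C * (‖z.1‖ + ‖z.2‖) ^ 3) ∧
  (∀ I J K, ∀ ω : EuclideanSpace ℝ (Fin 3), ‖ω‖ = 1 →
    (∑ α : Fin 4, ∑ β : Fin 4, A I J K α β * hatSph ω α * hatSph ω β) = 0)

/-- `u` is a smooth solution of `□u^I = Q^I(u, ∂u)` for `t ≥ 0` with smooth compactly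
supported initial data at `t = 0`. -/
def IsGlobalSolution {N : ℕ} (Q : ((Fin N → ℝ) × (Fin N → Fin 4 → ℝ)) → Fin N → ℝ)
    (u : Fin N → Spc → ℝ) : Prop :=
  (∀ I, ContDiff ℝ (⊤ : ℕ∞) (u I)) ∧
  (∀ I, HasCompactSupport fun x : EuclideanSpace ℝ (Fin 3) => u I (0, x)) ∧
  (∀ I, HasCompactSupport fun x : EuclideanSpace ℝ (Fin 3) => dt (u I) (0, x)) ∧
  (∀ p : Spc, 0 ≤ p.1 → ∀ I,
    box (u I) p = Q (fun J => u J p, fun J α => pd α (u J) p) I)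

section part1

/-- coordinates -/
def crd (α : Fin 4) (y : Spc) : ℝ := Fin.cases y.1 (fun i => y.2 i) α

/-- first order partial derivative relation -/
def HasPd (α : Fin 4) (f : Spc → ℝ) (d : ℝ) (y : Spc) : Prop :=
  DifferentiableAt ℝ f y ∧ pd α f y = d

section pdrules
variable {α : Fin 4} {f g : Spc → ℝ} {a b : ℝ} {y : Spc}

theorem HasPd.of_diff (h : DifferentiableAt ℝ f y) : HasPd α f (pd α f y) y := ⟨h, rfl⟩

theorem HasPd.add (hf : HasPd α f a y) (hg : HasPd α g b y) :
    HasPd α (fun z => f z + g z) (a + b) y := by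
  refine ⟨hf.1.add hg.1, ?_⟩
  rw [← hf.2, ← hg.2]; unfold pd
  rw [fderiv_fun_add hf.1 hg.1]; rfl

theorem HasPd.sub (hf : HasPd α f a y) (hg : HasPd α g b y) :
    HasPd α (fun z => f z - g z) (a - b) y := by
  refine ⟨hf.1.sub hg.1, ?_⟩
  rw [← hf.2, ← hg.2]; unfold pd
  rw [fderiv_fun_sub hf.1 hg.1]; rfl

theorem HasPd.mul (hf : HasPd α f a y) (hg : HasPd α g b y) :
    HasPd α (fun z => f z * g z) (a * g y + f y * b) y := by
  refine ⟨hf.1.mul hg.1, ?_⟩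
  rw [← hf.2, ← hg.2]; unfold pd
  rw [fderiv_fun_mul hf.1 hg.1]; simp; ring

theorem HasPd.const (c : ℝ) : HasPd α (fun _ => c) 0 y := by
  refine ⟨differentiableAt_const c, ?_⟩
  unfold pd; simp

theorem HasPd.cmul (c : ℝ) (hf : HasPd α f a y) :
    HasPd α (fun z => c * f z) (c * a) y := by
  have := (HasPd.const (α := α) (y := y) c).mul hf
  simpa using this

theorem HasPd.sum {ι : Type*} (s : Finset ι) {F : ι → Spc → ℝ} {d : ι → ℝ}
    (h : ∀ i ∈ s, HasPd α (F i) (d i) y) :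
    HasPd α (fun z => ∑ i ∈ s, F i z) (∑ i ∈ s, d i) y := by
  classical
  induction s using Finset.induction_on with
  | empty => simpa using HasPd.const 0
  | insert i s hi ih =>
    simp only [Finset.sum_insert hi]
    exact (h i (by simp)).add (ih fun j hj => h j (by simp [hj]))

theorem HasPd.comp {k : ℝ → ℝ} {k' : ℝ} (hf : HasPd α f a y) (hk : HasDerivAt k k' (f y)) :
    HasPd α (fun z => k (f z)) (k' * a) y := by
  have := hk.comp_hasFDerivAt y hf.1.hasFDerivAt
  refine ⟨this.differentiableAt, ?_⟩
  unfold pd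
  have h2 : fderiv ℝ (fun z => k (f z)) y = k' • fderiv ℝ f y := this.fderiv
  rw [h2, ← hf.2]; simp [pd]

theorem HasPd.congr (hf : HasPd α f a y) (h : g =ᶠ[𝓝 y] f) : HasPd α g a y := by
  refine ⟨hf.1.congr_of_eventuallyEq h, ?_⟩
  rw [← hf.2]; unfold pd; rw [h.fderiv_eq]

end pdrules

theorem pd_congr {f g : Spc → ℝ} {y : Spc} (h : f =ᶠ[𝓝 y] g) (α : Fin 4) :
    pd α f y = pd α g y := by unfold pd; rw [h.fderiv_eq]

/-- coordinates as a continuous linear map -/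
def crdL (α : Fin 4) : Spc →L[ℝ] ℝ :=
  Fin.cases (ContinuousLinearMap.fst ℝ ℝ (EuclideanSpace ℝ (Fin 3)))
    (fun i => (EuclideanSpace.proj i).comp
      (ContinuousLinearMap.snd ℝ ℝ (EuclideanSpace ℝ (Fin 3)))) α

theorem crdL_apply (α : Fin 4) (y : Spc) : crdL α y = crd α y := by
  refine Fin.cases ?_ (fun i => ?_) α <;> simp [crdL, crd]

theorem crd_eq (α : Fin 4) : crd α = crdL α := funext fun y => (crdL_apply α y).symm

theorem crd_eVec (α β : Fin 4) : crd β (eVec α) = if α = β then 1 else 0 := by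
  fin_cases α <;> fin_cases β <;> simp [crd, eVec, Fin.cases, Fin.induction, Fin.induction.go]

theorem hasPd_crd (α β : Fin 4) (y : Spc) :
    HasPd α (crd β) (if α = β then 1 else 0) y := by
  refine ⟨by rw [crd_eq]; exact (crdL β).differentiableAt, ?_⟩
  unfold pd
  rw [crd_eq, ContinuousLinearMap.fderiv, crdL_apply, crd_eVec]

theorem contDiff_crd (β : Fin 4) {n : WithTop ℕ∞} : ContDiff ℝ n (crd β) := by
  rw [crd_eq]; exact (crdL β).contDiff

@[simp] theorem crd_zero (y : Spc) : crd 0 y = y.1 := rfl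
@[simp] theorem crd_one (y : Spc) : crd 1 y = y.2 0 := rfl
@[simp] theorem crd_two (y : Spc) : crd 2 y = y.2 1 := rfl
@[simp] theorem crd_three (y : Spc) : crd 3 y = y.2 2 := rfl
@[simp] theorem eta_zero : eta 0 = -1 := by simp [eta]
@[simp] theorem eta_one : eta 1 = 1 := by simp [eta]
@[simp] theorem eta_two : eta 2 = 1 := by simp [eta]
@[simp] theorem eta_three : eta 3 = 1 := by simp [eta]

theorem box_eq (u : Spc → ℝ) (p : Spc) : box u p = ∑ α, eta α * pd α (pd α u) p := by
  unfold box dt dxi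
  rw [Fin.sum_univ_succ (n := 3)]
  congr 1
  · simp
  · refine Finset.sum_congr rfl fun i _ => ?_
    have : eta i.succ = 1 := by simp [eta, Fin.succ_ne_zero]
    rw [this, one_mul]

theorem pd_contDiffAt {u : Spc → ℝ} {y : Spc} {n m : WithTop ℕ∞} (h : ContDiffAt ℝ n u y)
    (hmn : m + 1 ≤ n) (α : Fin 4) : ContDiffAt ℝ m (pd α u) y := by
  unfold pd
  exact (h.fderiv_right hmn).clm_apply contDiffAt_const

theorem pd_contDiff {u : Spc → ℝ} (h : ContDiff ℝ (⊤ : ℕ∞) u) (α : Fin 4) :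
    ContDiff ℝ (⊤ : ℕ∞) (pd α u) := by
  rw [contDiff_iff_contDiffAt]
  intro y
  exact pd_contDiffAt h.contDiffAt (by simp) α

theorem pd_comm {u : Spc → ℝ} {y : Spc} (h : ContDiffAt ℝ 2 u y) (α β : Fin 4) :
    pd α (pd β u) y = pd β (pd α u) y := by
  have hs := h.isSymmSndFDerivAt (by simp)
  have hd : DifferentiableAt ℝ (fderiv ℝ u) y :=
    (h.fderiv_right (m := 1) (by norm_num)).differentiableAt (by norm_num)
  have key : ∀ α β : Fin 4, pd α (pd β u) y = fderiv ℝ (fderiv ℝ u) y (eVec α) (eVec β) := by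
    intro α β
    have : pd β u = fun z => (fderiv ℝ u z) (eVec β) := rfl
    unfold pd
    rw [fderiv_clm_apply hd (differentiableAt_const _)]
    simp
  rw [key, key, hs]

/-! ### Carleman identity -/

/-- derivative of the quadratic weight -/
def Wd (κ c : Fin 4 → ℝ) (β : Fin 4) (y : Spc) : ℝ := 2 * κ β * (crd β y - c β)

/-- quadratic weight -/
def Wt (κ c : Fin 4 → ℝ) (K : ℝ) (y : Spc) : ℝ := (∑ β, κ β * (crd β y - c β) ^ 2) - K

theorem hasPd_Wd (κ c : Fin 4 → ℝ) (α β : Fin 4) (y : Spc) :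
    HasPd α (Wd κ c β) (2 * κ β * (if α = β then 1 else 0)) y := by
  have := ((hasPd_crd α β y).sub (HasPd.const (c β))).cmul (2 * κ β)
  rw [sub_zero] at this
  exact this

theorem hasPd_Wt (κ c : Fin 4 → ℝ) (K : ℝ) (α : Fin 4) (y : Spc) :
    HasPd α (Wt κ c K) (Wd κ c α y) y := by
  have h : ∀ β, HasPd α (fun z => κ β * ((crd β z - c β) * (crd β z - c β))) _ y := fun β =>
    (((hasPd_crd α β y).sub (HasPd.const (c β))).mul
      ((hasPd_crd α β y).sub (HasPd.const (c β)))).cmul (κ β)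
  have h2 := (HasPd.sum Finset.univ (fun β _ => h β)).sub (HasPd.const K)
  have e : Wt κ c K = fun z => (∑ β, κ β * ((crd β z - c β) * (crd β z - c β))) - K := by
    funext z; simp [Wt, pow_two]
  rw [e]
  convert h2 using 1
  unfold Wd
  rw [Finset.sum_eq_single α]
  · simp; ring
  · intro b _ hb; simp [Ne.symm hb]
  · simp

theorem contDiff_Wd (κ c : Fin 4 → ℝ) (β : Fin 4) {n : WithTop ℕ∞} : ContDiff ℝ n (Wd κ c β) := by
  unfold Wd; exact contDiff_const.mul ((contDiff_crd β).sub contDiff_const)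

theorem contDiff_Wt (κ c : Fin 4 → ℝ) (K : ℝ) {n : WithTop ℕ∞} : ContDiff ℝ n (Wt κ c K) := by
  unfold Wt
  exact (ContDiff.sum fun β _ =>
    contDiff_const.mul (((contDiff_crd β).sub contDiff_const).pow 2)).sub contDiff_const

/-- the Carleman current -/
def cur (l ρ : ℝ) (κ c : Fin 4 → ℝ) (ψ : Spc → ℝ) (α : Fin 4) (y : Spc) : ℝ :=
  (-4 * l) * (eta α * (pd α ψ y * (∑ β, eta β * (Wd κ c β y * pd β ψ y)))
      - (1 / 2) * (eta α * (Wd κ c α y * (∑ β, eta β * (pd β ψ y * pd β ψ y)))))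
    - (2 * l * ρ) * (eta α * (ψ y * pd α ψ y))
    - (2 * l ^ 3) * (eta α * (Wd κ c α y * ((∑ β, eta β * (Wd κ c β y * Wd κ c β y))
        * (ψ y * ψ y))))

theorem cur_identity (l ρ : ℝ) (κ c : Fin 4 → ℝ) (ψ : Spc → ℝ) (y : Spc)
    (h : ContDiffAt ℝ 2 ψ y) :
    (∑ α, pd α (cur l ρ κ c ψ α) y) =
      2 * ((∑ α, eta α * pd α (pd α ψ) y)
          + l ^ 2 * (∑ β, eta β * (Wd κ c β y) ^ 2) * ψ y)
        * (-2 * l * (∑ β, eta β * (Wd κ c β y * pd β ψ y)) - l * ρ * ψ y)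
      - 2 * l * ((∑ α, (4 * κ α + (ρ - ∑ β, eta β * (2 * κ β)) * eta α) * (pd α ψ y) ^ 2)
        + l ^ 2 * (ψ y) ^ 2 * ((∑ α, 4 * κ α * (Wd κ c α y) ^ 2)
          - (ρ - ∑ β, eta β * (2 * κ β)) * (∑ β, eta β * (Wd κ c β y) ^ 2))) := by
  have hψ : ∀ α, HasPd α ψ (pd α ψ y) y := fun α =>
    HasPd.of_diff (h.differentiableAt (by norm_num))
  have hH : ∀ α β, HasPd α (pd β ψ) (pd α (pd β ψ) y) y := fun α β =>
    HasPd.of_diff ((pd_contDiffAt (m := 1) h (by norm_num) β).differentiableAt (by norm_num))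
  have hW := hasPd_Wd κ c
  have hX : ∀ α, HasPd α (fun z => ∑ β, eta β * (Wd κ c β z * pd β ψ z)) _ y := fun α =>
    HasPd.sum Finset.univ (fun β _ => ((hW α β y).mul (hH α β)).cmul (eta β))
  have hN : ∀ α, HasPd α (fun z => ∑ β, eta β * (pd β ψ z * pd β ψ z)) _ y := fun α =>
    HasPd.sum Finset.univ (fun β _ => ((hH α β).mul (hH α β)).cmul (eta β))
  have hM : ∀ α, HasPd α (fun z => ∑ β, eta β * (Wd κ c β z * Wd κ c β z)) _ y := fun α =>
    HasPd.sum Finset.univ (fun β _ => ((hW α β y).mul (hW α β y)).cmul (eta β))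
  have hJ : ∀ α, HasPd α (cur l ρ κ c ψ α) _ y := fun α =>
    ((((((hH α α).mul (hX α)).cmul (eta α)).sub
      ((((hW α α y).mul (hN α)).cmul (eta α)).cmul (1 / 2))).cmul (-4 * l)).sub
      ((((hψ α).mul (hH α α)).cmul (eta α)).cmul (2 * l * ρ))).sub
      ((((hW α α y).mul ((hM α).mul ((hψ α).mul (hψ α)))).cmul (eta α)).cmul (2 * l ^ 3))
  rw [Finset.sum_congr rfl fun α _ => (hJ α).2]
  have s10 := pd_comm h 1 0
  have s20 := pd_comm h 2 0
  have s30 := pd_comm h 3 0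
  have s21 := pd_comm h 2 1
  have s31 := pd_comm h 3 1
  have s32 := pd_comm h 3 2
  simp only [Fin.sum_univ_four, eta_zero, eta_one, eta_two, eta_three, s10, s20, s30, s21, s31, s32]
  simp (decide := true) only [if_true, if_false]
  ring

end part1

section part2

/-- conjugated function -/
def psi (l : ℝ) (κ c : Fin 4 → ℝ) (K : ℝ) (φ : Spc → ℝ) (y : Spc) : ℝ :=
  Real.exp (l * Wt κ c K y) * φ y

theorem hasPd_exp (l : ℝ) (κ c : Fin 4 → ℝ) (K : ℝ) (α : Fin 4) (y : Spc) :
    HasPd α (fun z => Real.exp (l * Wt κ c K z))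
      (Real.exp (l * Wt κ c K y) * (l * Wd κ c α y)) y :=
  ((hasPd_Wt κ c K α y).cmul l).comp (Real.hasDerivAt_exp _)

theorem hasPd_psi (l : ℝ) (κ c : Fin 4 → ℝ) (K : ℝ) {φ : Spc → ℝ} {y : Spc}
    (h : DifferentiableAt ℝ φ y) (α : Fin 4) :
    HasPd α (psi l κ c K φ)
      (Real.exp (l * Wt κ c K y) * (pd α φ y + l * Wd κ c α y * φ y)) y := by
  have := (hasPd_exp l κ c K α y).mul (HasPd.of_diff (α := α) h)
  have e : Real.exp (l * Wt κ c K y) * (pd α φ y + l * Wd κ c α y * φ y) =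
    rexp (l * Wt κ c K y) * (l * Wd κ c α y) * φ y + rexp (l * Wt κ c K y) * pd α φ y := by ring
  rw [e]; exact this

theorem psi_contDiffAt (l : ℝ) (κ c : Fin 4 → ℝ) (K : ℝ) {φ : Spc → ℝ} {y : Spc}
    {n : WithTop ℕ∞} (h : ContDiffAt ℝ n φ y) : ContDiffAt ℝ n (psi l κ c K φ) y := by
  unfold psi
  exact ((contDiff_const.mul (contDiff_Wt κ c K)).exp.contDiffAt).mul h

theorem psi_box (l : ℝ) (κ c : Fin 4 → ℝ) (K : ℝ) {φ : Spc → ℝ} {y : Spc}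
    (h : ContDiffAt ℝ 2 φ y) :
    (∑ α, eta α * pd α (pd α (psi l κ c K φ)) y) =
      Real.exp (l * Wt κ c K y) * ((∑ α, eta α * pd α (pd α φ) y)
        + 2 * l * (∑ α, eta α * (Wd κ c α y * pd α φ y))
        + l * (∑ α, eta α * (2 * κ α)) * φ y
        + l ^ 2 * (∑ α, eta α * (Wd κ c α y) ^ 2) * φ y) := by
  have hev : ∀ᶠ z in 𝓝 y, DifferentiableAt ℝ φ z := by
    filter_upwards [h.eventually (by norm_num)] with z hz using hz.differentiableAt (by norm_num)
  have key : ∀ α, pd α (pd α (psi l κ c K φ)) y = Real.exp (l * Wt κ c K y) *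
      (pd α (pd α φ) y + 2 * l * (Wd κ c α y * pd α φ y) + l * (2 * κ α) * φ y
        + l ^ 2 * (Wd κ c α y) ^ 2 * φ y) := by
    intro α
    have e1 : pd α (psi l κ c K φ) =ᶠ[𝓝 y] fun z =>
        Real.exp (l * Wt κ c K z) * (pd α φ z + l * (Wd κ c α z * φ z)) := by
      filter_upwards [hev] with z hz
      rw [(hasPd_psi l κ c K hz α).2, mul_assoc l]
    rw [pd_congr e1]
    have h1 : HasPd α φ (pd α φ y) y := HasPd.of_diff (h.differentiableAt (by norm_num))
    have h2 : HasPd α (pd α φ) (pd α (pd α φ) y) y :=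
      HasPd.of_diff ((pd_contDiffAt (m := 1) h (by norm_num) α).differentiableAt (by norm_num))
    have h3 := (hasPd_exp l κ c K α y).mul (h2.add (((hasPd_Wd κ c α α y).mul h1).cmul l))
    rw [h3.2]; simp; ring
  simp only [key, Fin.sum_univ_four]
  ring

theorem cur_le (l θ e0 e1 : ℝ) (hl : 0 ≤ l) (κ c : Fin 4 → ℝ) (K : ℝ) (φ : Spc → ℝ) (y : Spc)
    (h : ContDiffAt ℝ 2 φ y) (h1 : ∀ α, e1 ≤ 4 * κ α + θ * eta α)
    (h0 : e0 ≤ (∑ α, 4 * κ α * (Wd κ c α y) ^ 2) - θ * (∑ β, eta β * (Wd κ c β y) ^ 2)) :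
    (∑ α, pd α (cur l (θ + ∑ β, eta β * (2 * κ β)) κ c (psi l κ c K φ) α) y) ≤
      (Real.exp (l * Wt κ c K y) * ∑ α, eta α * pd α (pd α φ) y) ^ 2
        + l ^ 2 * θ ^ 2 * (psi l κ c K φ y) ^ 2
        - 2 * l * (e1 * (∑ α, (pd α (psi l κ c K φ) y) ^ 2)
          + l ^ 2 * e0 * (psi l κ c K φ y) ^ 2) := by
  rw [cur_identity _ _ _ _ _ _ (psi_contDiffAt l κ c K h), psi_box l κ c K h]
  have hd := fun α => (hasPd_psi l κ c K (h.differentiableAt (by norm_num)) α).2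
  have hX : (∑ β, eta β * (Wd κ c β y * pd β (psi l κ c K φ) y)) =
      Real.exp (l * Wt κ c K y) * ((∑ β, eta β * (Wd κ c β y * pd β φ y))
        + l * (∑ α, eta α * (Wd κ c α y) ^ 2) * φ y) := by
    simp only [hd, Fin.sum_univ_four]; ring
  rw [hX]
  simp only [add_sub_cancel_right]
  have hb : e1 * (∑ α, (pd α (psi l κ c K φ) y) ^ 2) ≤
      ∑ α, (4 * κ α + θ * eta α) * (pd α (psi l κ c K φ) y) ^ 2 := by
    rw [Finset.mul_sum]
    exact Finset.sum_le_sum fun α _ => mul_le_mul_of_nonneg_right (h1 α) (sq_nonneg _)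
  have hb0 : l ^ 2 * e0 * (psi l κ c K φ y) ^ 2 ≤ l ^ 2 * (psi l κ c K φ y) ^ 2 *
      ((∑ α, 4 * κ α * (Wd κ c α y) ^ 2) - θ * (∑ β, eta β * (Wd κ c β y) ^ 2)) := by
    have := mul_le_mul_of_nonneg_left h0
      (mul_nonneg (sq_nonneg l) (sq_nonneg (psi l κ c K φ y)))
    linarith
  have hbb := mul_le_mul_of_nonneg_left (add_le_add hb hb0) (by linarith : 0 ≤ 2 * l)
  refine sub_le_sub ?_ hbb
  have hp : psi l κ c K φ y = Real.exp (l * Wt κ c K y) * φ y := rfl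
  rw [hp]
  generalize (∑ α, eta α * pd α (pd α φ) y) = B
  generalize (∑ β, eta β * (Wd κ c β y * pd β φ y)) = X
  generalize (∑ α, eta α * (Wd κ c α y) ^ 2) = M
  generalize (∑ β, eta β * (2 * κ β)) = T
  generalize Real.exp (l * Wt κ c K y) = E
  generalize φ y = f
  have e : E * B = (E * (B + 2 * l * X + l * T * f + l ^ 2 * M * f) + l ^ 2 * M * (E * f))
     + (-2 * l * (E * (X + l * M * f)) - l * (θ + T) * (E * f)) + l * θ * (E * f) := by ring
  rw [e]
  generalize (E * (B + 2 * l * X + l * T * f + l ^ 2 * M * f) + l ^ 2 * M * (E * f)) = S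
  generalize (-2 * l * (E * (X + l * M * f)) - l * (θ + T) * (E * f)) = A
  have : l ^ 2 * θ ^ 2 * (E * f) ^ 2 = (l * θ * (E * f)) ^ 2 := by ring
  rw [this]
  generalize (l * θ * (E * f)) = q
  nlinarith [sq_nonneg (S - A), sq_nonneg (S + A + 2 * q)]

theorem carleman_pw {N : ℕ} (θ e0 e1 C M : ℝ) (he0 : 0 < e0) (he1 : 0 < e1) (hC : 0 ≤ C)
    (κ c : Fin 4 → ℝ) (K : ℝ) (φ : Fin N → Spc → ℝ) (V : Set Spc)
    (h : ∀ I, ∀ y ∈ V, ContDiffAt ℝ 2 (φ I) y) (h1 : ∀ α, e1 ≤ 4 * κ α + θ * eta α)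
    (h0 : ∀ y ∈ V, e0 ≤ (∑ α, 4 * κ α * (Wd κ c α y) ^ 2) - θ * (∑ β, eta β * (Wd κ c β y) ^ 2))
    (hM : ∀ y ∈ V, ∀ α, |Wd κ c α y| ≤ M)
    (hbox : ∀ y ∈ V, ∀ I, (∑ α, eta α * pd α (pd α (φ I)) y) ^ 2 ≤
      C * ∑ J, ((φ J y) ^ 2 + ∑ α, (pd α (φ J) y) ^ 2)) :
    ∃ l0 : ℝ, 1 ≤ l0 ∧ ∀ l ≥ l0, ∀ y ∈ V,
      (∑ I, ∑ α, pd α (cur l (θ + ∑ β, eta β * (2 * κ β)) κ c (psi l κ c K (φ I)) α) y) ≤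
        - (l ^ 3 * e0) * ∑ I, (psi l κ c K (φ I) y) ^ 2 := by
  set C' := (N : ℝ) * C with hC'
  have hC'0 : 0 ≤ C' := by positivity
  obtain ⟨l0, hl0⟩ : ∃ l0 : ℝ, 1 ≤ l0 ∧ ∀ l ≥ l0, 2 * C' ≤ 2 * l * e1 ∧
      C' * (1 + 8 * l ^ 2 * M ^ 2) + l ^ 2 * θ ^ 2 ≤ l ^ 3 * e0 := by
    refine ⟨max 1 (max (C' / e1) ((C' * (1 + 8 * M ^ 2) + θ ^ 2) / e0)), le_max_left _ _, ?_⟩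
    intro l hl
    have a1 : 1 ≤ l := le_trans (le_max_left _ _) hl
    have a2 : C' / e1 ≤ l := le_trans (le_trans (le_max_left _ _) (le_max_right _ _)) hl
    have a3 : (C' * (1 + 8 * M ^ 2) + θ ^ 2) / e0 ≤ l :=
      le_trans (le_trans (le_max_right _ _) (le_max_right _ _)) hl
    rw [div_le_iff₀ he1] at a2
    rw [div_le_iff₀ he0] at a3
    refine ⟨by linarith, ?_⟩
    have l2 : 1 ≤ l ^ 2 := by nlinarith
    have := mul_le_mul_of_nonneg_left a3 (by positivity : 0 ≤ l ^ 2)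
    nlinarith [mul_nonneg hC'0 (by linarith : 0 ≤ l ^ 2 - 1)]
  refine ⟨l0, hl0.1, fun l hl y hy => ?_⟩
  obtain ⟨b1, b2⟩ := hl0.2 l hl
  have hl1 : 1 ≤ l := le_trans hl0.1 hl
  set E := Real.exp (l * Wt κ c K y) with hE
  have step1 : ∀ I, (∑ α, pd α (cur l (θ + ∑ β, eta β * (2 * κ β)) κ c (psi l κ c K (φ I)) α) y)
      ≤ C * (∑ J, ((psi l κ c K (φ J) y) ^ 2 * (1 + 8 * l ^ 2 * M ^ 2)
          + 2 * ∑ α, (pd α (psi l κ c K (φ J)) y) ^ 2))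
        + l ^ 2 * θ ^ 2 * (psi l κ c K (φ I) y) ^ 2
        - 2 * l * (e1 * (∑ α, (pd α (psi l κ c K (φ I)) y) ^ 2)
          + l ^ 2 * e0 * (psi l κ c K (φ I) y) ^ 2) := by
    intro I
    refine (cur_le l θ e0 e1 (by linarith) κ c K (φ I) y (h I y hy) h1 (h0 y hy)).trans ?_
    gcongr
    rw [mul_pow]
    refine (mul_le_mul_of_nonneg_left (hbox y hy I) (sq_nonneg E)).trans ?_
    rw [mul_left_comm]
    refine mul_le_mul_of_nonneg_left ?_ hC
    rw [Finset.mul_sum]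
    refine Finset.sum_le_sum fun J _ => ?_
    have hd := fun α => (hasPd_psi l κ c K ((h J y hy).differentiableAt (by norm_num)) α).2
    have hp : psi l κ c K (φ J) y = E * φ J y := rfl
    have each : ∀ α, E ^ 2 * (pd α (φ J) y) ^ 2 ≤ 2 * (pd α (psi l κ c K (φ J)) y) ^ 2
        + 2 * l ^ 2 * M ^ 2 * (E * φ J y) ^ 2 := by
      intro α
      rw [hd α, ← hE]
      have hm : (Wd κ c α y) ^ 2 ≤ M ^ 2 := sq_le_sq' (by linarith [neg_abs_le (Wd κ c α y), hM y hy α])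
        (le_trans (le_abs_self _) (hM y hy α))
      have := mul_le_mul_of_nonneg_left hm (by positivity : 0 ≤ 2 * l ^ 2 * (E * φ J y) ^ 2)
      nlinarith [sq_nonneg (E * pd α (φ J) y + 2 * (l * Wd κ c α y * (E * φ J y)))]
    have hs := Finset.sum_le_sum fun α (_ : α ∈ Finset.univ) => each α
    rw [hp, mul_add, Finset.mul_sum]
    have : ∑ α : Fin 4, (2 * (pd α (psi l κ c K (φ J)) y) ^ 2 + 2 * l ^ 2 * M ^ 2 * (E * φ J y) ^ 2)
        = 2 * (∑ α, (pd α (psi l κ c K (φ J)) y) ^ 2) + 8 * l ^ 2 * M ^ 2 * (E * φ J y) ^ 2 := by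
      rw [Finset.sum_add_distrib, ← Finset.mul_sum]; simp; ring
    rw [this] at hs
    nlinarith
  refine (Finset.sum_le_sum fun I _ => step1 I).trans ?_
  rw [Finset.sum_sub_distrib, Finset.sum_add_distrib, Finset.sum_const, Finset.card_univ,
    Fintype.card_fin, nsmul_eq_mul, ← mul_assoc, ← hC', Finset.mul_sum, ← Finset.sum_add_distrib,
    ← Finset.sum_sub_distrib, Finset.mul_sum]
  refine Finset.sum_le_sum fun I _ => ?_
  have n1 : 0 ≤ ∑ α, (pd α (psi l κ c K (φ I)) y) ^ 2 := Finset.sum_nonneg fun _ _ => sq_nonneg _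
  generalize (∑ α, (pd α (psi l κ c K (φ I)) y) ^ 2) = P at n1 ⊢
  have n2 := sq_nonneg (psi l κ c K (φ I) y)
  generalize (psi l κ c K (φ I) y) ^ 2 = R at n2 ⊢
  nlinarith [mul_nonneg n1 (sub_nonneg.2 b1), mul_nonneg n2 (sub_nonneg.2 b2)]

end part2

section part3

instance instHaarSpc : (volume : Measure Spc).IsAddHaarMeasure :=
  inferInstanceAs (((volume : Measure ℝ).prod
    (volume : Measure (EuclideanSpace ℝ (Fin 3)))).IsAddHaarMeasure)

theorem integral_pd_zero {F : Spc → ℝ} (hd : Differentiable ℝ F) (hi : Integrable F)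
    (α : Fin 4) (hi' : Integrable (pd α F)) : ∫ y, pd α F y = 0 := by
  have := integral_mul_fderiv_eq_neg_fderiv_mul_of_integrable (μ := (volume : Measure Spc))
    (f := fun _ : Spc => (1 : ℝ)) (g := F) (v := eVec α) (by simp) (by simp only [one_mul]; exact hi')
    (by simpa using hi) (by simp) (fun x _ => hd x)
  simpa [pd] using this

theorem div_lemma {V O Z : Set Spc} (hV : IsOpen V) (hVb : Bornology.IsBounded V)
    (hO : IsOpen O) (hZ : IsClosed Z) (hsub : closure V ∩ Z ⊆ O) {f : Spc → ℝ}
    (hf0 : ∀ y, y ∉ Z → f y = 0) (hf : ∀ y ∈ O, ContDiffAt ℝ 1 f y)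
    (hfr : ∀ y ∈ O, y ∈ closure V → y ∉ V → f y = 0 ∧ fderiv ℝ f y = 0) (α : Fin 4) :
    IntegrableOn (pd α f) V ∧ ∫ y in V, pd α f y = 0 := by
  have hz : ∀ y, y ∉ Z → f =ᶠ[𝓝 y] fun _ => 0 := fun y hy => by
    filter_upwards [hZ.isOpen_compl.mem_nhds hy] with z hz using hf0 z hz
  have hz' : ∀ y, y ∉ Z → fderiv ℝ f y = 0 := fun y hy => by
    rw [(hz y hy).fderiv_eq]; simp
  have hder : ∀ y, HasFDerivAt (V.indicator f) (V.indicator (fderiv ℝ f) y) y := by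
    intro y
    by_cases hyV : y ∈ V
    · have e : V.indicator f =ᶠ[𝓝 y] f := by
        filter_upwards [hV.mem_nhds hyV] with z hz using indicator_of_mem hz f
      rw [indicator_of_mem hyV]
      refine HasFDerivAt.congr_of_eventuallyEq ?_ e
      refine DifferentiableAt.hasFDerivAt ?_
      by_cases hyZ : y ∈ Z
      · exact (hf y (hsub ⟨subset_closure hyV, hyZ⟩)).differentiableAt (by norm_num)
      · exact (differentiableAt_const (0 : ℝ)).congr_of_eventuallyEq (hz y hyZ)
    · rw [indicator_of_notMem hyV]
      by_cases hyc : y ∈ closure V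
      · by_cases hyZ : y ∈ Z
        · have hyO := hsub ⟨hyc, hyZ⟩
          obtain ⟨f0, f1⟩ := hfr y hyO hyc hyV
          have hd := ((hf y hyO).differentiableAt (by norm_num)).hasFDerivAt
          rw [f1] at hd
          rw [hasFDerivAt_iff_isLittleO] at hd ⊢
          refine Asymptotics.IsBigO.trans_isLittleO ?_ hd
          refine Asymptotics.IsBigO.of_bound 1 (Eventually.of_forall fun z => ?_)
          rw [indicator_of_notMem hyV, f0]
          by_cases hzV : z ∈ V
          · simp [indicator_of_mem hzV]
          · simp [indicator_of_notMem hzV]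
        · have e : V.indicator f =ᶠ[𝓝 y] fun _ => 0 := by
            filter_upwards [hz y hyZ] with z hz
            by_cases hzV : z ∈ V
            · simp [indicator_of_mem hzV, hz]
            · simp [indicator_of_notMem hzV]
          exact (hasFDerivAt_const (0 : ℝ) y).congr_of_eventuallyEq e
      · have e : V.indicator f =ᶠ[𝓝 y] fun _ => 0 := by
          filter_upwards [isClosed_closure.isOpen_compl.mem_nhds hyc] with z hz
          exact indicator_of_notMem (fun h => hz (subset_closure h)) f
        exact (hasFDerivAt_const (0 : ℝ) y).congr_of_eventuallyEq e
  have hcpt : IsCompact (closure V ∩ Z) :=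
    (Metric.isCompact_of_isClosed_isBounded isClosed_closure hVb.closure).inter_right hZ
  have hint : ∀ g : Spc → ℝ, (∀ y, y ∉ Z → g y = 0) → (∀ y ∈ O, ContinuousAt g y) →
      Integrable (V.indicator g) := by
    intro g g0 gc
    have h1 : IntegrableOn g (closure V ∩ Z) :=
      ContinuousOn.integrableOn_compact hcpt fun y hy => (gc y (hsub hy)).continuousWithinAt
    have h2 : V.indicator g = V.indicator ((closure V ∩ Z).indicator g) := by
      funext y
      by_cases hyV : y ∈ V
      · rw [indicator_of_mem hyV, indicator_of_mem hyV]
        by_cases hyZ : y ∈ Z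
        · rw [indicator_of_mem (show y ∈ closure V ∩ Z from ⟨subset_closure hyV, hyZ⟩)]
        · rw [g0 y hyZ, indicator_of_notMem (fun h => hyZ h.2)]
      · rw [indicator_of_notMem hyV, indicator_of_notMem hyV]
    rw [h2]
    exact (h1.integrable_indicator (isClosed_closure.inter hZ).measurableSet).indicator
      hV.measurableSet
  have hpd : pd α (V.indicator f) = V.indicator (pd α f) := by
    funext y
    unfold pd
    rw [(hder y).fderiv]
    by_cases hyV : y ∈ V
    · simp [indicator_of_mem hyV]
    · simp [indicator_of_notMem hyV]
  have i1 : Integrable (V.indicator (pd α f)) := by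
    refine hint _ (fun y hy => by simp [pd, hz' y hy]) fun y hy => ?_
    exact (pd_contDiffAt (m := 0) (hf y hy) (by norm_num) α).continuousAt
  have i0 : Integrable (V.indicator f) :=
    hint _ hf0 fun y hy => (hf y hy).continuousAt
  refine ⟨(integrable_indicator_iff hV.measurableSet).1 i1, ?_⟩
  rw [← integral_indicator hV.measurableSet, ← hpd]
  exact integral_pd_zero (fun y => (hder y).differentiableAt) i0 α (by rw [hpd]; exact i1)

end part3

section part4
open Asymptotics

theorem eVec_decomp (v : Spc) : v = ∑ α, crd α v • eVec α := by
  rw [Fin.sum_univ_four]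
  refine Prod.ext ?_ ?_
  · simp [eVec, Fin.cases, Fin.induction, Fin.induction.go]
  · ext i
    fin_cases i <;> simp [eVec, Fin.cases, Fin.induction, Fin.induction.go]

theorem clm_eq_sum (A : Spc →L[ℝ] ℝ) (v : Spc) : A v = ∑ α, crd α v * A (eVec α) := by
  conv_lhs => rw [eVec_decomp v]
  simp [map_sum]

theorem fderiv_eq_zero_of_pd {f : Spc → ℝ} {y : Spc} (h : ∀ α, pd α f y = 0) :
    fderiv ℝ f y = 0 := by
  refine ContinuousLinearMap.ext fun v => ?_
  rw [clm_eq_sum]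
  exact Finset.sum_eq_zero fun α _ => by rw [show fderiv ℝ f y (eVec α) = 0 from h α, mul_zero]

theorem hasPd_cur_zero (l ρ : ℝ) (κ c : Fin 4 → ℝ) (ψ : Spc → ℝ) (y : Spc)
    (h : ContDiffAt ℝ 2 ψ y) (h0 : ψ y = 0) (h1 : ∀ α, pd α ψ y = 0) (α γ : Fin 4) :
    HasPd γ (cur l ρ κ c ψ α) 0 y := by
  have hψ : ∀ α, HasPd α ψ (pd α ψ y) y := fun α =>
    HasPd.of_diff (h.differentiableAt (by norm_num))
  have hH : ∀ α β, HasPd α (pd β ψ) (pd α (pd β ψ) y) y := fun α β =>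
    HasPd.of_diff ((pd_contDiffAt (m := 1) h (by norm_num) β).differentiableAt (by norm_num))
  have hW := hasPd_Wd κ c
  have hX : ∀ α, HasPd α (fun z => ∑ β, eta β * (Wd κ c β z * pd β ψ z)) _ y := fun α =>
    HasPd.sum Finset.univ (fun β _ => ((hW α β y).mul (hH α β)).cmul (eta β))
  have hN : ∀ α, HasPd α (fun z => ∑ β, eta β * (pd β ψ z * pd β ψ z)) _ y := fun α =>
    HasPd.sum Finset.univ (fun β _ => ((hH α β).mul (hH α β)).cmul (eta β))
  have hM : ∀ α, HasPd α (fun z => ∑ β, eta β * (Wd κ c β z * Wd κ c β z)) _ y := fun α =>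
    HasPd.sum Finset.univ (fun β _ => ((hW α β y).mul (hW α β y)).cmul (eta β))
  have hJ : HasPd γ (cur l ρ κ c ψ α) _ y :=
    ((((((hH γ α).mul (hX γ)).cmul (eta α)).sub
      ((((hW γ α y).mul (hN γ)).cmul (eta α)).cmul (1 / 2))).cmul (-4 * l)).sub
      ((((hψ γ).mul (hH γ α)).cmul (eta α)).cmul (2 * l * ρ))).sub
      ((((hW γ α y).mul ((hM γ).mul ((hψ γ).mul (hψ γ)))).cmul (eta α)).cmul (2 * l ^ 3))
  refine ⟨hJ.1, ?_⟩
  rw [hJ.2]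
  simp [h0, h1]

theorem cur_contDiffAt (l ρ : ℝ) (κ c : Fin 4 → ℝ) (ψ : Spc → ℝ) (y : Spc)
    (h : ContDiffAt ℝ 2 ψ y) (α : Fin 4) : ContDiffAt ℝ 1 (cur l ρ κ c ψ α) y := by
  have h1 : ContDiffAt ℝ 1 ψ y := h.of_le (by norm_num)
  have h2 : ∀ β, ContDiffAt ℝ 1 (pd β ψ) y := fun β => pd_contDiffAt h (by norm_num) β
  have h3 : ∀ β, ContDiffAt ℝ 1 (Wd κ c β) y := fun β => (contDiff_Wd κ c β).contDiffAt
  unfold cur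
  have s1 : ContDiffAt ℝ 1 (fun y => ∑ β, eta β * (Wd κ c β y * pd β ψ y)) y :=
    ContDiffAt.sum fun β _ => contDiffAt_const.mul ((h3 β).mul (h2 β))
  have s2 : ContDiffAt ℝ 1 (fun y => ∑ β, eta β * (pd β ψ y * pd β ψ y)) y :=
    ContDiffAt.sum fun β _ => contDiffAt_const.mul ((h2 β).mul (h2 β))
  have s3 : ContDiffAt ℝ 1 (fun y => ∑ β, eta β * (Wd κ c β y * Wd κ c β y)) y :=
    ContDiffAt.sum fun β _ => contDiffAt_const.mul ((h3 β).mul (h3 β))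
  exact ((contDiffAt_const.mul ((contDiffAt_const.mul ((h2 α).mul s1)).sub
    (contDiffAt_const.mul (contDiffAt_const.mul ((h3 α).mul s2))))).sub
    (contDiffAt_const.mul (contDiffAt_const.mul (h1.mul (h2 α))))).sub
    (contDiffAt_const.mul (contDiffAt_const.mul ((h3 α).mul (s3.mul (h1.mul h1)))))

theorem abs_eta (β : Fin 4) : |eta β| = 1 := by unfold eta; split_ifs <;> simp

theorem sum_eta_bound {x z : Fin 4 → ℝ} {A B : ℝ} (hx : ∀ β, |x β| ≤ A) (hz : ∀ β, |z β| ≤ B) :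
    |∑ β, eta β * (x β * z β)| ≤ 4 * (A * B) := by
  refine (Finset.abs_sum_le_sum_abs _ _).trans ?_
  have : ∀ β ∈ (Finset.univ : Finset (Fin 4)), |eta β * (x β * z β)| ≤ A * B := fun β _ => by
    rw [abs_mul, abs_eta, one_mul, abs_mul]
    exact mul_le_mul (hx β) (hz β) (abs_nonneg _) ((abs_nonneg _).trans (hx β))
  refine (Finset.sum_le_sum this).trans ?_
  simp

/-- rough bound of the flux through level sets of the weight -/
theorem cur_flux_bound (l ρ : ℝ) (hl : 1 ≤ l) (κ c : Fin 4 → ℝ) (ψ : Spc → ℝ) (y : Spc)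
    (a E : ℝ) (hE : 0 ≤ E) (h0 : |ψ y| ≤ a * E) (h1 : ∀ β, |pd β ψ y| ≤ a * l * E)
    (h2 : ∀ β, |Wd κ c β y| ≤ a) :
    |∑ α, Wd κ c α y * cur l ρ κ c ψ α y| ≤
      (80 * a ^ 4 + 8 * |ρ| * a ^ 3 + 32 * a ^ 6 + 16 * a ^ 4) * (l ^ 3 * E ^ 2) := by
  have ha : 0 ≤ a := (abs_nonneg _).trans (h2 0)
  have hX := sum_eta_bound h2 h1
  have hN := sum_eta_bound h1 h1
  have hM := sum_eta_bound h2 h2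
  have hl0 : 0 ≤ l := by linarith
  have hc : ∀ α, |cur l ρ κ c ψ α y| ≤
      (24 * a ^ 3 + 2 * |ρ| * a ^ 2 + 8 * a ^ 5) * (l ^ 3 * E ^ 2) := by
    intro α
    unfold cur
    set X := ∑ β, eta β * (Wd κ c β y * pd β ψ y)
    set Nn := ∑ β, eta β * (pd β ψ y * pd β ψ y)
    set Mm := ∑ β, eta β * (Wd κ c β y * Wd κ c β y)
    have t1 : |(-4 * l) * (eta α * (pd α ψ y * X) - (1 / 2) * (eta α * (Wd κ c α y * Nn)))| ≤
        24 * a ^ 3 * (l ^ 3 * E ^ 2) := by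
      rw [abs_mul, abs_mul, abs_of_nonneg hl0]
      have q1 : |eta α * (pd α ψ y * X)| ≤ (a * l * E) * (4 * (a * (a * l * E))) := by
        rw [abs_mul, abs_eta, one_mul, abs_mul]; gcongr; exact h1 α
      have q2 : |(1 / 2) * (eta α * (Wd κ c α y * Nn))| ≤
          (1 / 2) * (a * (4 * ((a * l * E) * (a * l * E)))) := by
        rw [abs_mul, abs_mul, abs_eta, one_mul, abs_mul, abs_of_pos (by norm_num : (0:ℝ) < 1 / 2)]
        gcongr; exact h2 α
      have q3 := (abs_sub (eta α * (pd α ψ y * X)) ((1 / 2) * (eta α * (Wd κ c α y * Nn)))).trans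
        (add_le_add q1 q2)
      have := mul_le_mul_of_nonneg_left q3 (by positivity : 0 ≤ |(-4 : ℝ)| * l)
      refine this.trans (le_of_eq ?_)
      rw [show |(-4 : ℝ)| = 4 by norm_num]; ring
    have t2 : |(2 * l * ρ) * (eta α * (ψ y * pd α ψ y))| ≤ 2 * |ρ| * a ^ 2 * (l ^ 3 * E ^ 2) := by
      rw [abs_mul, abs_mul, abs_mul, abs_mul, abs_eta, one_mul, abs_mul, abs_of_nonneg hl0,
        abs_of_pos (by norm_num : (0:ℝ) < 2)]
      have q1 : |ψ y| * |pd α ψ y| ≤ (a * E) * (a * l * E) := by gcongr; exact h1 α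
      have := mul_le_mul_of_nonneg_left q1 (by positivity : 0 ≤ 2 * l * |ρ|)
      refine this.trans ?_
      have hl23 : l ^ 2 ≤ l ^ 3 := pow_le_pow_right₀ hl (by norm_num)
      have := mul_le_mul_of_nonneg_left hl23 (by positivity : 0 ≤ 2 * |ρ| * a ^ 2 * E ^ 2)
      nlinarith
    have t3 : |(2 * l ^ 3) * (eta α * (Wd κ c α y * (Mm * (ψ y * ψ y))))| ≤
        8 * a ^ 5 * (l ^ 3 * E ^ 2) := by
      rw [abs_mul (2 * l ^ 3), abs_mul (eta α), abs_eta, one_mul, abs_mul (Wd κ c α y), abs_mul Mm, abs_mul (ψ y),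
        abs_of_nonneg (by positivity : 0 ≤ 2 * l ^ 3)]
      have q1 : |Wd κ c α y| * (|Mm| * (|ψ y| * |ψ y|)) ≤
          a * ((4 * (a * a)) * ((a * E) * (a * E))) := by gcongr; exact h2 α
      have := mul_le_mul_of_nonneg_left q1 (by positivity : 0 ≤ 2 * l ^ 3)
      refine this.trans (le_of_eq ?_); ring
    refine (abs_sub _ _).trans ((add_le_add ((abs_sub _ _).trans (add_le_add t1 t2)) t3).trans
      (le_of_eq ?_))
    ring
  refine (Finset.abs_sum_le_sum_abs _ _).trans ?_
  have : ∀ α ∈ (Finset.univ : Finset (Fin 4)), |Wd κ c α y * cur l ρ κ c ψ α y| ≤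
      a * ((24 * a ^ 3 + 2 * |ρ| * a ^ 2 + 8 * a ^ 5) * (l ^ 3 * E ^ 2)) := fun α _ => by
    rw [abs_mul]
    exact mul_le_mul (h2 α) (hc α) (abs_nonneg _) ha
  refine (Finset.sum_le_sum this).trans (le_of_eq ?_)
  simp; ring

/-- Hypotheses of the unique continuation lemma. -/
structure UCHyp {N : ℕ} (θ e0 e1 C : ℝ) (κ c : Fin 4 → ℝ) (K : ℝ) (g : Spc → ℝ)
    (V O : Set Spc) (φ : Fin N → Spc → ℝ) : Prop where
  he0 : 0 < e0
  he1 : 0 < e1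
  hC : 0 ≤ C
  hV : IsOpen V
  hVb : Bornology.IsBounded V
  hO : IsOpen O
  hVO : V ⊆ O
  hsub : ∀ k > 0, ∀ δ > 0, ∀ y ∈ closure V, k ≤ Wt κ c K y → δ ≤ g y → y ∈ O
  hg : ContDiff ℝ 1 g
  hφ : ∀ I, ∀ y ∈ O, ContDiffAt ℝ 2 (φ I) y
  hfr : ∀ y ∈ O, y ∈ closure V → y ∉ V → ∀ I, φ I y = 0 ∧ ∀ α, pd α (φ I) y = 0
  hgpos : ∀ y ∈ V, 0 < g y
  hWpos : ∀ y ∈ V, 0 < Wt κ c K y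
  h1 : ∀ α, e1 ≤ 4 * κ α + θ * eta α
  h0 : ∀ y ∈ V, e0 ≤ (∑ α, 4 * κ α * (Wd κ c α y) ^ 2) - θ * (∑ β, eta β * (Wd κ c β y) ^ 2)
  hbox : ∀ y ∈ V, ∀ I, (∑ α, eta α * pd α (pd α (φ I)) y) ^ 2 ≤
      C * ∑ J, ((φ J y) ^ 2 + ∑ α, (pd α (φ J) y) ^ 2)
  b1 : ∀ I, ∀ y ∈ V, |φ I y| ≤ C * g y
  b2 : ∀ I, ∀ y ∈ V, ∀ α, |pd α (φ I) y| ≤ C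
  b3 : ∀ I, ∀ y ∈ V, |∑ α, eta α * (pd α g y * pd α (φ I) y)| ≤ C * g y
  b4 : ∀ I, ∀ y ∈ V, |∑ α, eta α * (pd α (φ I) y * pd α (φ I) y)| ≤ C * g y

theorem bdd_of_cont {V : Set Spc} (hVb : Bornology.IsBounded V) {f : Spc → ℝ} (hf : Continuous f) :
    ∃ C, 0 ≤ C ∧ ∀ y ∈ V, |f y| ≤ C := by
  have hc : IsCompact (closure V) :=
    Metric.isCompact_of_isClosed_isBounded isClosed_closure hVb.closure
  obtain ⟨C, hC⟩ := hc.exists_bound_of_continuousOn hf.continuousOn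
  exact ⟨max C 0, le_max_right _ _, fun y hy => (hC y (subset_closure hy)).trans (le_max_left _ _)⟩

theorem pd_continuous {g : Spc → ℝ} (hg : ContDiff ℝ 1 g) (α : Fin 4) : Continuous (pd α g) := by
  rw [continuous_iff_continuousAt]
  exact fun y => (pd_contDiffAt (m := 0) hg.contDiffAt (by norm_num) α).continuousAt

section uc
variable {N : ℕ} {θ e0 e1 C : ℝ} {κ c : Fin 4 → ℝ} {K : ℝ} {g : Spc → ℝ}
    {V O : Set Spc} {φ : Fin N → Spc → ℝ}

/-- flux through level sets of `g` -/
theorem UCHyp.gflux (H : UCHyp θ e0 e1 C κ c K g V O φ) (l ρ : ℝ) :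
    ∃ B, 0 ≤ B ∧ ∀ I, ∀ y ∈ V,
      |∑ α, pd α g y * cur l ρ κ c (psi l κ c K (φ I)) α y| ≤ B * g y := by
  have hI : ∀ I, ∃ B, ∀ y ∈ V,
      |∑ α, pd α g y * cur l ρ κ c (psi l κ c K (φ I)) α y| ≤ B * g y := by
    intro I
    have bdd : ∀ {f : Spc → ℝ}, Continuous f → f =O[𝓟 V] (fun _ => (1 : ℝ)) := by
      intro f hf
      obtain ⟨B, -, hB⟩ := bdd_of_cont H.hVb hf
      exact isBigO_principal.2 ⟨B, fun y hy => by simpa using hB y hy⟩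
    have ofb : ∀ {f h : Spc → ℝ}, (∀ y ∈ V, |f y| ≤ C * h y) → f =O[𝓟 V] h := by
      intro f h hf
      refine isBigO_principal.2 ⟨C, fun y hy => ?_⟩
      exact (hf y hy).trans (mul_le_mul_of_nonneg_left (le_abs_self _) H.hC)
    have hE : (fun y => Real.exp (l * Wt κ c K y)) =O[𝓟 V] (fun _ => (1 : ℝ)) :=
      bdd (Real.continuous_exp.comp (continuous_const.mul
        (contDiff_Wt (n := 0) κ c K).continuous))
    have hW : ∀ β, Wd κ c β =O[𝓟 V] (fun _ => (1 : ℝ)) := fun β =>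
      bdd (contDiff_Wd (n := 0) κ c β).continuous
    have hpg : ∀ β, pd β g =O[𝓟 V] (fun _ => (1 : ℝ)) := fun β => bdd (pd_continuous H.hg β)
    have hg1 : g =O[𝓟 V] (fun _ => (1 : ℝ)) := bdd H.hg.continuous
    have p0 : φ I =O[𝓟 V] g := ofb (H.b1 I)
    have p1 : ∀ α, pd α (φ I) =O[𝓟 V] (fun _ => (1 : ℝ)) := fun α =>
      ofb (fun y hy => by simpa using H.b2 I y hy α)
    have p3 := ofb (H.b3 I)
    have p4 := ofb (H.b4 I)
    have m1 : ∀ {f h : Spc → ℝ}, f =O[𝓟 V] g → h =O[𝓟 V] (fun _ => (1 : ℝ)) →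
        (fun y => f y * h y) =O[𝓟 V] g := by
      intro f h hf hh; simpa using hf.mul hh
    have m2 : ∀ {f h : Spc → ℝ}, f =O[𝓟 V] (fun _ => (1 : ℝ)) → h =O[𝓟 V] (fun _ => (1 : ℝ)) →
        (fun y => f y * h y) =O[𝓟 V] (fun _ => (1 : ℝ)) := by
      intro f h hf hh; simpa using hf.mul hh
    have sumO : ∀ {x z : Fin 4 → Spc → ℝ}, (∀ β, x β =O[𝓟 V] (fun _ => (1 : ℝ))) →
        (∀ β, z β =O[𝓟 V] (fun _ => (1 : ℝ))) →
        (fun y => ∑ β, eta β * (x β y * z β y)) =O[𝓟 V] (fun _ => (1 : ℝ)) := by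
      intro x z hx hz
      exact IsBigO.fun_sum fun β _ => (m2 (hx β) (hz β)).const_mul_left _
    have gW := sumO hpg hW
    have MW := sumO hW hW
    have Xφ := sumO hW p1
    -- the function as explicit expression
    set E : Spc → ℝ := fun y => Real.exp (l * Wt κ c K y) with hEdef
    have big : (fun y => (-4 * l) * ((E y * ((∑ α, eta α * (pd α g y * pd α (φ I) y))
          + l * (φ I y * ∑ β, eta β * (pd β g y * Wd κ c β y))))
          * (E y * ((∑ β, eta β * (Wd κ c β y * pd β (φ I) y))
            + l * (φ I y * ∑ β, eta β * (Wd κ c β y * Wd κ c β y))))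
        - (1 / 2) * ((E y * (E y * ((∑ α, eta α * (pd α (φ I) y * pd α (φ I) y))
            + 2 * l * (φ I y * ∑ β, eta β * (Wd κ c β y * pd β (φ I) y))
            + l ^ 2 * ((φ I y * φ I y) * ∑ β, eta β * (Wd κ c β y * Wd κ c β y)))))
            * ∑ β, eta β * (pd β g y * Wd κ c β y)))
        - (2 * l * ρ) * ((E y * φ I y) * (E y * ((∑ α, eta α * (pd α g y * pd α (φ I) y))
          + l * (φ I y * ∑ β, eta β * (pd β g y * Wd κ c β y)))))
        - (2 * l ^ 3) * (((E y * φ I y) * (E y * φ I y)) *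
            ((∑ β, eta β * (pd β g y * Wd κ c β y)) *
              ∑ β, eta β * (Wd κ c β y * Wd κ c β y)))) =O[𝓟 V] g := by
      have p0' : φ I =O[𝓟 V] (fun _ => (1 : ℝ)) := p0.trans hg1
      have mE : ∀ {f : Spc → ℝ}, f =O[𝓟 V] g → (fun y => E y * f y) =O[𝓟 V] g := by
        intro f hf; simpa using hE.mul hf
      have A1 := mE (p3.add ((m1 p0 gW).const_mul_left l))
      have A2 := m2 hE (Xφ.add ((m2 p0' MW).const_mul_left l))
      have A3 := mE (mE ((p4.add ((m1 p0 Xφ).const_mul_left (2 * l))).add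
        ((m1 (m1 p0 p0') MW).const_mul_left (l ^ 2))))
      exact ((((m1 A1 A2).sub ((m1 A3 gW).const_mul_left (1 / 2))).const_mul_left (-4 * l)).sub
        ((m1 (mE p0) (A1.trans hg1)).const_mul_left (2 * l * ρ))).sub
        ((m1 (m1 (mE p0) ((mE p0).trans hg1)) (m2 gW MW)).const_mul_left (2 * l ^ 3))
    obtain ⟨B, hB⟩ := isBigO_principal.1 big
    refine ⟨B, fun y hy => ?_⟩
    have := hB y hy
    rw [Real.norm_eq_abs, Real.norm_eq_abs, abs_of_pos (H.hgpos y hy)] at this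
    refine (le_of_eq ?_).trans this
    congr 1
    have hd := fun α => (hasPd_psi l κ c K
      ((H.hφ I y (H.hVO hy)).differentiableAt (by norm_num)) α).2
    simp only [cur, hd, psi, hEdef, Fin.sum_univ_four]
    ring
  choose B hB using hI
  refine ⟨∑ I, |B I|, Finset.sum_nonneg fun _ _ => abs_nonneg _, fun I y hy => ?_⟩
  refine (hB I y hy).trans (mul_le_mul_of_nonneg_right ?_ (H.hgpos y hy).le)
  exact (le_abs_self _).trans
    (Finset.single_le_sum (f := fun I => |B I|) (fun _ _ => abs_nonneg _) (Finset.mem_univ I))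

/-- flux through the level sets of the weight -/
theorem UCHyp.wflux (H : UCHyp θ e0 e1 C κ c K g V O φ) (ρ : ℝ) :
    ∃ B, 0 ≤ B ∧ ∀ l ≥ 1, ∀ I, ∀ y ∈ V,
      |∑ α, Wd κ c α y * cur l ρ κ c (psi l κ c K (φ I)) α y| ≤
        B * (l ^ 3 * (Real.exp (l * Wt κ c K y)) ^ 2) := by
  obtain ⟨Cg, hCg0, hCg⟩ := bdd_of_cont H.hVb H.hg.continuous
  have hw : ∀ β, ∃ B, 0 ≤ B ∧ ∀ y ∈ V, |Wd κ c β y| ≤ B := fun β =>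
    bdd_of_cont H.hVb (contDiff_Wd (n := 0) κ c β).continuous
  choose w hw0 hw using hw
  set W := ∑ β, w β
  have hW0 : 0 ≤ W := Finset.sum_nonneg fun β _ => hw0 β
  have hW : ∀ y ∈ V, ∀ β, |Wd κ c β y| ≤ W := fun y hy β => (hw β y hy).trans
    (Finset.single_le_sum (f := w) (fun β _ => hw0 β) (Finset.mem_univ β))
  have hC := H.hC
  set a := C * Cg + C + W + W * (C * Cg) with ha
  have ha0 : 0 ≤ a := by positivity
  refine ⟨(80 * a ^ 4 + 8 * |ρ| * a ^ 3 + 32 * a ^ 6 + 16 * a ^ 4), by positivity, ?_⟩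
  intro l hl I y hy
  have f0 : |φ I y| ≤ C * Cg := (H.b1 I y hy).trans
    (mul_le_mul_of_nonneg_left ((le_abs_self _).trans (hCg y hy)) H.hC)
  have hCCg : 0 ≤ C * Cg := by positivity
  have hWC : 0 ≤ W * (C * Cg) := by positivity
  refine cur_flux_bound l ρ hl κ c _ y a _ (Real.exp_pos _).le ?_ (fun β => ?_) (fun β => ?_)
  · unfold psi
    rw [abs_mul, abs_of_pos (Real.exp_pos _), mul_comm]
    refine mul_le_mul_of_nonneg_right (f0.trans ?_) (Real.exp_pos _).le
    linarith
  · rw [(hasPd_psi l κ c K ((H.hφ I y (H.hVO hy)).differentiableAt (by norm_num)) β).2, abs_mul,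
      abs_of_pos (Real.exp_pos _), mul_comm]
    refine mul_le_mul_of_nonneg_right ?_ (Real.exp_pos _).le
    refine (abs_add_le _ _).trans ?_
    rw [abs_mul, abs_mul, abs_of_nonneg (by linarith : 0 ≤ l)]
    have q1 : l * |Wd κ c β y| * |φ I y| ≤ l * (W * (C * Cg)) := by
      rw [mul_assoc]
      exact mul_le_mul_of_nonneg_left (mul_le_mul (hW y hy β) f0 (abs_nonneg _) hW0) (by linarith)
    have q2 : |pd β (φ I) y| ≤ C * l :=
      (H.b2 I y hy β).trans (le_mul_of_one_le_right H.hC hl)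
    rw [ha]
    nlinarith [mul_nonneg hCCg (by linarith : 0 ≤ l), mul_nonneg hW0 (by linarith : 0 ≤ l)]
  · refine (hW y hy β).trans ?_
    linarith

end uc

end part4

section part5

theorem sT_hasDeriv (x : ℝ) : HasDerivAt smoothTransition (deriv smoothTransition x) x :=
  ((Real.smoothTransition.contDiff (n := 1)).differentiable (by norm_num) x).hasDerivAt

theorem sT_deriv_left {x : ℝ} (h : x < 0) : deriv smoothTransition x = 0 := by
  have : smoothTransition =ᶠ[𝓝 x] fun _ => (0 : ℝ) := by
    filter_upwards [Iio_mem_nhds h] with z hz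
    exact Real.smoothTransition.zero_of_nonpos (le_of_lt hz)
  rw [this.deriv_eq]; simp

theorem sT_deriv_right {x : ℝ} (h : 1 < x) : deriv smoothTransition x = 0 := by
  have : smoothTransition =ᶠ[𝓝 x] fun _ => (1 : ℝ) := by
    filter_upwards [Ioi_mem_nhds h] with z hz
    exact Real.smoothTransition.one_of_one_le (le_of_lt hz)
  rw [this.deriv_eq]; simp

theorem sT_bound : ∃ M, 0 ≤ M ∧ ∀ x, |deriv smoothTransition x| ≤ M := by
  have hc : Continuous (deriv smoothTransition) :=
    (Real.smoothTransition.contDiff (n := 1)).continuous_deriv (by norm_num)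
  obtain ⟨M, hM⟩ := (isCompact_Icc (a := (0:ℝ)) (b := 1)).exists_bound_of_continuousOn
    hc.continuousOn
  refine ⟨max M 0, le_max_right _ _, fun x => ?_⟩
  by_cases h0 : x < 0
  · rw [sT_deriv_left h0]; simp
  by_cases h1 : 1 < x
  · rw [sT_deriv_right h1]; simp
  exact (hM x ⟨not_lt.1 h0, not_lt.1 h1⟩).trans (le_max_left _ _)

section uc
variable {N : ℕ} {θ e0 e1 C : ℝ} {κ c : Fin 4 → ℝ} {K : ℝ} {g : Spc → ℝ}
    {V O : Set Spc} {φ : Fin N → Spc → ℝ}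

theorem UCHyp.key (H : UCHyp θ e0 e1 C κ c K g V O φ) (k : ℝ) (hk : 0 < k) :
    ∃ l0 : ℝ, 1 ≤ l0 ∧ ∃ Bw : ℝ, 0 ≤ Bw ∧ ∀ l ≥ l0, ∃ Bg : ℝ, 0 ≤ Bg ∧ ∀ δ > 0,
      ∃ f : Spc → ℝ, IntegrableOn f V ∧ ∫ y in V, f y = 0 ∧ ∀ y ∈ V,
        f y ≤ Bw * (l ^ 3 * (Real.exp (2 * k * l)) ^ 2) + (if g y ≤ 2 * δ then Bg else 0)
          - (if 2 * k ≤ Wt κ c K y ∧ 2 * δ ≤ g y then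
              (l ^ 3 * e0) * ∑ I, (psi l κ c K (φ I) y) ^ 2 else 0) := by
  have hw : ∀ β, ∃ B, 0 ≤ B ∧ ∀ y ∈ V, |Wd κ c β y| ≤ B := fun β =>
    bdd_of_cont H.hVb (contDiff_Wd (n := 0) κ c β).continuous
  choose w hw0 hw using hw
  have hW : ∀ y ∈ V, ∀ β, |Wd κ c β y| ≤ ∑ β, w β := fun y hy β => (hw β y hy).trans
    (Finset.single_le_sum (f := w) (fun β _ => hw0 β) (Finset.mem_univ β))
  obtain ⟨l0, hl0, hcar⟩ := carleman_pw θ e0 e1 C (∑ β, w β) H.he0 H.he1 H.hC κ c K φ V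
    (fun I y hy => H.hφ I y (H.hVO hy)) H.h1 H.h0 hW H.hbox
  set ρ := θ + ∑ β, eta β * (2 * κ β)
  obtain ⟨Bw, hBw0, hBw⟩ := H.wflux ρ
  obtain ⟨M, hM0, hM⟩ := sT_bound
  refine ⟨l0, hl0, N * (M / k * Bw), by positivity, fun l hl => ?_⟩
  obtain ⟨Bg, hBg0, hBg⟩ := H.gflux l ρ
  refine ⟨N * (2 * M * Bg), by positivity, fun δ hδ => ?_⟩
  have hl1 : 1 ≤ l := hl0.trans hl
  set a : Spc → ℝ := fun y => smoothTransition (k⁻¹ * (Wt κ c K y - k)) with ha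
  set b : Spc → ℝ := fun y => smoothTransition (δ⁻¹ * (g y - δ)) with hb
  set da : Spc → ℝ := fun y => deriv smoothTransition (k⁻¹ * (Wt κ c K y - k)) with hda
  set db : Spc → ℝ := fun y => deriv smoothTransition (δ⁻¹ * (g y - δ)) with hdb
  have hgd : ∀ y, DifferentiableAt ℝ g y := fun y => H.hg.differentiable (by norm_num) y
  have hap : ∀ α y, HasPd α a (da y * (k⁻¹ * (Wd κ c α y - 0))) y := fun α y =>
    (((hasPd_Wt κ c K α y).sub (HasPd.const k)).cmul k⁻¹).comp (sT_hasDeriv _)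
  have hbp : ∀ α y, HasPd α b (db y * (δ⁻¹ * (pd α g y - 0))) y := fun α y =>
    (((HasPd.of_diff (hgd y)).sub (HasPd.const δ)).cmul δ⁻¹).comp (sT_hasDeriv _)
  have hηp : ∀ α y, HasPd α (fun z => a z * b z) _ y := fun α y => (hap α y).mul (hbp α y)
  set J : Fin N → Fin 4 → Spc → ℝ := fun I α => cur l ρ κ c (psi l κ c K (φ I)) α with hJ
  have hψ2 : ∀ I, ∀ y ∈ O, ContDiffAt ℝ 2 (psi l κ c K (φ I)) y := fun I y hy =>
    psi_contDiffAt l κ c K (H.hφ I y hy)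
  have hJ1 : ∀ I α, ∀ y ∈ O, ContDiffAt ℝ 1 (J I α) y := fun I α y hy =>
    cur_contDiffAt l ρ κ c _ y (hψ2 I y hy) α
  have hac : ContDiff ℝ 1 a := (Real.smoothTransition.contDiff (n := 1)).comp
    (contDiff_const.mul ((contDiff_Wt κ c K).sub contDiff_const))
  have hbc : ContDiff ℝ 1 b := (Real.smoothTransition.contDiff (n := 1)).comp
    (contDiff_const.mul (H.hg.sub contDiff_const))
  have ha0 : ∀ y, Wt κ c K y ≤ k → a y = 0 := fun y hy =>
    Real.smoothTransition.zero_of_nonpos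
      (mul_nonpos_of_nonneg_of_nonpos (by positivity) (by linarith))
  have hb0 : ∀ y, g y ≤ δ → b y = 0 := fun y hy =>
    Real.smoothTransition.zero_of_nonpos
      (mul_nonpos_of_nonneg_of_nonpos (by positivity) (by linarith))
  have hdiv : ∀ I α, IntegrableOn (pd α (fun z => (a z * b z) * J I α z)) V ∧
      ∫ y in V, pd α (fun z => (a z * b z) * J I α z) y = 0 := by
    intro I α
    refine div_lemma (O := O) (Z := {y | k ≤ Wt κ c K y} ∩ {y | δ ≤ g y}) H.hV H.hVb H.hO ?_ ?_ ?_ ?_ ?_ α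
    · exact (isClosed_le continuous_const (contDiff_Wt (n := 0) κ c K).continuous).inter
        (isClosed_le continuous_const H.hg.continuous)
    · rintro y ⟨hy, h1, h2⟩
      exact H.hsub k hk δ hδ y hy h1 h2
    · intro y hy
      by_cases h1 : k ≤ Wt κ c K y
      · have h2 : ¬ δ ≤ g y := fun h2 => hy ⟨h1, h2⟩
        rw [hb0 y (not_le.1 h2).le]; ring
      · rw [ha0 y (not_le.1 h1).le]; ring
    · intro y hy
      exact (hac.contDiffAt.mul hbc.contDiffAt).mul (hJ1 I α y hy)
    · intro y hyO hyc hyV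
      obtain ⟨z0, z1⟩ := H.hfr y hyO hyc hyV I
      have p0 : psi l κ c K (φ I) y = 0 := by unfold psi; rw [z0, mul_zero]
      have p1 : ∀ α, pd α (psi l κ c K (φ I)) y = 0 := fun α => by
        rw [(hasPd_psi l κ c K ((H.hφ I y hyO).differentiableAt (by norm_num)) α).2, z0, z1]; ring
      have q0 : J I α y = 0 := by simp [hJ, cur, p0, p1]
      refine ⟨by rw [q0, mul_zero], fderiv_eq_zero_of_pd fun γ => ?_⟩
      rw [((hηp γ y).mul (hasPd_cur_zero l ρ κ c _ y (hψ2 I y hyO) p0 p1 α γ)).2]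
      change _ * J I α y + _ = 0
      rw [q0]; ring
  refine ⟨fun y => ∑ I, ∑ α, pd α (fun z => (a z * b z) * J I α z) y, ?_, ?_, ?_⟩
  · exact integrable_finsetSum _ fun I _ => integrable_finsetSum _ fun α _ => (hdiv I α).1
  · rw [integral_finsetSum _ fun I _ => integrable_finsetSum _ fun α _ => (hdiv I α).1]
    refine Finset.sum_eq_zero fun I _ => ?_
    rw [integral_finsetSum _ fun α _ => (hdiv I α).1]
    exact Finset.sum_eq_zero fun α _ => (hdiv I α).2
  · intro y hy
    have e : ∀ I, ∑ α, pd α (fun z => (a z * b z) * J I α z) y =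
        da y * k⁻¹ * b y * (∑ α, Wd κ c α y * J I α y)
        + a y * db y * δ⁻¹ * (∑ α, pd α g y * J I α y) + (a y * b y) * ∑ α, pd α (J I α) y := by
      intro I
      have : ∀ α, pd α (fun z => (a z * b z) * J I α z) y = _ := fun α =>
        ((hηp α y).mul (HasPd.of_diff
          ((hJ1 I α y (H.hVO hy)).differentiableAt (by norm_num)))).2
      simp only [this, Fin.sum_univ_four]
      ring
    have a01 : 0 ≤ a y ∧ a y ≤ 1 := ⟨Real.smoothTransition.nonneg _, Real.smoothTransition.le_one _⟩
    have b01 : 0 ≤ b y ∧ b y ≤ 1 := ⟨Real.smoothTransition.nonneg _, Real.smoothTransition.le_one _⟩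
    have t1 : ∀ I, da y * k⁻¹ * b y * (∑ α, Wd κ c α y * J I α y) ≤
        M / k * Bw * (l ^ 3 * (Real.exp (2 * k * l)) ^ 2) := by
      intro I
      have pos : 0 ≤ M / k * Bw * (l ^ 3 * (Real.exp (2 * k * l)) ^ 2) := by
        have : 0 ≤ l := by linarith
        positivity
      by_cases hw : Wt κ c K y ≤ 2 * k
      · refine (le_abs_self _).trans ?_
        have h1 := hBw l hl1 I y hy
        rw [abs_mul, abs_mul, abs_mul, abs_of_pos (inv_pos.2 hk), abs_of_nonneg b01.1]
        have h2 : |da y| * k⁻¹ * b y ≤ M * k⁻¹ * 1 := by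
          gcongr
          · exact b01.1
          · exact hM _
          · exact b01.2
        have h3 : Real.exp (l * Wt κ c K y) ≤ Real.exp (2 * k * l) := by
          rw [Real.exp_le_exp]; nlinarith
        have h4 : |∑ α, Wd κ c α y * J I α y| ≤ Bw * (l ^ 3 * (Real.exp (2 * k * l)) ^ 2) := by
          refine h1.trans ?_
          have : 0 ≤ l := by linarith
          gcongr
        calc _ ≤ (M * k⁻¹ * 1) * (Bw * (l ^ 3 * (Real.exp (2 * k * l)) ^ 2)) :=
              mul_le_mul h2 h4 (abs_nonneg _) (by positivity)
          _ = _ := by rw [div_eq_mul_inv]; ring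
      · have : da y = 0 := sT_deriv_right (by
          rw [inv_mul_eq_div, lt_div_iff₀ hk]; linarith)
        rw [this]; simpa using pos
    have t2 : ∀ I, a y * db y * δ⁻¹ * (∑ α, pd α g y * J I α y) ≤
        if g y ≤ 2 * δ then 2 * M * Bg else 0 := by
      intro I
      split_ifs with hgy
      · refine (le_abs_self _).trans ?_
        have h1 := hBg I y hy
        rw [abs_mul, abs_mul, abs_mul, abs_of_pos (inv_pos.2 hδ), abs_of_nonneg a01.1]
        have h2 : a y * |db y| * δ⁻¹ ≤ 1 * M * δ⁻¹ := by
          gcongr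
          · exact a01.2
          · exact hM _
        have h4 : |∑ α, pd α g y * J I α y| ≤ Bg * (2 * δ) := by
          refine h1.trans ?_
          gcongr
        calc _ ≤ (1 * M * δ⁻¹) * (Bg * (2 * δ)) :=
              mul_le_mul h2 h4 (abs_nonneg _) (by positivity)
          _ = _ := by field_simp
      · have : db y = 0 := sT_deriv_right (by
          rw [inv_mul_eq_div, lt_div_iff₀ hδ]; linarith)
        rw [this]; simp
    have t3 : (a y * b y) * ∑ I, ∑ α, pd α (J I α) y ≤
        - (if 2 * k ≤ Wt κ c K y ∧ 2 * δ ≤ g y then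
              (l ^ 3 * e0) * ∑ I, (psi l κ c K (φ I) y) ^ 2 else 0) := by
      have h1 := hcar l hl y hy
      have he0 := H.he0
      have hl' : 0 ≤ l := by linarith
      have h2 : 0 ≤ (l ^ 3 * e0) * ∑ I, (psi l κ c K (φ I) y) ^ 2 := by
        have : 0 ≤ ∑ I, (psi l κ c K (φ I) y) ^ 2 := Finset.sum_nonneg fun _ _ => sq_nonneg _
        positivity
      have h3 := mul_le_mul_of_nonneg_left h1 (mul_nonneg a01.1 b01.1)
      refine h3.trans ?_
      split_ifs with hh
      · have e1 : a y = 1 := Real.smoothTransition.one_of_one_le (by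
          rw [inv_mul_eq_div, le_div_iff₀ hk]; linarith [hh.1])
        have e2 : b y = 1 := Real.smoothTransition.one_of_one_le (by
          rw [inv_mul_eq_div, le_div_iff₀ hδ]; linarith [hh.2])
        rw [e1, e2]; linarith
      · have := mul_nonneg (mul_nonneg a01.1 b01.1) h2
        linarith
    simp only [e, Finset.sum_add_distrib, ← Finset.mul_sum]
    have s1 : da y * k⁻¹ * b y * ∑ I, (∑ α, Wd κ c α y * J I α y) ≤
        N * (M / k * Bw * (l ^ 3 * (Real.exp (2 * k * l)) ^ 2)) := by
      rw [Finset.mul_sum]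
      refine (Finset.sum_le_sum fun I _ => t1 I).trans (le_of_eq (by simp))
    have s2 : a y * db y * δ⁻¹ * ∑ I, (∑ α, pd α g y * J I α y) ≤
        N * (if g y ≤ 2 * δ then 2 * M * Bg else 0) := by
      rw [Finset.mul_sum]
      refine (Finset.sum_le_sum fun I _ => t2 I).trans (le_of_eq (by simp))
    have s3 : N * (if g y ≤ 2 * δ then 2 * M * Bg else 0) =
      (if g y ≤ 2 * δ then N * (2 * M * Bg) else 0) := by split_ifs <;> simp
    linarith

theorem UCHyp.vanish (H : UCHyp θ e0 e1 C κ c K g V O φ) : ∀ y ∈ V, ∀ I, φ I y = 0 := by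
  intro y0 hy0 I0
  by_contra hne
  have hWc : Continuous (Wt κ c K) := (contDiff_Wt (n := 0) κ c K).continuous
  set k := Wt κ c K y0 / 4 with hkdef
  have hW0 := H.hWpos y0 hy0
  have hk : 0 < k := by positivity
  set c0 := (φ I0 y0) ^ 2 / 2 with hc0
  have hc0p : 0 < c0 := by positivity
  have hg0 := H.hgpos y0 hy0
  have hcont : ContinuousAt (φ I0) y0 := (H.hφ I0 y0 (H.hVO hy0)).continuousAt
  have ev : ∀ᶠ y in 𝓝 y0, y ∈ V ∧ 3 * k < Wt κ c K y ∧ c0 < (φ I0 y) ^ 2 ∧ g y0 / 2 < g y := by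
    refine (eventually_mem_set.2 (H.hV.mem_nhds hy0)).and ((hWc.continuousAt.eventually_const_lt (by rw [hkdef]; linarith)).and
      (((hcont.pow 2).eventually_const_lt (by rw [hc0]; simp only [Pi.pow_apply]; nlinarith [sq_pos_of_ne_zero hne])).and
      (H.hg.continuous.continuousAt.eventually_const_lt (by linarith))))
  obtain ⟨r, hr, hball⟩ := Metric.eventually_nhds_iff_ball.1 ev
  set B := Metric.ball y0 r
  have hBV : B ⊆ V := fun y hy => (hball y hy).1
  have hVfin : volume V ≠ ⊤ := H.hVb.measure_lt_top.ne
  have hBfin : volume B ≠ ⊤ := ((measure_mono hBV).trans_lt hVfin.lt_top).ne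
  have hBpos : 0 < volume.real B := by
    rw [Measure.real, ENNReal.toReal_pos_iff]
    exact ⟨Metric.measure_ball_pos volume y0 hr, hBfin.lt_top⟩
  obtain ⟨l0, hl0, Bw, hBw0, hkey⟩ := H.key k hk
  have small : ∀ ε > 0, ∃ δ > 0, 2 * δ ≤ g y0 / 2 ∧ volume.real (V ∩ {y | g y ≤ 2 * δ}) < ε := by
    intro ε hε
    have hanti : Antitone fun n : ℕ => V ∩ {y | g y ≤ 2 * (1 / ((n : ℝ) + 1))} := by
      intro n m hnm
      refine inter_subset_inter_right _ fun y hy => mem_setOf.2 (le_trans (mem_setOf.1 hy) ?_)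
      have := Nat.one_div_le_one_div (α := ℝ) hnm
      linarith
    have hT := tendsto_measure_iInter_atTop (μ := volume)
      (s := fun n : ℕ => V ∩ {y | g y ≤ 2 * (1 / ((n : ℝ) + 1))})
      (fun n => (H.hV.measurableSet.inter
        (isClosed_le H.hg.continuous continuous_const).measurableSet).nullMeasurableSet)
      hanti ⟨0, ((measure_mono inter_subset_left).trans_lt hVfin.lt_top).ne⟩
    have hemp : ⋂ n : ℕ, V ∩ {y | g y ≤ 2 * (1 / ((n : ℝ) + 1))} = ∅ := by
      refine eq_empty_iff_forall_notMem.2 fun y hy => ?_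
      rw [mem_iInter] at hy
      have hgy := H.hgpos y (hy 0).1
      obtain ⟨n, hn⟩ := exists_nat_one_div_lt (show (0:ℝ) < g y / 2 by linarith)
      have := (hy n).2
      rw [mem_setOf] at this
      linarith
    rw [hemp, measure_empty] at hT
    have h1 : ∀ᶠ n : ℕ in atTop, volume (V ∩ {y | g y ≤ 2 * (1 / ((n : ℝ) + 1))}) < ENNReal.ofReal ε :=
      hT.eventually_lt_const (by simpa using hε)
    have h2 : ∀ᶠ n : ℕ in atTop, 1 / ((n : ℝ) + 1) < g y0 / 4 :=
      tendsto_one_div_add_atTop_nhds_zero_nat.eventually_lt_const (by linarith)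
    obtain ⟨n, h1, h2⟩ := (h1.and h2).exists
    refine ⟨1 / ((n : ℝ) + 1), by positivity, by linarith, ?_⟩
    rw [Measure.real]
    exact ENNReal.toReal_lt_of_lt_ofReal h1
  have main : ∀ l ≥ l0, l ^ 3 * e0 * (c0 * (Real.exp (3 * k * l)) ^ 2) * volume.real B ≤
      Bw * (l ^ 3 * (Real.exp (2 * k * l)) ^ 2) * volume.real V + 1 := by
    intro l hl
    obtain ⟨Bg, hBg0, hδ⟩ := hkey l hl
    obtain ⟨δ, hδ0, hδ1, hδ2⟩ := small (1 / (Bg + 1)) (by positivity)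
    obtain ⟨f, hfi, hf0, hf⟩ := hδ δ hδ0
    have hl' : 0 < l := by linarith
    have he0 := H.he0
    set S := {y | g y ≤ 2 * δ} with hS
    have hSm : MeasurableSet S := (isClosed_le H.hg.continuous continuous_const).measurableSet
    set A1 := Bw * (l ^ 3 * (Real.exp (2 * k * l)) ^ 2)
    set A3 := l ^ 3 * e0 * (c0 * (Real.exp (3 * k * l)) ^ 2)
    have hA3 : 0 ≤ A3 := by positivity
    have i1 : IntegrableOn (fun _ : Spc => A1) V := integrableOn_const hVfin
    have i2 : IntegrableOn (S.indicator fun _ : Spc => Bg) V :=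
      (integrableOn_const hVfin).indicator hSm
    have i12 : IntegrableOn (fun y => A1 + S.indicator (fun _ : Spc => Bg) y) V := i1.add i2
    have i3 : IntegrableOn (B.indicator fun _ : Spc => A3) V :=
      (integrableOn_const hVfin).indicator measurableSet_ball
    have hle : ∫ y in V, f y ≤ ∫ y in V, (A1 + S.indicator (fun _ => Bg) y
        - B.indicator (fun _ => A3) y) := by
      refine setIntegral_mono_on hfi ((i1.add i2).sub i3) H.hV.measurableSet fun y hy => ?_
      have := hf y hy
      refine this.trans ?_
      have q1 : (if g y ≤ 2 * δ then Bg else 0) = S.indicator (fun _ => Bg) y := by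
        simp [indicator, hS]
      rw [q1]
      have q2 : B.indicator (fun _ => A3) y ≤ (if 2 * k ≤ Wt κ c K y ∧ 2 * δ ≤ g y then
              (l ^ 3 * e0) * ∑ I, (psi l κ c K (φ I) y) ^ 2 else 0) := by
        by_cases hyB : y ∈ B
        · obtain ⟨-, h1, h2, h3⟩ := hball y hyB
          rw [indicator_of_mem hyB, if_pos ⟨by linarith, by linarith⟩]
          refine mul_le_mul_of_nonneg_left ?_ (by positivity)
          refine le_trans ?_ (Finset.single_le_sum (f := fun I => (psi l κ c K (φ I) y) ^ 2)
            (fun _ _ => sq_nonneg _) (Finset.mem_univ I0))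
          simp only [psi, mul_pow]
          rw [mul_comm]
          have : Real.exp (3 * k * l) ≤ Real.exp (l * Wt κ c K y) := by
            rw [Real.exp_le_exp]; nlinarith
          gcongr
        · rw [indicator_of_notMem hyB]
          split_ifs
          · have : 0 ≤ ∑ I, (psi l κ c K (φ I) y) ^ 2 := Finset.sum_nonneg fun _ _ => sq_nonneg _
            positivity
          · exact le_rfl
      linarith
    rw [hf0, integral_sub i12 i3, integral_add i1 i2, setIntegral_const,
      setIntegral_indicator hSm, setIntegral_indicator measurableSet_ball, setIntegral_const,
      setIntegral_const, inter_eq_self_of_subset_right hBV] at hle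
    simp only [smul_eq_mul] at hle
    have : volume.real (V ∩ S) * Bg ≤ 1 := by
      have h1 : volume.real (V ∩ S) * Bg ≤ 1 / (Bg + 1) * Bg :=
        mul_le_mul_of_nonneg_right hδ2.le hBg0
      have h2 : 1 / (Bg + 1) * Bg ≤ 1 := by
        rw [div_mul_eq_mul_div, div_le_one (by positivity)]; linarith
      linarith
    linarith
  have bd : ∀ l ≥ l0, e0 * c0 * volume.real B * (Real.exp (k * l)) ^ 2 ≤ Bw * volume.real V + 1 := by
    intro l hl
    have h1 := main l hl
    have hl1 : 1 ≤ l := hl0.trans hl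
    set X := l ^ 3 * (Real.exp (2 * k * l)) ^ 2 with hX
    have e : Real.exp (3 * k * l) = Real.exp (k * l) * Real.exp (2 * k * l) := by
      rw [← Real.exp_add]; ring_nf
    have hX1 : 1 ≤ X := by
      have a1 : 1 ≤ l ^ 3 := one_le_pow₀ hl1
      have a2 : 1 ≤ (Real.exp (2 * k * l)) ^ 2 := one_le_pow₀ (Real.one_le_exp (by positivity))
      exact one_le_mul_of_one_le_of_one_le a1 a2
    have h2 : (e0 * c0 * volume.real B * (Real.exp (k * l)) ^ 2) * X ≤
        (Bw * volume.real V + 1) * X := by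
      rw [e] at h1
      have : l ^ 3 * e0 * (c0 * (Real.exp (k * l) * Real.exp (2 * k * l)) ^ 2) * volume.real B
        = (e0 * c0 * volume.real B * (Real.exp (k * l)) ^ 2) * X := by rw [hX]; ring
      rw [this] at h1
      nlinarith
    exact le_of_mul_le_mul_right h2 (by linarith)
  have he0 := H.he0
  have hT : Tendsto (fun l : ℝ => e0 * c0 * volume.real B * (Real.exp (k * l)) ^ 2) atTop atTop := by
    refine Tendsto.const_mul_atTop (by positivity) ?_
    refine (tendsto_pow_atTop (two_ne_zero)).comp ?_
    exact Real.tendsto_exp_atTop.comp (tendsto_id.const_mul_atTop hk)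
  obtain ⟨l, h1, h2⟩ := ((hT.eventually_gt_atTop (Bw * volume.real V + 1)).and
    (eventually_ge_atTop l0)).exists
  exact absurd (bd l h2) (not_le.2 h1)

end uc

end part5

section part6

theorem bdd_fin {ι : Type*} [Fintype ι] {V : Set Spc} (hVb : Bornology.IsBounded V)
    (f : ι → Spc → ℝ) (hf : ∀ i, Continuous (f i)) : ∃ C, 0 ≤ C ∧ ∀ i, ∀ y ∈ V, |f i y| ≤ C := by
  choose B hB0 hB using fun i => bdd_of_cont hVb (hf i)
  exact ⟨∑ i, B i, Finset.sum_nonneg fun i _ => hB0 i, fun i y hy => (hB i y hy).trans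
    (Finset.single_le_sum (f := B) (fun i _ => hB0 i) (Finset.mem_univ i))⟩

/-- difference -/
def dif {N : ℕ} (u v : Fin N → Spc → ℝ) (I : Fin N) (y : Spc) : ℝ := u I y - v I y

theorem dif_contDiff {N : ℕ} {u v : Fin N → Spc → ℝ} (hu : ∀ I, ContDiff ℝ (⊤ : ℕ∞) (u I))
    (hv : ∀ I, ContDiff ℝ (⊤ : ℕ∞) (v I)) (I : Fin N) : ContDiff ℝ (⊤ : ℕ∞) (dif u v I) :=
  (hu I).sub (hv I)

theorem smooth_diff {f : Spc → ℝ} (h : ContDiff ℝ (⊤ : ℕ∞) f) (y : Spc) : DifferentiableAt ℝ f y :=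
  h.differentiable (by simp) y

theorem pd_dif {N : ℕ} {u v : Fin N → Spc → ℝ} (hu : ∀ I, ContDiff ℝ (⊤ : ℕ∞) (u I))
    (hv : ∀ I, ContDiff ℝ (⊤ : ℕ∞) (v I)) (I : Fin N) (α : Fin 4) :
    pd α (dif u v I) = fun y => pd α (u I) y - pd α (v I) y := funext fun y =>
  ((HasPd.of_diff (smooth_diff (hu I) y)).sub (HasPd.of_diff (smooth_diff (hv I) y))).2

theorem box_dif {N : ℕ} {u v : Fin N → Spc → ℝ} (hu : ∀ I, ContDiff ℝ (⊤ : ℕ∞) (u I))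
    (hv : ∀ I, ContDiff ℝ (⊤ : ℕ∞) (v I)) (I : Fin N) (y : Spc) :
    box (dif u v I) y = box (u I) y - box (v I) y := by
  simp only [box_eq, pd_dif hu hv]
  rw [← Finset.sum_sub_distrib]
  refine Finset.sum_congr rfl fun α _ => ?_
  rw [((HasPd.of_diff (smooth_diff (pd_contDiff (hu I) α) y)).sub
    (HasPd.of_diff (smooth_diff (pd_contDiff (hv I) α) y))).2]
  ring

/-- the 1-jet -/
def jet {N : ℕ} (u : Fin N → Spc → ℝ) (p : Spc) : (Fin N → ℝ) × (Fin N → Fin 4 → ℝ) :=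
  (fun J => u J p, fun J α => pd α (u J) p)

/-- sum of squares of the jet -/
def S2 {N : ℕ} (w : Fin N → Spc → ℝ) (y : Spc) : ℝ :=
  ∑ J, ((w J y) ^ 2 + ∑ α, (pd α (w J) y) ^ 2)

theorem S2_nonneg {N : ℕ} (w : Fin N → Spc → ℝ) (y : Spc) : 0 ≤ S2 w y := by
  unfold S2; positivity

theorem sq_le_S2 {N : ℕ} (w : Fin N → Spc → ℝ) (y : Spc) (J : Fin N) : (w J y) ^ 2 ≤ S2 w y := by
  refine le_trans ?_ (Finset.single_le_sum
    (f := fun J => (w J y) ^ 2 + ∑ α, (pd α (w J) y) ^ 2) (fun J _ => by positivity)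
    (Finset.mem_univ J))
  have : 0 ≤ ∑ α, (pd α (w J) y) ^ 2 := by positivity
  linarith

theorem sq_pd_le_S2 {N : ℕ} (w : Fin N → Spc → ℝ) (y : Spc) (J : Fin N) (α : Fin 4) :
    (pd α (w J) y) ^ 2 ≤ S2 w y := by
  refine le_trans ?_ (Finset.single_le_sum
    (f := fun J => (w J y) ^ 2 + ∑ α, (pd α (w J) y) ^ 2) (fun J _ => by positivity)
    (Finset.mem_univ J))
  have : (pd α (w J) y) ^ 2 ≤ ∑ α, (pd α (w J) y) ^ 2 :=
    Finset.single_le_sum (f := fun α => (pd α (w J) y) ^ 2) (fun _ _ => sq_nonneg _)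
      (Finset.mem_univ α)
  nlinarith [sq_nonneg (w J y)]

theorem jet_norm_le {N : ℕ} (u : Fin N → Spc → ℝ) (p : Spc) {M : ℝ} (hM : 0 ≤ M)
    (h0 : ∀ J, |u J p| ≤ M) (h1 : ∀ J α, |pd α (u J) p| ≤ M) : ‖jet u p‖ ≤ M := by
  unfold jet
  rw [Prod.norm_mk]
  refine max_le ((pi_norm_le_iff_of_nonneg hM).2 h0) ((pi_norm_le_iff_of_nonneg hM).2 fun J =>
    (pi_norm_le_iff_of_nonneg hM).2 fun α => h1 J α)

theorem jet_sub {N : ℕ} {u v : Fin N → Spc → ℝ} (hu : ∀ I, ContDiff ℝ (⊤ : ℕ∞) (u I))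
    (hv : ∀ I, ContDiff ℝ (⊤ : ℕ∞) (v I)) (p : Spc) : jet u p - jet v p = jet (dif u v) p := by
  unfold jet
  simp only [pd_dif hu hv]
  rfl

theorem jet_norm_S2 {N : ℕ} (u : Fin N → Spc → ℝ) (p : Spc) : ‖jet u p‖ ≤ Real.sqrt (S2 u p) :=
  jet_norm_le u p (Real.sqrt_nonneg _) (fun J => Real.abs_le_sqrt (sq_le_S2 u p J))
    (fun J α => Real.abs_le_sqrt (sq_pd_le_S2 u p J α))

theorem jet_bdd {N : ℕ} {u : Fin N → Spc → ℝ} (hu : ∀ I, ContDiff ℝ (⊤ : ℕ∞) (u I)) {V : Set Spc}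
    (hVb : Bornology.IsBounded V) : ∃ M, 0 ≤ M ∧ (∀ y ∈ V, ∀ J, |u J y| ≤ M) ∧
      ∀ y ∈ V, ∀ J α, |pd α (u J) y| ≤ M := by
  obtain ⟨M, hM, h⟩ := bdd_fin hVb u (fun I => (hu I).continuous)
  obtain ⟨M', hM', h'⟩ := bdd_fin hVb (fun i : Fin N × Fin 4 => pd i.2 (u i.1))
    (fun i => (pd_contDiff (hu i.1) i.2).continuous)
  exact ⟨M + M', by positivity, fun y hy J => (h J y hy).trans (by linarith),
    fun y hy J α => (h' (J, α) y hy).trans (by linarith)⟩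

theorem box_lip {N : ℕ} {Q : ((Fin N → ℝ) × (Fin N → Fin 4 → ℝ)) → Fin N → ℝ}
    (hQ : ContDiff ℝ (⊤ : ℕ∞) Q) {u v : Fin N → Spc → ℝ}
    (hu : ∀ I, ContDiff ℝ (⊤ : ℕ∞) (u I)) (hv : ∀ I, ContDiff ℝ (⊤ : ℕ∞) (v I))
    {V : Set Spc} (hVb : Bornology.IsBounded V)
    (eu : ∀ y ∈ V, ∀ I, box (u I) y = Q (jet u y) I)
    (ev : ∀ y ∈ V, ∀ I, box (v I) y = Q (jet v y) I) :
    ∃ C, 0 ≤ C ∧ ∀ y ∈ V, ∀ I, (box (dif u v I) y) ^ 2 ≤ C * S2 (dif u v) y := by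
  obtain ⟨M, hM, a1, a2⟩ := jet_bdd hu hVb
  obtain ⟨M', hM', b1, b2⟩ := jet_bdd hv hVb
  obtain ⟨L, hL⟩ := (hQ.contDiffOn (s := Metric.closedBall 0 (M + M'))).exists_lipschitzOnWith
    (by simp) (convex_closedBall _ _) (isCompact_closedBall _ _)
  refine ⟨(L : ℝ) ^ 2, by positivity, fun y hy I => ?_⟩
  have m1 : jet u y ∈ Metric.closedBall 0 (M + M') := by
    rw [mem_closedBall_zero_iff]
    exact (jet_norm_le u y hM (a1 y hy) (a2 y hy)).trans (by linarith)
  have m2 : jet v y ∈ Metric.closedBall 0 (M + M') := by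
    rw [mem_closedBall_zero_iff]
    exact (jet_norm_le v y hM' (b1 y hy) (b2 y hy)).trans (by linarith)
  have h := hL.norm_sub_le m1 m2
  rw [jet_sub hu hv] at h
  have h2 : |box (dif u v I) y| ≤ L * Real.sqrt (S2 (dif u v) y) := by
    rw [box_dif hu hv, eu y hy, ev y hy]
    refine (norm_le_pi_norm (Q (jet u y) - Q (jet v y)) I).trans (h.trans ?_)
    exact mul_le_mul_of_nonneg_left (jet_norm_S2 _ _) L.2
  rw [← sq_abs]
  calc _ ≤ (L * Real.sqrt (S2 (dif u v) y)) ^ 2 := by gcongr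
    _ = _ := by rw [mul_pow, Real.sq_sqrt (S2_nonneg _ _)]

theorem normsq3 (x : EuclideanSpace ℝ (Fin 3)) : ‖x‖ ^ 2 = x 0 ^ 2 + x 1 ^ 2 + x 2 ^ 2 := by
  rw [EuclideanSpace.real_norm_sq_eq, Fin.sum_univ_three]

theorem pd_eq_zero_line {f : Spc → ℝ} {y : Spc} (hf : DifferentiableAt ℝ f y) (α : Fin 4)
    (h : ∀ᶠ s in 𝓝 (0:ℝ), f (y + s • eVec α) = 0) : pd α f y = 0 := by
  have h1 : HasLineDerivAt ℝ f (fderiv ℝ f y (eVec α)) y (eVec α) := hf.hasFDerivAt.hasLineDerivAt _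
  have h2 : HasDerivAt (fun s : ℝ => f (y + s • eVec α)) 0 0 :=
    (hasDerivAt_const (0:ℝ) (0:ℝ)).congr_of_eventuallyEq h
  exact h1.unique h2

theorem Wt_eq4 (β γ K t0 : ℝ) (x1 : EuclideanSpace ℝ (Fin 3)) (y : Spc) :
    Wt (Fin.cons β fun _ => γ) (fun α => crd α (t0, x1)) K y =
      β * (y.1 - t0) ^ 2 + γ * ‖y.2 - x1‖ ^ 2 - K := by
  unfold Wt
  rw [Fin.sum_univ_four, normsq3]
  simp [Fin.cons, Fin.cases, Fin.induction, Fin.induction.go]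
  ring

theorem Wd_sum4 (β γ t0 a b : ℝ) (x1 : EuclideanSpace ℝ (Fin 3)) (y : Spc) :
    ∑ α, (a * (Fin.cons β fun _ => γ : Fin 4 → ℝ) α - b * eta α) *
      (Wd (Fin.cons β fun _ => γ) (fun α => crd α (t0, x1)) α y) ^ 2 =
      (a * β + b) * (4 * β ^ 2 * (y.1 - t0) ^ 2) + (a * γ - b) * (4 * γ ^ 2 * ‖y.2 - x1‖ ^ 2) := by
  unfold Wd
  rw [Fin.sum_univ_four, normsq3]
  simp [Fin.cons, Fin.cases, Fin.induction, Fin.induction.go]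
  ring

theorem fs_alg {β K n A : ℝ} (hβ : 1 < β) (hK : 0 < K) (hn : 0 ≤ n) (h : n + K ≤ β * A) :
    16 * K ≤ (4 * β + (2 + 2 * β)) * (4 * β ^ 2 * A) + (4 * (-1) - (2 + 2 * β)) * (4 * (-1) ^ 2 * n) := by
  have h1 := mul_le_mul_of_nonneg_left h (by positivity : 0 ≤ (24 * β + 8) * β)
  have e : (24 * β + 8) * β * (β * A) = (4 * β + (2 + 2 * β)) * (4 * β ^ 2 * A) := by ring
  have hb : 1 < β ^ 2 := by nlinarith
  have h2 : 0 ≤ n * (β ^ 2 - 1) := mul_nonneg hn (by linarith)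
  have h3 : 0 ≤ K * (β ^ 2 - 1) := mul_nonneg hK.le (by linarith)
  have h4 : 0 ≤ K * (β - 1) := mul_nonneg hK.le (by linarith)
  rw [← e]
  linear_combination h1 + 24 * h2 + 24 * h3 + 8 * h4 + 16 * hK

theorem finite_speed_int {N : ℕ} {Q : ((Fin N → ℝ) × (Fin N → Fin 4 → ℝ)) → Fin N → ℝ}
    (hQ : ContDiff ℝ (⊤ : ℕ∞) Q) {u v : Fin N → Spc → ℝ}
    (hu : IsGlobalSolution Q u) (hv : IsGlobalSolution Q v) (R₁ : ℝ)
    (hdata : ∀ x : EuclideanSpace ℝ (Fin 3), R₁ ≤ ‖x‖ → ∀ I,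
      u I (0, x) = v I (0, x) ∧ dt (u I) (0, x) = dt (v I) (0, x))
    (p : Spc) (hp : 0 < p.1) (hpr : R₁ + p.1 < ‖p.2‖) (I : Fin N) : u I p = v I p := by
  obtain ⟨t1, x1⟩ := p
  simp only at hp hpr
  set L := ‖x1‖ - R₁ with hL
  have hLt : t1 < L := by linarith
  set t0 := (t1 + L) / 2 with ht0
  have h10 : t1 < t0 := by linarith
  have h0L : t0 < L := by linarith
  have h0p : 0 < t0 := by linarith
  set β := (1 + (L / t0) ^ 2) / 2 with hβ
  have hLt0 : 1 < L / t0 := (one_lt_div h0p).2 h0L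
  have hβ1 : 1 < β := by
    have : 1 < (L / t0) ^ 2 := by nlinarith
    rw [hβ]; linarith
  have hβL : β * t0 ^ 2 < L ^ 2 := by
    have : β * t0 ^ 2 = (t0 ^ 2 + L ^ 2) / 2 := by rw [hβ]; field_simp
    rw [this]; nlinarith
  set K := β * (t1 - t0) ^ 2 / 2 with hK
  have hKp : 0 < K := by
    have : 0 < (t1 - t0) ^ 2 := by
      have : t1 - t0 ≠ 0 := by linarith
      positivity
    positivity
  set κ : Fin 4 → ℝ := Fin.cons β fun _ => -1 with hκ
  set c : Fin 4 → ℝ := fun α => crd α (t0, x1) with hc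
  have hW : ∀ y, Wt κ c K y = β * (y.1 - t0) ^ 2 + (-1) * ‖y.2 - x1‖ ^ 2 - K := fun y =>
    Wt_eq4 β (-1) K t0 x1 y
  set V : Set Spc := {y | 0 < y.1 ∧ y.1 < t0 ∧ 0 < Wt κ c K y} with hV
  set O : Set Spc := {y | y.1 < t0 ∧ 0 < Wt κ c K y} with hO
  have hWc : Continuous (Wt κ c K) := (contDiff_Wt (n := 0) κ c K).continuous
  have hVo : IsOpen V := (isOpen_lt continuous_const continuous_fst).inter
    ((isOpen_lt continuous_fst continuous_const).inter (isOpen_lt continuous_const hWc))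
  have hOo : IsOpen O :=
    ((isOpen_lt continuous_fst continuous_const).inter (isOpen_lt continuous_const hWc))
  have hx : ∀ y : Spc, 0 ≤ y.1 → y.1 < t0 → 0 < Wt κ c K y → ‖y.2 - x1‖ < L := by
    intro y h1 h2 h3
    rw [hW] at h3
    have : (y.1 - t0) ^ 2 ≤ t0 ^ 2 := by nlinarith
    have : β * (y.1 - t0) ^ 2 ≤ β * t0 ^ 2 := by gcongr
    exact lt_of_pow_lt_pow_left₀ 2 (by linarith) (by linarith)
  have hVb : Bornology.IsBounded V := by
    refine (Metric.isBounded_closedBall (x := ((0:ℝ), x1)) (r := t0 + L)).subset ?_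
    rintro y ⟨h1, h2, h3⟩
    have := hx y h1.le h2 h3
    rw [Metric.mem_closedBall, Prod.dist_eq, dist_eq_norm, dist_eq_norm]
    refine max_le ?_ (by linarith)
    simp only [sub_zero, Real.norm_eq_abs, abs_of_pos h1]; linarith
  have hclV : ∀ y ∈ closure V, 0 ≤ y.1 ∧ y.1 ≤ t0 := by
    have hcl : IsClosed {y : Spc | 0 ≤ y.1 ∧ y.1 ≤ t0} :=
      (isClosed_le continuous_const continuous_fst).inter
        (isClosed_le continuous_fst continuous_const)
    exact fun y hy => closure_minimal (t := {y : Spc | 0 ≤ y.1 ∧ y.1 ≤ t0})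
      (fun z (hz : z ∈ V) => ⟨hz.1.le, hz.2.1.le⟩) hcl hy
  have hus := hu.1
  have hvs := hv.1
  have hws := dif_contDiff hus hvs
  obtain ⟨C1, hC1, hbox⟩ := box_lip hQ hus hvs hVb
    (fun y hy I => hu.2.2.2 y (le_of_lt hy.1) I) (fun y hy I => hv.2.2.2 y (le_of_lt hy.1) I)
  obtain ⟨M, hM, m1, m2⟩ := jet_bdd hws hVb
  have H : UCHyp (2 + 2 * β) (16 * K) (2 * (β - 1)) (C1 + M + 4 * (M * M)) κ c K (fun _ => 1) V O
      (dif u v) := by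
    refine ⟨by positivity, by linarith, by positivity, hVo, hVb, hOo, fun y hy => hy.2, ?_,
      contDiff_const, fun I y _ => ((hws I).contDiffAt).of_le (by norm_cast), ?_,
      fun _ _ => one_pos,
      fun y hy => hy.2.2, ?_, ?_, ?_, ?_, ?_, ?_, ?_⟩
    · intro k hk δ _ y hy hkW _
      refine ⟨lt_of_le_of_ne (hclV y hy).2 fun he => ?_, hk.trans_le hkW⟩
      rw [hW, he] at hkW
      nlinarith [sq_nonneg ‖y.2 - x1‖]
    · intro y hyO hyc hyV I
      have hy0 : y.1 = 0 := by
        by_contra hne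
        exact hyV ⟨lt_of_le_of_ne (hclV y hyc).1 (Ne.symm hne), hyO.1, hyO.2⟩
      have hn := hx y hy0.ge hyO.1 hyO.2
      have hyn : R₁ < ‖y.2‖ := by
        have := norm_sub_norm_le x1 y.2
        rw [norm_sub_rev] at this
        linarith
      have z0 : ∀ z : Spc, z.1 = 0 → R₁ < ‖z.2‖ → dif u v I z = 0 := by
        rintro ⟨t, x⟩ h1 h2
        simp only at h1 h2
        subst h1
        exact sub_eq_zero.2 (hdata x h2.le I).1
      refine ⟨z0 y hy0 hyn, fun α => ?_⟩
      refine Fin.cases ?_ (fun i => ?_) α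
      · rw [pd_dif hus hvs]
        have := (hdata y.2 hyn.le I).2
        rw [show y = ((0:ℝ), y.2) from Prod.ext hy0 rfl]
        exact sub_eq_zero.2 this
      · refine pd_eq_zero_line (smooth_diff (hws I) y) _ ?_
        have hc : ContinuousAt (fun s : ℝ => ‖(y + s • eVec i.succ).2‖) 0 := by fun_prop
        have : ∀ᶠ s in 𝓝 (0:ℝ), R₁ < ‖(y + s • eVec i.succ).2‖ :=
          hc.eventually_const_lt (by simpa using hyn)
        filter_upwards [this] with s hs
        exact z0 _ (by simp [eVec, hy0]) hs
    · intro α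
      fin_cases α <;> simp [hκ, Fin.cons, Fin.cases, Fin.induction, Fin.induction.go] <;> linarith
    · intro y hy
      have e := Wd_sum4 β (-1) t0 4 (2 + 2 * β) x1 y
      rw [← hκ, ← hc] at e
      have e2 : ∑ α, (4 * κ α - (2 + 2 * β) * eta α) * (Wd κ c α y) ^ 2 =
        (∑ α, 4 * κ α * (Wd κ c α y) ^ 2) - (2 + 2 * β) * (∑ β, eta β * (Wd κ c β y) ^ 2) := by
        rw [Finset.mul_sum, ← Finset.sum_sub_distrib]
        exact Finset.sum_congr rfl fun α _ => by ring
      rw [← e2, e]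
      have h3 := hy.2.2
      rw [hW] at h3
      exact fs_alg hβ1 hKp (by positivity) (by linarith)
    · intro y hy I
      have := hbox y hy I
      rw [box_eq] at this
      refine this.trans (mul_le_mul_of_nonneg_right ?_ (S2_nonneg _ _))
      nlinarith
    · intro I y hy
      refine (m1 y hy I).trans ?_
      nlinarith
    · intro I y hy α
      refine (m2 y hy I α).trans ?_
      nlinarith
    · intro I y hy
      have : ∀ α, pd α (fun _ : Spc => (1:ℝ)) y = 0 := fun α => (HasPd.const 1).2
      simp [this]; positivity
    · intro I y hy
      refine (sum_eta_bound (m2 y hy I) (m2 y hy I)).trans ?_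
      nlinarith
  have := H.vanish (t1, x1) ⟨hp, h10, by rw [hW]; simp; linarith⟩ I
  exact sub_eq_zero.1 this

theorem finite_speed {N : ℕ} {Q : ((Fin N → ℝ) × (Fin N → Fin 4 → ℝ)) → Fin N → ℝ}
    (hQ : ContDiff ℝ (⊤ : ℕ∞) Q) {u v : Fin N → Spc → ℝ}
    (hu : IsGlobalSolution Q u) (hv : IsGlobalSolution Q v) (R₁ : ℝ) (hR₁ : 0 < R₁)
    (hdata : ∀ x : EuclideanSpace ℝ (Fin 3), R₁ ≤ ‖x‖ → ∀ I,
      u I (0, x) = v I (0, x) ∧ dt (u I) (0, x) = dt (v I) (0, x))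
    (p : Spc) (hp : 0 < p.1) (hpr : R₁ + p.1 ≤ ‖p.2‖) (I : Fin N) :
    dif u v I p = 0 ∧ ∀ α, pd α (dif u v I) p = 0 := by
  have hws := dif_contDiff hu.1 hv.1 I
  -- closure of the open exterior region
  set U : Set Spc := {y | 0 < y.1 ∧ R₁ + y.1 < ‖y.2‖} with hU
  have hUo : IsOpen U := (isOpen_lt continuous_const continuous_fst).inter
    (isOpen_lt (continuous_const.add continuous_fst) continuous_snd.norm)
  have hz : ∀ y ∈ U, dif u v I y = 0 := fun y hy =>
    sub_eq_zero.2 (finite_speed_int hQ hu hv R₁ hdata y hy.1 hy.2 I)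
  have hz' : ∀ α, ∀ y ∈ U, pd α (dif u v I) y = 0 := by
    intro α y hy
    have : dif u v I =ᶠ[𝓝 y] fun _ => 0 := by
      filter_upwards [hUo.mem_nhds hy] with z hz' using hz z hz'
    rw [pd_congr this]; exact (HasPd.const 0).2
  have hpc : p ∈ closure U := by
    have hn : 0 < ‖p.2‖ := by linarith
    have hT : Tendsto (fun s : ℝ => ((p.1, (1 + s) • p.2) : Spc)) (𝓝[>] 0) (𝓝 p) := by
      have : ContinuousAt (fun s : ℝ => ((p.1, (1 + s) • p.2) : Spc)) 0 := by fun_prop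
      have h := this.tendsto
      simp only [add_zero, one_smul, Prod.mk.eta] at h
      exact h.mono_left nhdsWithin_le_nhds
    refine mem_closure_of_tendsto hT ?_
    filter_upwards [self_mem_nhdsWithin] with s hs
    have hs' : 0 < s := hs
    refine ⟨hp, ?_⟩
    simp only [norm_smul, Real.norm_eq_abs]
    rw [abs_of_pos (by linarith)]
    nlinarith
  refine ⟨?_, fun α => ?_⟩
  · exact closure_minimal (t := {y | dif u v I y = 0}) hz (isClosed_eq hws.continuous continuous_const) hpc
  · exact closure_minimal (t := {y | pd α (dif u v I) y = 0}) (hz' α)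
      (isClosed_eq (pd_contDiff hws α).continuous continuous_const) hpc

end part6

section part7

/-- Minkowski square -/
def Dm (y : Spc) : ℝ := - ∑ α, eta α * (crd α y * crd α y)

/-- conformal inversion -/
def inv (y : Spc) : Spc := (Dm y)⁻¹ • y

/-- Euler field -/
def Eu (h : Spc → ℝ) (P : Spc) : ℝ := ∑ μ, crd μ P * pd μ h P

/-- Kelvin type transform -/
def Tr (h : Spc → ℝ) (y : Spc) : ℝ := (Dm y)⁻¹ * h (inv y)

theorem Dm_eq (y : Spc) : Dm y = y.1 ^ 2 - ‖y.2‖ ^ 2 := by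
  unfold Dm
  rw [Fin.sum_univ_four, normsq3]
  simp
  ring

theorem contDiff_Dm {n : WithTop ℕ∞} : ContDiff ℝ n Dm := by
  unfold Dm
  exact (ContDiff.sum fun α _ => contDiff_const.mul ((contDiff_crd α).mul (contDiff_crd α))).neg

theorem hasPd_Dm (α : Fin 4) (y : Spc) : HasPd α Dm (-2 * (eta α * crd α y)) y := by
  have h : HasPd α (fun z => (-1) * ∑ β, eta β * (crd β z * crd β z)) _ y :=
    (HasPd.sum Finset.univ fun β _ =>
      ((hasPd_crd α β y).mul (hasPd_crd α β y)).cmul (eta β)).cmul (-1)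
  have e : Dm = fun z => (-1) * ∑ β, eta β * (crd β z * crd β z) := by
    funext z; unfold Dm; ring
  rw [e]
  refine ⟨h.1, h.2.trans ?_⟩
  fin_cases α <;> simp [Fin.sum_univ_four] <;> ring

theorem crd_smul (α : Fin 4) (a : ℝ) (y : Spc) : crd α (a • y) = a * crd α y := by
  rw [crd_eq]; simp

theorem crd_inv (α : Fin 4) (y : Spc) : crd α (inv y) = (Dm y)⁻¹ * crd α y := crd_smul _ _ _

theorem hasPd_Dinv (α : Fin 4) {y : Spc} (hD : Dm y ≠ 0) :
    HasPd α (fun z => (Dm z)⁻¹) (2 * (Dm y)⁻¹ ^ 2 * (eta α * crd α y)) y := by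
  have := (hasPd_Dm α y).comp (hasDerivAt_inv hD)
  refine ⟨this.1, this.2.trans ?_⟩
  rw [← inv_pow]; ring

theorem contDiffAt_inv' {n : WithTop ℕ∞} {y : Spc} (hD : Dm y ≠ 0) : ContDiffAt ℝ n inv y := by
  unfold inv
  exact (contDiff_Dm.contDiffAt.inv hD).smul contDiffAt_id

theorem hasPd_comp_inv (α : Fin 4) {h : Spc → ℝ} {y : Spc} (hD : Dm y ≠ 0)
    (hh : DifferentiableAt ℝ h (inv y)) :
    HasPd α (fun z => h (inv z))
      ((Dm y)⁻¹ * (pd α h (inv y) + 2 * (eta α * crd α y) * Eu h (inv y))) y := by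
  have hi : DifferentiableAt ℝ inv y := (contDiffAt_inv' (n := 1) hD).differentiableAt (by norm_num)
  refine ⟨hh.comp y hi, ?_⟩
  have e1 : pd α (fun z => h (inv z)) y = fderiv ℝ h (inv y) (fderiv ℝ inv y (eVec α)) := by
    unfold pd
    rw [show (fun z => h (inv z)) = h ∘ inv from rfl, fderiv_comp y hh hi]; rfl
  have e2 : ∀ μ, crd μ (fderiv ℝ inv y (eVec α)) = 2 * (Dm y)⁻¹ ^ 2 * (eta α * crd α y) * crd μ y
      + (Dm y)⁻¹ * (if α = μ then 1 else 0) := by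
    intro μ
    have h1 := (hasPd_Dinv α hD).mul (hasPd_crd α μ y)
    rw [← h1.2]
    unfold pd
    have : (fun z => (Dm z)⁻¹ * crd μ z) = (crdL μ) ∘ inv := by
      funext z
      rw [← crd_inv, crd_eq]; rfl
    rw [this, fderiv_comp y (crdL μ).differentiableAt hi, crd_eq]
    simp
  rw [e1, clm_eq_sum]
  simp only [e2, Eu, crd_inv]
  have e3 : ∀ μ, fderiv ℝ h (inv y) (eVec μ) = pd μ h (inv y) := fun μ => rfl
  simp only [e3, add_mul, Finset.sum_add_distrib, mul_assoc, ite_mul, one_mul, zero_mul, mul_ite,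
    mul_zero, Finset.sum_ite_eq, Finset.mem_univ, if_true, mul_add, Finset.mul_sum]
  rw [add_comm]
  congr 1
  refine Finset.sum_congr rfl fun μ _ => ?_
  ring

/-- `h + Eu h` -/
def kk (h : Spc → ℝ) (P : Spc) : ℝ := h P + Eu h P

theorem Eu_contDiff {h : Spc → ℝ} (hh : ContDiff ℝ (⊤ : ℕ∞) h) : ContDiff ℝ (⊤ : ℕ∞) (Eu h) := by
  unfold Eu
  exact ContDiff.sum fun μ _ => (contDiff_crd μ).mul (pd_contDiff hh μ)

theorem kk_contDiff {h : Spc → ℝ} (hh : ContDiff ℝ (⊤ : ℕ∞) h) : ContDiff ℝ (⊤ : ℕ∞) (kk h) :=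
  hh.add (Eu_contDiff hh)

theorem hasPd_Tr (α : Fin 4) {h : Spc → ℝ} {y : Spc} (hD : Dm y ≠ 0)
    (hh : ContDiff ℝ (⊤ : ℕ∞) h) :
    HasPd α (Tr h) ((Dm y)⁻¹ ^ 2 * (pd α h (inv y) + 2 * (eta α * crd α y) * kk h (inv y))) y := by
  have := (hasPd_Dinv α hD).mul (hasPd_comp_inv α hD (smooth_diff hh (inv y)))
  refine ⟨this.1, this.2.trans ?_⟩
  unfold kk; ring

theorem Tr_contDiffAt {n : WithTop ℕ∞} {h : Spc → ℝ} {y : Spc} (hD : Dm y ≠ 0)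
    (hh : ContDiff ℝ n h) : ContDiffAt ℝ n (Tr h) y :=
  (contDiff_Dm.contDiffAt.inv hD).mul (hh.contDiffAt.comp y (contDiffAt_inv' hD))

theorem pd_Eu {h : Spc → ℝ} (hh : ContDiff ℝ (⊤ : ℕ∞) h) (α : Fin 4) (P : Spc) :
    pd α (Eu h) P = pd α h P + ∑ μ, crd μ P * pd α (pd μ h) P := by
  have : HasPd α (fun z => ∑ μ, crd μ z * pd μ h z) _ P := HasPd.sum Finset.univ fun μ _ =>
    (hasPd_crd α μ P).mul (HasPd.of_diff (smooth_diff (pd_contDiff hh μ) P))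
  refine this.2.trans ?_
  simp [Finset.sum_add_distrib]

theorem sum_y {y : Spc} (hD : Dm y ≠ 0) (f : Fin 4 → ℝ) :
    ∑ μ, crd μ y * f μ = Dm y * ∑ μ, crd μ (inv y) * f μ := by
  rw [Finset.mul_sum]
  refine Finset.sum_congr rfl fun μ _ => ?_
  rw [crd_inv]; field_simp

theorem eta_sq (α : Fin 4) : eta α * eta α = 1 := by unfold eta; split_ifs <;> norm_num

theorem box_Tr {h : Spc → ℝ} {y : Spc} (hD : Dm y ≠ 0) (hh : ContDiff ℝ (⊤ : ℕ∞) h) :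
    ∑ α, eta α * pd α (pd α (Tr h)) y =
      (Dm y)⁻¹ ^ 3 * ∑ α, eta α * pd α (pd α h) (inv y) := by
  have hev : ∀ᶠ z in 𝓝 y, Dm z ≠ 0 := (contDiff_Dm (n := 0)).continuous.continuousAt.eventually_ne hD
  set i := (Dm y)⁻¹ with hi
  set P := inv y with hP
  have hiD : i * Dm y = 1 := inv_mul_cancel₀ hD
  have h2 : ∀ α, pd α (pd α (Tr h)) y = 4 * i ^ 3 * (eta α * crd α y) *
      (pd α h P + 2 * (eta α * crd α y) * kk h P) + i ^ 2 * (i * (pd α (pd α h) P +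
        2 * (eta α * crd α y) * Eu (pd α h) P) + 2 * eta α * kk h P
        + 2 * (eta α * crd α y) * (i * (pd α (kk h) P + 2 * (eta α * crd α y) * Eu (kk h) P))) := by
    intro α
    have e : pd α (Tr h) =ᶠ[𝓝 y] fun z => ((Dm z)⁻¹ * (Dm z)⁻¹) *
        (pd α h (inv z) + (2 * eta α) * (crd α z * kk h (inv z))) := by
      filter_upwards [hev] with z hz
      rw [(hasPd_Tr α hz hh).2]; ring
    rw [pd_congr e]
    have q := ((hasPd_Dinv α hD).mul (hasPd_Dinv α hD)).mul
      ((hasPd_comp_inv α hD (smooth_diff (pd_contDiff hh α) (inv y))).add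
      (((hasPd_crd α α y).mul (hasPd_comp_inv α hD (smooth_diff (kk_contDiff hh) (inv y)))).cmul
        (2 * eta α)))
    rw [q.2]
    simp only [if_true]
    rw [← hi, ← hP]
    ring
  have hk : ∀ α, pd α (kk h) P = 2 * pd α h P + Eu (pd α h) P := by
    intro α
    have := (HasPd.of_diff (α := α) (smooth_diff hh P)).add
      (HasPd.of_diff (smooth_diff (Eu_contDiff hh) P))
    refine this.2.trans ?_
    rw [pd_Eu hh]
    unfold Eu
    have : ∀ μ, pd α (pd μ h) P = pd μ (pd α h) P := fun μ =>
      pd_comm (hh.contDiffAt.of_le (by norm_cast)) α μ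
    simp only [this]; ring
  have s1 : ∑ α, crd α y * pd α h P = Dm y * Eu h P := sum_y hD _
  have s2 : ∑ α, eta α * (crd α y * crd α y) = - Dm y := by unfold Dm; ring
  have s3 : ∑ α, crd α y * Eu (pd α h) P = Dm y * (∑ α, crd α P * Eu (pd α h) P) := sum_y hD _
  have s4 : ∑ α, crd α y * pd α (kk h) P = Dm y * Eu (kk h) P := sum_y hD _
  set B := ∑ α, crd α P * Eu (pd α h) P with hB
  have s5 : Eu (kk h) P = 2 * Eu h P + B := by
    rw [hB]
    unfold Eu
    rw [Finset.mul_sum, ← Finset.sum_add_distrib]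
    refine Finset.sum_congr rfl fun α _ => ?_
    rw [hk α]; unfold Eu; ring
  have s6 : ∑ α : Fin 4, eta α * eta α = 4 := by simp [eta_sq]
  have e : ∑ α, eta α * pd α (pd α (Tr h)) y = 4 * i ^ 3 * (∑ α, crd α y * pd α h P)
      + 8 * i ^ 3 * kk h P * (∑ α, eta α * (crd α y * crd α y))
      + i ^ 3 * (∑ α, eta α * pd α (pd α h) P) + 2 * i ^ 3 * (∑ α, crd α y * Eu (pd α h) P)
      + 2 * i ^ 2 * kk h P * (∑ α : Fin 4, eta α * eta α) + 2 * i ^ 3 * (∑ α, crd α y * pd α (kk h) P)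
      + 4 * i ^ 3 * Eu (kk h) P * (∑ α, eta α * (crd α y * crd α y)) := by
    simp only [Finset.mul_sum, ← Finset.sum_add_distrib]
    refine Finset.sum_congr rfl fun α _ => ?_
    rw [h2 α]
    linear_combination (4 * i ^ 3 * crd α y * pd α h P + 8 * i ^ 3 * eta α * crd α y ^ 2 * kk h P
      + 2 * i ^ 3 * crd α y * Eu (pd α h) P + 2 * i ^ 3 * crd α y * pd α (kk h) P
      + 4 * i ^ 3 * eta α * crd α y ^ 2 * Eu (kk h) P) * eta_sq α
  rw [e, s1, s2, s3, s4, s5, s6]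
  unfold kk
  linear_combination (4 * i ^ 2 * Eu h P - 8 * i ^ 2 * (h P + Eu h P) + 2 * i ^ 2 * B
    - 2 * i ^ 2 * (2 * Eu h P + B)) * hiD

/-- sum formulas -/
theorem Tr_b3 {h : Spc → ℝ} {y : Spc} (hD : Dm y ≠ 0) (hh : ContDiff ℝ (⊤ : ℕ∞) h) :
    ∑ α, crd α y * pd α (Tr h) y = (Dm y)⁻¹ * (Eu h (inv y) - 2 * kk h (inv y)) := by
  have hiD : (Dm y)⁻¹ * Dm y = 1 := inv_mul_cancel₀ hD
  have s1 : ∑ α, crd α y * pd α h (inv y) = Dm y * Eu h (inv y) := sum_y hD _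
  have s2 : ∑ α, eta α * (crd α y * crd α y) = - Dm y := by unfold Dm; ring
  have e : ∑ α, crd α y * pd α (Tr h) y = (Dm y)⁻¹ ^ 2 * (∑ α, crd α y * pd α h (inv y)) +
      2 * (Dm y)⁻¹ ^ 2 * kk h (inv y) * ∑ α, eta α * (crd α y * crd α y) := by
    simp only [Finset.mul_sum, ← Finset.sum_add_distrib]
    refine Finset.sum_congr rfl fun α _ => ?_
    rw [(hasPd_Tr α hD hh).2]; ring
  rw [e, s1, s2]
  linear_combination ((Dm y)⁻¹ * (Eu h (inv y) - 2 * kk h (inv y))) * hiD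

theorem Tr_b4 {h : Spc → ℝ} {y : Spc} (hD : Dm y ≠ 0) (hh : ContDiff ℝ (⊤ : ℕ∞) h) :
    ∑ α, eta α * (pd α (Tr h) y * pd α (Tr h) y) = (Dm y)⁻¹ ^ 4 *
      ((∑ α, eta α * (pd α h (inv y) * pd α h (inv y))) +
        4 * Dm y * kk h (inv y) * (Eu h (inv y) - kk h (inv y))) := by
  have s1 : ∑ α, crd α y * pd α h (inv y) = Dm y * Eu h (inv y) := sum_y hD _
  have s2 : ∑ α, eta α * (crd α y * crd α y) = - Dm y := by unfold Dm; ring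
  have e : ∑ α, eta α * (pd α (Tr h) y * pd α (Tr h) y) = (Dm y)⁻¹ ^ 4 *
      ((∑ α, eta α * (pd α h (inv y) * pd α h (inv y))) + 4 * kk h (inv y) *
      (∑ α, crd α y * pd α h (inv y)) +
      4 * kk h (inv y) ^ 2 * ∑ α, eta α * (crd α y * crd α y)) := by
    simp only [Finset.mul_sum, ← Finset.sum_add_distrib]
    refine Finset.sum_congr rfl fun α _ => ?_
    rw [(hasPd_Tr α hD hh).2]
    linear_combination ((Dm y)⁻¹ ^ 4 * (4 * crd α y * pd α h (inv y) * kk h (inv y)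
      + 4 * eta α * crd α y ^ 2 * kk h (inv y) ^ 2)) * eta_sq α
  rw [e, s1, s2]; ring

/-- inverse formula -/
theorem pd_of_Tr {h : Spc → ℝ} {y : Spc} (hD : Dm y ≠ 0) (hh : ContDiff ℝ (⊤ : ℕ∞) h)
    (α : Fin 4) : pd α h (inv y) = Dm y ^ 2 * pd α (Tr h) y +
      2 * (eta α * crd α y) * Dm y * (Tr h y + ∑ μ, crd μ y * pd μ (Tr h) y) := by
  have hiD : (Dm y)⁻¹ * Dm y = 1 := inv_mul_cancel₀ hD
  rw [Tr_b3 hD hh, (hasPd_Tr α hD hh).2]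
  unfold Tr kk
  linear_combination (- ((pd α h (inv y) + 2 * (eta α * crd α y) * (h (inv y) + Eu h (inv y))) *
    ((Dm y)⁻¹ * Dm y + 1)) + 2 * (eta α * crd α y) * (h (inv y) + Eu h (inv y))) * hiD

theorem Dm_smul (a : ℝ) (y : Spc) : Dm (a • y) = a ^ 2 * Dm y := by
  unfold Dm
  simp only [crd_smul]
  rw [mul_neg, Finset.mul_sum]
  congr 1
  exact Finset.sum_congr rfl fun α _ => by ring

theorem Dm_inv {y : Spc} (hD : Dm y ≠ 0) : Dm (inv y) = (Dm y)⁻¹ := by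
  unfold inv
  rw [Dm_smul]; field_simp

theorem inv_inv' {y : Spc} (hD : Dm y ≠ 0) : inv (inv y) = y := by
  conv_lhs => unfold inv
  rw [show (Dm y)⁻¹ • y = inv y from rfl, Dm_inv hD, inv_inv]
  unfold inv
  rw [smul_smul, mul_inv_cancel₀ hD, one_smul]

end part7

section part8
open Asymptotics

theorem Z1_terms (g : Spc → ℝ) (p : Spc) : |g p| ≤ Z1sum g p ∧ (∀ α, |pd α g p| ≤ Z1sum g p) ∧
    |Sc g p| ≤ Z1sum g p ∧ (∀ i, |Lor i g p| ≤ Z1sum g p) ∧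
    |Rot 0 1 g p| ≤ Z1sum g p ∧ |Rot 0 2 g p| ≤ Z1sum g p ∧ |Rot 1 2 g p| ≤ Z1sum g p := by
  have a0 := abs_nonneg (g p)
  have a1 := abs_nonneg (pd 0 g p)
  have a2 := abs_nonneg (pd 1 g p)
  have a3 := abs_nonneg (pd 2 g p)
  have a4 := abs_nonneg (pd 3 g p)
  have a5 := abs_nonneg (Sc g p)
  have a6 := abs_nonneg (Rot 0 1 g p)
  have a7 := abs_nonneg (Rot 0 2 g p)
  have a8 := abs_nonneg (Rot 1 2 g p)
  have a9 := abs_nonneg (Lor 0 g p)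
  have a10 := abs_nonneg (Lor 1 g p)
  have a11 := abs_nonneg (Lor 2 g p)
  have e : Z1sum g p = |g p| + (|pd 0 g p| + (|pd 1 g p| + (|pd 2 g p| + (|pd 3 g p| + (|Sc g p| +
    (|Rot 0 1 g p| + (|Rot 0 2 g p| + (|Rot 1 2 g p| + (|Lor 0 g p| + (|Lor 1 g p| + |Lor 2 g p|)))))))))) := by
    simp [Z1sum, ZList]
  refine ⟨by linarith, fun α => ?_, by linarith, fun i => ?_, by linarith, by linarith, by linarith⟩
  · fin_cases α <;> simp <;> linarith
  · fin_cases i <;> simp <;> linarith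

/-- spatial unit direction -/
def omg (α : Fin 4) (p : Spc) : ℝ := if α = 0 then 0 else crd α p / rr p

theorem abs_crd_le (α : Fin 4) (h : α ≠ 0) (p : Spc) : |crd α p| ≤ rr p := by
  obtain ⟨i, rfl⟩ := Fin.exists_succ_eq.2 h
  have : crd i.succ p = p.2 i := rfl
  rw [this]
  exact PiLp.norm_apply_le p.2 i

theorem abs_omg_le (α : Fin 4) (p : Spc) : |omg α p| ≤ 1 := by
  unfold omg
  split_ifs with h
  · simp
  · have h0 : 0 ≤ rr p := norm_nonneg _
    rw [abs_div, abs_of_nonneg h0]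
    exact div_le_one_of_le₀ (abs_crd_le α h p) h0

theorem rr_sq (p : Spc) : rr p ^ 2 = crd 1 p ^ 2 + crd 2 p ^ 2 + crd 3 p ^ 2 := by
  unfold rr; rw [normsq3]; rfl

theorem hasPd_rr (α : Fin 4) {p : Spc} (hp : 0 < rr p) : HasPd α rr (omg α p) p := by
  have e : rr = fun z => Real.sqrt (crd 1 z * crd 1 z + crd 2 z * crd 2 z + crd 3 z * crd 3 z) := by
    funext z
    have h0 : 0 ≤ rr z := norm_nonneg _
    rw [eq_comm, Real.sqrt_eq_iff_mul_self_eq (by nlinarith [mul_self_nonneg (crd 1 z), mul_self_nonneg (crd 2 z), mul_self_nonneg (crd 3 z)]) h0]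
    have := rr_sq z
    nlinarith
  have h := (((hasPd_crd α 1 p).mul (hasPd_crd α 1 p)).add
    ((hasPd_crd α 2 p).mul (hasPd_crd α 2 p))).add ((hasPd_crd α 3 p).mul (hasPd_crd α 3 p))
  have hs : crd 1 p * crd 1 p + crd 2 p * crd 2 p + crd 3 p * crd 3 p = rr p ^ 2 := by
    rw [rr_sq]; ring
  have h2 := h.comp (Real.hasDerivAt_sqrt (x := crd 1 p * crd 1 p + crd 2 p * crd 2 p + crd 3 p * crd 3 p)
    (by rw [hs]; positivity))
  rw [← e] at h2
  refine ⟨h2.1, h2.2.trans ?_⟩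
  rw [hs, Real.sqrt_sq hp.le]
  unfold omg
  fin_cases α <;> simp <;> field_simp <;> ring

theorem HasPd.chain {h : Spc → ℝ} {ν : Spc → Spc} {y : Spc} {α : Fin 4} {d : Fin 4 → ℝ}
    (hν : DifferentiableAt ℝ ν y) (hh : DifferentiableAt ℝ h (ν y))
    (hd : ∀ μ, HasPd α (fun z => crd μ (ν z)) (d μ) y) :
    HasPd α (fun z => h (ν z)) (∑ μ, d μ * pd μ h (ν y)) y := by
  refine ⟨hh.comp y hν, ?_⟩
  have e1 : pd α (fun z => h (ν z)) y = fderiv ℝ h (ν y) (fderiv ℝ ν y (eVec α)) := by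
    unfold pd
    rw [show (fun z => h (ν z)) = h ∘ ν from rfl, fderiv_comp y hh hν]; rfl
  rw [e1, clm_eq_sum]
  refine Finset.sum_congr rfl fun μ _ => ?_
  congr 1
  rw [← (hd μ).2]
  unfold pd
  rw [show (fun z => crd μ (ν z)) = (crdL μ) ∘ ν by funext z; rw [crd_eq]; rfl,
    fderiv_comp y (crdL μ).differentiableAt hν, crd_eq]
  simp

/-- the map `p ↦ (r - t, x/r)` -/
def nu (p : Spc) : Spc := (rr p - p.1, (rr p)⁻¹ • p.2)

/-- profile -/
def gF {N : ℕ} (F : ℝ → EuclideanSpace ℝ (Fin 3) → Fin N → ℝ) (I : Fin N) (p : Spc) : ℝ :=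
  (rr p)⁻¹ * F (rr p - p.1) ((rr p)⁻¹ • p.2) I

theorem hasPd_rinv (α : Fin 4) {p : Spc} (hp : 0 < rr p) :
    HasPd α (fun z => (rr z)⁻¹) (-((rr p)⁻¹ ^ 2) * omg α p) p := by
  have := (hasPd_rr α hp).comp (hasDerivAt_inv hp.ne')
  rwa [← inv_pow] at this

/-- angular derivative coefficients -/
def dnu (α : Fin 4) (p : Spc) (μ : Fin 4) : ℝ :=
  if μ = 0 then omg α p - (if α = 0 then 1 else 0) else
    (-((rr p)⁻¹ ^ 2) * omg α p) * crd μ p + (rr p)⁻¹ * (if α = μ then 1 else 0)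

theorem hasPd_gF {N : ℕ} {F : ℝ → EuclideanSpace ℝ (Fin 3) → Fin N → ℝ}
    (hF : ContDiff ℝ 1 fun z : ℝ × EuclideanSpace ℝ (Fin 3) => F z.1 z.2) (I : Fin N)
    (α : Fin 4) {p : Spc} (hp : 0 < rr p) :
    HasPd α (gF F I) (-((rr p)⁻¹ ^ 2) * omg α p * F (nu p).1 (nu p).2 I +
      (rr p)⁻¹ * ∑ μ, dnu α p μ * pd μ (fun z : Spc => F z.1 z.2 I) (nu p)) p := by
  have hFI : ContDiff ℝ 1 (fun z : Spc => F z.1 z.2 I) := (contDiff_pi.1 hF) I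
  have hrd : DifferentiableAt ℝ rr p := (hasPd_rr 0 hp).1
  have hν : DifferentiableAt ℝ nu p := by
    unfold nu
    exact (hrd.sub differentiableAt_fst).prodMk
      ((hrd.inv hp.ne').smul differentiableAt_snd)
  have hd : ∀ μ, HasPd α (fun z => crd μ (nu z)) (dnu α p μ) p := by
    intro μ
    by_cases hμ : μ = 0
    · subst hμ
      have := (hasPd_rr α hp).sub (hasPd_crd α 0 p)
      rw [dnu, if_pos rfl]
      exact this
    · have := (hasPd_rinv α hp).mul (hasPd_crd α μ p)
      rw [dnu, if_neg hμ]
      obtain ⟨i, rfl⟩ := Fin.exists_succ_eq.2 hμ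
      exact this
  have := (hasPd_rinv α hp).mul (HasPd.chain hν
    (hFI.differentiable (by norm_num) (nu p)) hd)
  exact this

/-- the far region -/
def Reg (R₁ R₂ : ℝ) : Set Spc := {p | 0 < p.1 ∧ R₂ < rr p - p.1 ∧ rr p - p.1 < R₁ ∧ 0 < rr p}

/-- decay rate -/
def sd (p : Spc) : ℝ := (1 + p.1)⁻¹

theorem rr_cont : Continuous rr := continuous_snd.norm

theorem bigO_bdd {V : Set Spc} (hVb : Bornology.IsBounded V) {f : Spc → ℝ} (hf : Continuous f) :
    f =O[𝓟 V] (fun _ => (1 : ℝ)) := by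
  obtain ⟨B, -, hB⟩ := bdd_of_cont hVb hf
  exact isBigO_principal.2 ⟨B, fun y hy => by simpa using hB y hy⟩

theorem near_bdd (R₁ R₂ T : ℝ) : Bornology.IsBounded (Reg R₁ R₂ ∩ {p | p.1 ≤ T}) := by
  refine (Metric.isBounded_closedBall (x := (0 : Spc)) (r := |T| + |R₁|)).subset ?_
  rintro p ⟨⟨h1, h2, h3, h4⟩, h5⟩
  have h5' : p.1 ≤ T := h5
  rw [mem_closedBall_zero_iff]
  have := le_abs_self T
  have := le_abs_self R₁
  have := abs_nonneg R₁
  have h : ‖p‖ = max ‖p.1‖ ‖p.2‖ := Prod.norm_def p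
  rw [h]
  refine max_le ?_ ?_
  · rw [Real.norm_eq_abs, abs_of_pos h1]; linarith
  · change rr p ≤ _; linarith

/-- glue near and far -/
theorem glue {R₁ R₂ T : ℝ} {f : Spc → ℝ} (n : ℕ)
    (h1 : f =O[𝓟 (Reg R₁ R₂ ∩ {p | p.1 ≤ T})] (fun _ => (1 : ℝ)))
    (h2 : f =O[𝓟 (Reg R₁ R₂ ∩ {p | T ≤ p.1})] (fun p => sd p ^ n)) :
    f =O[𝓟 (Reg R₁ R₂)] (fun p => sd p ^ n) := by
  have h3 : (fun _ : Spc => (1 : ℝ)) =O[𝓟 (Reg R₁ R₂ ∩ {p | p.1 ≤ T})] (fun p => sd p ^ n) := by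
    refine isBigO_principal.2 ⟨(1 + T) ^ n, fun p hp => ?_⟩
    obtain ⟨⟨h1, -⟩, h5⟩ := hp
    have h5' : p.1 ≤ T := h5
    unfold sd
    rw [norm_one, Real.norm_eq_abs, abs_of_pos (by positivity), ← mul_pow]
    refine one_le_pow₀ ?_
    rw [← div_eq_mul_inv, one_le_div (by linarith)]
    linarith
  have h := (h1.trans h3).sup h2
  refine h.mono ?_
  rw [sup_principal, principal_mono]
  intro p hp
  rcases le_total p.1 T with h | h
  · exact Or.inl ⟨hp, h⟩
  · exact Or.inr ⟨hp, h⟩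

end part8

section part9
open Asymptotics

/-- far part -/
def FR (R₁ R₂ T : ℝ) : Set Spc := Reg R₁ R₂ ∩ {p | T ≤ p.1}

theorem sd_pos {p : Spc} (h : 0 < p.1) : 0 < sd p := by unfold sd; positivity

theorem sd_O1 (R₁ R₂ : ℝ) : sd =O[𝓟 (Reg R₁ R₂)] (fun _ => (1:ℝ)) := by
  refine isBigO_principal.2 ⟨1, fun p hp => ?_⟩
  have h := hp.1
  rw [Real.norm_eq_abs, abs_of_pos (sd_pos h), norm_one, mul_one]
  unfold sd
  exact inv_le_one_of_one_le₀ (by linarith)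

theorem rinv_O {R₁ R₂ T : ℝ} (hT : 2 * |R₂| + 2 ≤ T) :
    (fun p => (rr p)⁻¹) =O[𝓟 (FR R₁ R₂ T)] sd := by
  refine isBigO_principal.2 ⟨2, fun p hp => ?_⟩
  obtain ⟨⟨h1, h2, h3, h4⟩, h5⟩ := hp
  have h5' : T ≤ p.1 := h5
  have := neg_abs_le R₂
  rw [Real.norm_eq_abs, abs_of_pos (by positivity), Real.norm_eq_abs, abs_of_pos (sd_pos h1)]
  unfold sd
  rw [← div_eq_mul_inv, inv_eq_one_div, div_le_div_iff₀ h4 (by linarith)]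
  linarith

theorem omg_O (α : Fin 4) (l : Filter Spc) : omg α =O[l] (fun _ => (1:ℝ)) :=
  IsBigO.of_bound 1 (Eventually.of_forall fun p => by simpa using abs_omg_le α p)

theorem nu_O (R₁ R₂ : ℝ) {f : Spc → ℝ} (hf : Continuous f) :
    (fun p => f (nu p)) =O[𝓟 (Reg R₁ R₂)] (fun _ => (1:ℝ)) := by
  have hb : Bornology.IsBounded (nu '' Reg R₁ R₂) := by
    refine (Metric.isBounded_closedBall (x := (0 : Spc)) (r := |R₁| + |R₂| + 1)).subset ?_
    rintro _ ⟨p, ⟨h1, h2, h3, h4⟩, rfl⟩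
    rw [mem_closedBall_zero_iff, Prod.norm_def]
    have := le_abs_self R₁
    have := neg_abs_le R₂
    have := abs_nonneg R₁
    have := abs_nonneg R₂
    refine max_le ?_ ?_
    · rw [Real.norm_eq_abs, abs_le]
      unfold nu
      constructor <;> simp only <;> linarith
    · have : ‖(nu p).2‖ = 1 := by
        unfold nu
        simp only
        rw [norm_smul, norm_inv, Real.norm_eq_abs, abs_of_pos h4]
        exact inv_mul_cancel₀ h4.ne'
      rw [this]; linarith
  obtain ⟨B, -, hB⟩ := bdd_of_cont hb hf
  exact isBigO_principal.2 ⟨B, fun y hy => by simpa using hB _ ⟨y, hy, rfl⟩⟩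

theorem FR_le (R₁ R₂ T : ℝ) : 𝓟 (FR R₁ R₂ T) ≤ 𝓟 (Reg R₁ R₂) := principal_mono.2 fun _ h => h.1

section prof
variable {N : ℕ} {F : ℝ → EuclideanSpace ℝ (Fin 3) → Fin N → ℝ}
    (hF : ContDiff ℝ 1 fun z : ℝ × EuclideanSpace ℝ (Fin 3) => F z.1 z.2) (I : Fin N)
    {R₁ R₂ T : ℝ} (hT : 2 * |R₂| + 2 ≤ T)
include hF hT

theorem FI_O : (fun p => F (nu p).1 (nu p).2 I) =O[𝓟 (FR R₁ R₂ T)] (fun _ => (1:ℝ)) :=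
  (nu_O R₁ R₂ (f := fun z : Spc => F z.1 z.2 I) ((contDiff_pi.1 hF) I).continuous).mono (FR_le _ _ _)

theorem FIp_O (μ : Fin 4) : (fun p => pd μ (fun z : Spc => F z.1 z.2 I) (nu p))
    =O[𝓟 (FR R₁ R₂ T)] (fun _ => (1:ℝ)) :=
  (nu_O R₁ R₂ (pd_continuous ((contDiff_pi.1 hF) I) μ)).mono (FR_le _ _ _)

omit hF in
theorem rinv_O1 : (fun p => (rr p)⁻¹) =O[𝓟 (FR R₁ R₂ T)] (fun _ => (1:ℝ)) :=
  (rinv_O hT).trans ((sd_O1 R₁ R₂).mono (FR_le _ _ _))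

theorem gF_O : gF F I =O[𝓟 (FR R₁ R₂ T)] sd := by
  have := (rinv_O (R₁ := R₁) hT).mul (FI_O (R₁ := R₁) hF I hT)
  simp only [mul_one] at this
  exact this

omit hF in
theorem dnu_O (α μ : Fin 4) (hμ : μ ≠ 0) : (fun p => dnu α p μ) =O[𝓟 (FR R₁ R₂ T)] sd := by
  have h1 : (fun p => (rr p)⁻¹ * ((if α = μ then 1 else 0) - omg α p * omg μ p))
      =O[𝓟 (FR R₁ R₂ T)] (fun p => sd p * 1) := by
    refine (rinv_O hT).mul ?_
    have := (omg_O α (𝓟 (FR R₁ R₂ T))).mul (omg_O μ (𝓟 (FR R₁ R₂ T)))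
    simp only [one_mul] at this
    exact (isBigO_const_const _ one_ne_zero _).sub this
  simp only [mul_one] at h1
  refine h1.congr_left fun p => ?_
  rw [dnu, if_neg hμ]
  conv_lhs => rw [show omg μ p = crd μ p / rr p from if_neg hμ]
  ring

theorem ang_O (α : Fin 4) : (fun p => ∑ i : Fin 3, dnu α p i.succ *
    pd i.succ (fun z : Spc => F z.1 z.2 I) (nu p)) =O[𝓟 (FR R₁ R₂ T)] sd := by
  have h : ∀ i : Fin 3, (fun p => dnu α p i.succ *
    pd i.succ (fun z : Spc => F z.1 z.2 I) (nu p)) =O[𝓟 (FR R₁ R₂ T)] sd := by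
    intro i
    have := (dnu_O (R₁ := R₁) hT α i.succ (Fin.succ_ne_zero i)).mul
      (FIp_O (R₁ := R₁) hF I hT i.succ)
    simp only [mul_one] at this
    exact this
  exact IsBigO.fun_sum (fun i _ => h i)

theorem pdgF_O (α : Fin 4) : pd α (gF F I) =O[𝓟 (FR R₁ R₂ T)] sd := by
  have e : ∀ p ∈ FR R₁ R₂ T, pd α (gF F I) p = (rr p)⁻¹ * (-((rr p)⁻¹ * (omg α p * F (nu p).1 (nu p).2 I)) +
      ((omg α p - (if α = 0 then 1 else 0)) * pd 0 (fun z : Spc => F z.1 z.2 I) (nu p) +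
      ∑ i : Fin 3, dnu α p i.succ * pd i.succ (fun z : Spc => F z.1 z.2 I) (nu p))) := by
    intro p hp
    rw [(hasPd_gF hF I α hp.1.2.2.2).2, Fin.sum_univ_succ]
    rw [show dnu α p 0 = omg α p - (if α = 0 then 1 else 0) from if_pos rfl]
    ring
  have h1 := (omg_O α (𝓟 (FR R₁ R₂ T))).mul (FI_O (R₁ := R₁) hF I hT)
  have h2 := (rinv_O1 (R₁ := R₁) hT).mul h1
  have h3 := ((omg_O α (𝓟 (FR R₁ R₂ T))).sub
    (isBigO_const_const (if α = 0 then (1:ℝ) else 0) one_ne_zero _)).mul (FIp_O (R₁ := R₁) hF I hT 0)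
  have h4 := (ang_O (R₁ := R₁) hF I hT α).trans ((sd_O1 R₁ R₂).mono (FR_le _ _ _))
  simp only [mul_one] at h2 h3
  have h5 := (rinv_O (R₁ := R₁) hT).mul (h2.neg_left.add (h3.add h4))
  simp only [mul_one] at h5
  exact h5.congr' (eventually_principal.2 fun p hp => (e p hp).symm) (Eventually.of_forall fun _ => rfl)

theorem goodgF_O (α : Fin 4) (hα : α ≠ 0) :
    (fun p => pd α (gF F I) p + omg α p * pd 0 (gF F I) p) =O[𝓟 (FR R₁ R₂ T)] (fun p => sd p ^ 2) := by
  have e : ∀ p ∈ FR R₁ R₂ T, pd α (gF F I) p + omg α p * pd 0 (gF F I) p =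
      (rr p)⁻¹ * (-((rr p)⁻¹ * (omg α p * F (nu p).1 (nu p).2 I)) +
      ((∑ i : Fin 3, dnu α p i.succ * pd i.succ (fun z : Spc => F z.1 z.2 I) (nu p)) +
      omg α p * ∑ i : Fin 3, dnu 0 p i.succ * pd i.succ (fun z : Spc => F z.1 z.2 I) (nu p))) := by
    intro p hp
    rw [(hasPd_gF hF I α hp.1.2.2.2).2, (hasPd_gF hF I 0 hp.1.2.2.2).2, Fin.sum_univ_succ (n := 3),
      Fin.sum_univ_succ (n := 3)]
    rw [show dnu α p 0 = omg α p - (if α = 0 then 1 else 0) from if_pos rfl,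
      show dnu 0 p 0 = omg 0 p - (if (0 : Fin 4) = 0 then 1 else 0) from if_pos rfl,
      show omg 0 p = 0 from if_pos rfl, if_neg hα, if_pos rfl]
    ring
  have h1 := (omg_O α (𝓟 (FR R₁ R₂ T))).mul (FI_O (R₁ := R₁) hF I hT)
  have h2 := (rinv_O (R₁ := R₁) hT).mul h1
  have h3 := (omg_O α (𝓟 (FR R₁ R₂ T))).mul (ang_O (R₁ := R₁) hF I hT 0)
  have h4 := (ang_O (R₁ := R₁) hF I hT α)
  simp only [mul_one, one_mul] at h2 h3
  have h5 := (rinv_O (R₁ := R₁) hT).mul (h2.neg_left.add (h4.add h3))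
  simp only [← sq] at h5
  exact h5.congr' (eventually_principal.2 fun p hp => (e p hp).symm) (Eventually.of_forall fun _ => rfl)
end prof

theorem rad_O {N : ℕ} {u : Fin N → Spc → ℝ} {F : ℝ → EuclideanSpace ℝ (Fin 3) → Fin N → ℝ}
    (hF : IsRadiationField u F) (R₁ R₂ : ℝ) : ∃ T0, 2 * |R₂| + 2 ≤ T0 ∧ ∀ T, T0 ≤ T → ∀ I,
      (fun p => Z1sum (radProfile u F I) p) =O[𝓟 (FR R₁ R₂ T)] (fun p => sd p ^ 2) := by
  obtain ⟨-, -, C, c, hC, hc, h⟩ := hF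
  refine ⟨max (2 * |R₂| + 2) (2 * c), le_max_left _ _, fun T hT I => ?_⟩
  have hT1 := (le_max_left _ _).trans hT
  have hT2 := (le_max_right _ _).trans hT
  refine isBigO_principal.2 ⟨C * 4 * Real.sqrt (1 + (|R₁| + |R₂|) ^ 2), fun p hp => ?_⟩
  obtain ⟨⟨h1, h2, h3, h4⟩, h5⟩ := hp
  have h5' : T ≤ p.1 := h5
  have a1 := le_abs_self R₁
  have a2 := neg_abs_le R₂
  have a3 := abs_nonneg R₁
  have a4 := abs_nonneg R₂
  have hp := h p (by linarith) (by linarith)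
  have hnn : ∀ J, 0 ≤ Z1sum (radProfile u F J) p := fun J =>
    (abs_nonneg _).trans (Z1_terms (radProfile u F J) p).1
  have hI := Finset.single_le_sum (f := fun J => Z1sum (radProfile u F J) p)
    (fun J _ => hnn J) (Finset.mem_univ I)
  rw [Real.norm_eq_abs, abs_of_nonneg (hnn I), Real.norm_eq_abs, abs_of_pos (pow_pos (sd_pos h1) 2)]
  refine (hI.trans hp).trans ?_
  have hq : (rr p - p.1) ^ 2 ≤ (|R₁| + |R₂|) ^ 2 := sq_le_sq' (by linarith) (by linarith)
  have ht : (p.1 ^ 2)⁻¹ ≤ 4 * sd p ^ 2 := by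
    unfold sd
    rw [inv_pow, ← div_eq_mul_inv, inv_eq_one_div, div_le_div_iff₀ (by positivity) (by positivity)]
    nlinarith
  calc _ ≤ C * (4 * sd p ^ 2) * Real.sqrt (1 + (|R₁| + |R₂|) ^ 2) := by gcongr
    _ = _ := by ring

section asy
variable {N : ℕ} {u v : Fin N → Spc → ℝ} {F F' : ℝ → EuclideanSpace ℝ (Fin 3) → Fin N → ℝ}
  (hu : ∀ I, ContDiff ℝ (⊤ : ℕ∞) (u I)) (hv : ∀ I, ContDiff ℝ (⊤ : ℕ∞) (v I))
  (hF : IsRadiationField u F) (hF' : IsRadiationField v F') {R₁ R₂ : ℝ} (I : Fin N)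

include hu hF in
theorem pd_radProfile (α : Fin 4) {p : Spc} (hp : 0 < rr p) :
    pd α (radProfile u F I) p = pd α (u I) p - pd α (gF F I) p :=
  ((HasPd.of_diff (smooth_diff (hu I) p)).sub
    (HasPd.of_diff (hasPd_gF hF.1 I α hp).1)).2

theorem sd2_O (R₁ R₂ T : ℝ) : (fun p => sd p ^ 2) =O[𝓟 (FR R₁ R₂ T)] sd := by
  have h := ((sd_O1 R₁ R₂).mono (FR_le R₁ R₂ T))
  have := h.mul (isBigO_refl sd (𝓟 (FR R₁ R₂ T)))
  simpa [sq] using this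

theorem of_Z1 {f : Spc → ℝ} {g : Spc → ℝ} {T : ℝ}
    (h : (fun p => Z1sum g p) =O[𝓟 (FR R₁ R₂ T)] (fun p => sd p ^ 2))
    (hf : ∀ p ∈ FR R₁ R₂ T, |f p| ≤ Z1sum g p) : f =O[𝓟 (FR R₁ R₂ T)] (fun p => sd p ^ 2) := by
  refine IsBigO.trans (isBigO_principal.2 ⟨1, fun p hp => ?_⟩) h
  rw [one_mul]
  exact (hf p hp).trans (le_abs_self _)

include hu hF in
theorem A1 (R₁ R₂ : ℝ) : u I =O[𝓟 (Reg R₁ R₂)] sd := by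
  obtain ⟨T, hT, h⟩ := rad_O hF R₁ R₂
  have h0 := h T le_rfl I
  have h1 := (of_Z1 (f := radProfile u F I) h0 fun p _ => (Z1_terms _ p).1).trans (sd2_O _ _ _)
  have h2 := h1.add (gF_O (R₁ := R₁) hF.1 I hT)
  have h3 := glue (f := u I) (T := T) (R₁ := R₁) (R₂ := R₂) 1
    (bigO_bdd (near_bdd R₁ R₂ T) (hu I).continuous) (by
      simp only [pow_one]
      exact h2.congr_left fun p => by simp [radProfile, gF])
  simpa using h3

include hu hF in
theorem A1' (R₁ R₂ : ℝ) (α : Fin 4) : pd α (u I) =O[𝓟 (Reg R₁ R₂)] sd := by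
  obtain ⟨T, hT, h⟩ := rad_O hF R₁ R₂
  have h0 := h T le_rfl I
  have h1 := (of_Z1 (f := pd α (radProfile u F I)) h0 fun p _ => (Z1_terms _ p).2.1 α).trans (sd2_O _ _ _)
  have h2 := h1.add (pdgF_O (R₁ := R₁) hF.1 I hT α)
  have h3 := glue (f := pd α (u I)) (T := T) (R₁ := R₁) (R₂ := R₂) 1
    (bigO_bdd (near_bdd R₁ R₂ T) (pd_contDiff (hu I) α).continuous) (by
      simp only [pow_one]
      refine h2.congr' (eventually_principal.2 fun p hp => ?_) (Eventually.of_forall fun _ => rfl)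
      simp only
      rw [pd_radProfile hu hF I α hp.1.2.2.2]; ring)
  simpa using h3

include hu hF in
theorem A2 (R₁ R₂ : ℝ) (α : Fin 4) (hα : α ≠ 0) :
    (fun p => pd α (u I) p + omg α p * pd 0 (u I) p) =O[𝓟 (Reg R₁ R₂)] (fun p => sd p ^ 2) := by
  obtain ⟨T, hT, h⟩ := rad_O hF R₁ R₂
  have h0 := h T le_rfl I
  have h1 := (of_Z1 (f := pd α (radProfile u F I)) h0 fun p _ => (Z1_terms _ p).2.1 α)
  have h1' := (omg_O α (𝓟 (FR R₁ R₂ T))).mul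
    (of_Z1 (f := pd 0 (radProfile u F I)) h0 fun p _ => (Z1_terms _ p).2.1 0)
  simp only [one_mul] at h1'
  have h2 := (h1.add h1').add (goodgF_O (R₁ := R₁) hF.1 I hT α hα)
  refine glue (T := T) 2 ?_ ?_
  · have b1 := bigO_bdd (near_bdd R₁ R₂ T) (pd_contDiff (hu I) α).continuous
    have b2 := (omg_O α _).mul (bigO_bdd (near_bdd R₁ R₂ T) (pd_contDiff (hu I) 0).continuous)
    simp only [mul_one] at b2
    exact b1.add b2
  · refine h2.congr' (eventually_principal.2 fun p hp => ?_) (Eventually.of_forall fun _ => rfl)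
    simp only
    rw [pd_radProfile hu hF I α hp.1.2.2.2, pd_radProfile hu hF I 0 hp.1.2.2.2]; ring

theorem gF_eq (hrad : ∀ (q : ℝ) (ω : EuclideanSpace ℝ (Fin 3)), ‖ω‖ = 1 → R₂ < q → F q ω = F' q ω)
    {p : Spc} (hp : 0 < rr p) (hq : R₂ < rr p - p.1) : gF F I p = gF F' I p := by
  unfold gF
  rw [hrad _ _ ?_ hq]
  rw [norm_smul, norm_inv, Real.norm_eq_abs, abs_of_pos hp]
  exact inv_mul_cancel₀ hp.ne'

theorem pd_gF_eq (hrad : ∀ (q : ℝ) (ω : EuclideanSpace ℝ (Fin 3)), ‖ω‖ = 1 → R₂ < q → F q ω = F' q ω)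
    {p : Spc} (hp : 0 < rr p) (hq : R₂ < rr p - p.1) (α : Fin 4) :
    pd α (gF F I) p = pd α (gF F' I) p := by
  refine pd_congr ?_ α
  have h1 : ∀ᶠ z in 𝓝 p, 0 < rr z := rr_cont.continuousAt.eventually (lt_mem_nhds hp)
  have h2 : ∀ᶠ z in 𝓝 p, R₂ < rr z - z.1 :=
    (rr_cont.sub continuous_fst).continuousAt.eventually (lt_mem_nhds hq)
  filter_upwards [h1, h2] with z a b
  exact gF_eq I hrad a b

include hu hv hF hF' in
theorem A3 (R₁ R₂ : ℝ) (hrad : ∀ (q : ℝ) (ω : EuclideanSpace ℝ (Fin 3)), ‖ω‖ = 1 → R₂ < q → F q ω = F' q ω) :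
    dif u v I =O[𝓟 (Reg R₁ R₂)] (fun p => sd p ^ 2) ∧
    (∀ α, pd α (dif u v I) =O[𝓟 (Reg R₁ R₂)] (fun p => sd p ^ 2)) ∧
    Sc (dif u v I) =O[𝓟 (Reg R₁ R₂)] (fun p => sd p ^ 2) ∧
    (∀ i, Lor i (dif u v I) =O[𝓟 (Reg R₁ R₂)] (fun p => sd p ^ 2)) ∧
    Rot 0 1 (dif u v I) =O[𝓟 (Reg R₁ R₂)] (fun p => sd p ^ 2) ∧
    Rot 0 2 (dif u v I) =O[𝓟 (Reg R₁ R₂)] (fun p => sd p ^ 2) ∧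
    Rot 1 2 (dif u v I) =O[𝓟 (Reg R₁ R₂)] (fun p => sd p ^ 2) := by
  obtain ⟨T1, hT1, h1⟩ := rad_O hF R₁ R₂
  obtain ⟨T2, hT2, h2⟩ := rad_O hF' R₁ R₂
  have k1 := h1 (max T1 T2) (le_max_left _ _) I
  have k2 := h2 (max T1 T2) (le_max_right _ _) I
  set T := max T1 T2 with hT
  have e0 : ∀ p ∈ FR R₁ R₂ T, radProfile u F I p - radProfile v F' I p = dif u v I p := by
    intro p hp
    have := gF_eq (F := F) (F' := F') I hrad hp.1.2.2.2 hp.1.2.1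
    simp only [radProfile, dif, gF] at this ⊢
    linarith
  have e1 : ∀ p ∈ FR R₁ R₂ T, ∀ α, pd α (dif u v I) p =
      pd α (radProfile u F I) p - pd α (radProfile v F' I) p := by
    intro p hp α
    have := pd_gF_eq (F := F) (F' := F') I hrad hp.1.2.2.2 hp.1.2.1 α
    rw [pd_radProfile hu hF I α hp.1.2.2.2, pd_radProfile hv hF' I α hp.1.2.2.2, pd_dif hu hv]
    linarith
  have key : ∀ L : (Spc → ℝ) → Spc → ℝ, (∀ g p, |L g p| ≤ Z1sum g p) →
      (∀ p ∈ FR R₁ R₂ T, L (radProfile u F I) p - L (radProfile v F' I) p = L (dif u v I) p) →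
      Continuous (L (dif u v I)) → L (dif u v I) =O[𝓟 (Reg R₁ R₂)] (fun p => sd p ^ 2) := by
    intro L hL he hc
    refine glue (T := T) 2 (bigO_bdd (near_bdd R₁ R₂ T) hc) ?_
    have := (of_Z1 (f := L (radProfile u F I)) k1 fun p _ => hL _ p).sub
      (of_Z1 (f := L (radProfile v F' I)) k2 fun p _ => hL _ p)
    exact this.congr' (eventually_principal.2 he) (Eventually.of_forall fun _ => rfl)
  have cp : ∀ α, Continuous (pd α (dif u v I)) := fun α => (pd_contDiff (dif_contDiff hu hv I) α).continuous
  have cx : ∀ i : Fin 3, Continuous (fun p : Spc => p.2 i) := fun i => by fun_prop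
  refine ⟨?_, fun α => ?_, ?_, fun i => ?_, ?_, ?_, ?_⟩
  · exact key (fun g => g) (fun g p => (Z1_terms g p).1) e0 (dif_contDiff hu hv I).continuous
  · exact key (pd α) (fun g p => (Z1_terms g p).2.1 α) (fun p hp => (e1 p hp α).symm) (cp α)
  · refine key Sc (fun g p => (Z1_terms g p).2.2.1) (fun p hp => ?_) ?_
    · simp only [Sc, dt, dxi, e1 p hp, Fin.sum_univ_three]; ring
    · exact (continuous_fst.mul (cp 0)).add (continuous_finset_sum _ fun i _ => (cx i).mul (cp _))
  · refine key (Lor i) (fun g p => (Z1_terms g p).2.2.2.1 i) (fun p hp => ?_) ?_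
    · simp only [Lor, dt, dxi, e1 p hp]; ring
    · exact ((cx i).mul (cp 0)).add (continuous_fst.mul (cp _))
  · refine key (Rot 0 1) (fun g p => (Z1_terms g p).2.2.2.2.1) (fun p hp => ?_) ?_
    · simp only [Rot, dxi, e1 p hp]; ring
    · exact ((cx _).mul (cp _)).sub ((cx _).mul (cp _))
  · refine key (Rot 0 2) (fun g p => (Z1_terms g p).2.2.2.2.2.1) (fun p hp => ?_) ?_
    · simp only [Rot, dxi, e1 p hp]; ring
    · exact ((cx _).mul (cp _)).sub ((cx _).mul (cp _))
  · refine key (Rot 1 2) (fun g p => (Z1_terms g p).2.2.2.2.2.2) (fun p hp => ?_) ?_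
    · simp only [Rot, dxi, e1 p hp]; ring
    · exact ((cx _).mul (cp _)).sub ((cx _).mul (cp _))
end asy

end part9

section part10
open Asymptotics

section cubic
variable {E : Type*} [NormedAddCommGroup E] [NormedSpace ℝ E] [FiniteDimensional ℝ E]

omit [FiniteDimensional ℝ E] in
theorem cubic_D2 {R : E → ℝ} (hR : ContDiff ℝ (⊤ : ℕ∞) R) {C : ℝ}
    (h3 : ∀ᶠ z in 𝓝 0, |R z| ≤ C * ‖z‖ ^ 3) :
    fderiv ℝ R 0 = 0 ∧ fderiv ℝ (fderiv ℝ R) 0 = 0 := by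
  have hR0 : R 0 = 0 := by
    have := h3.self_of_nhds
    simp at this; exact this
  have hO : R =O[𝓝 0] (fun z => ‖z‖ ^ 3) := IsBigO.of_bound C (h3.mono fun z hz => by simpa using hz)
  have h1 : HasFDerivAt R (0 : E →L[ℝ] ℝ) 0 := by
    rw [hasFDerivAt_iff_isLittleO_nhds_zero]
    simp only [zero_add, hR0, sub_zero, ContinuousLinearMap.zero_apply]
    refine hO.trans_isLittleO ?_
    exact IsLittleO.of_norm_right (isLittleO_pow_id (by norm_num : 1 < 3) |>.comp_tendsto
      (tendsto_norm_zero) |>.congr_left (fun _ => rfl))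
  refine ⟨h1.fderiv, ?_⟩
  have hDR : ContDiff ℝ (⊤ : ℕ∞) (fderiv ℝ R) := hR.fderiv_right (by simp)
  set B := fderiv ℝ (fderiv ℝ R) 0 with hB
  have hBd : HasFDerivAt (fderiv ℝ R) B 0 := (hDR.differentiable (by simp) 0).hasFDerivAt
  have hsym : ∀ a b, B a b = B b a := fun a b =>
    second_derivative_symmetric (fun y => (hR.differentiable (by simp) y).hasFDerivAt) hBd a b
  have hdiag : ∀ e, B e e = 0 := by
    intro e
    by_contra hne
    have hpos : 0 < |B e e| := abs_pos.2 hne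
    rw [hasFDerivAt_iff_isLittleO_nhds_zero] at hBd
    simp only [zero_add, h1.fderiv, sub_zero] at hBd
    have ht : Tendsto (fun s : ℝ => s • e) (𝓝 0) (𝓝 0) := by
      have : Continuous fun s : ℝ => s • e := by fun_prop
      simpa using this.tendsto 0
    set η := |B e e| / 8 / (‖e‖ ^ 2 + 1) with hη
    have hηp : 0 < η := by positivity
    have hb := (ht.eventually (hBd.def hηp))
    have hc := ht.eventually h3
    obtain ⟨δ, hδ, hball⟩ := Metric.eventually_nhds_iff.1 (hb.and hc)
    set D := |C| * ‖e‖ ^ 3 with hD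
    set s := min (δ / 2) (|B e e| / 8 / (D + 1)) with hs
    have hsp : 0 < s := by
      refine lt_min (by positivity) (by positivity)
    have hsδ : s < δ := (min_le_left _ _).trans_lt (by linarith)
    have hsD : s * (D + 1) ≤ |B e e| / 8 := by
      have := min_le_right (δ / 2) (|B e e| / 8 / (D + 1))
      rw [← hs] at this
      rwa [le_div_iff₀ (by positivity)] at this
    have hg : ∀ t ∈ Icc 0 s, HasDerivWithinAt (fun t : ℝ => R (t • e) - t ^ 2 / 2 * B e e)
        (fderiv ℝ R (t • e) e - t * B e e) (Icc 0 s) t := by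
      intro t _
      have a1 : HasDerivAt (fun t : ℝ => t • e) e t := by
        simpa using (hasDerivAt_id t).smul_const e
      have a2 := (hR.differentiable (by simp) (t • e)).hasFDerivAt.comp_hasDerivAt t a1
      have a3 : HasDerivAt (fun t : ℝ => t ^ 2 / 2 * B e e) (t * B e e) t := by
        have := (((hasDerivAt_id t).pow 2).div_const 2).mul_const (B e e)
        refine this.congr_deriv ?_
        simp
      exact (a2.sub a3).hasDerivWithinAt
    have hbd : ∀ t ∈ Icc 0 s, ‖fderiv ℝ R (t • e) e - t * B e e‖ ≤ η * ‖e‖ ^ 2 * s := by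
      intro t ht
      have hh := (hball (y := t) (by rw [Real.dist_eq, sub_zero, abs_of_nonneg ht.1]; linarith [ht.2])).1
      have e1 : fderiv ℝ R (t • e) e - t * B e e = (fderiv ℝ R (t • e) - B (t • e)) e := by
        simp
      rw [e1]
      refine (ContinuousLinearMap.le_opNorm _ _).trans ?_
      refine (mul_le_mul_of_nonneg_right hh (norm_nonneg _)).trans ?_
      rw [norm_smul, Real.norm_eq_abs, abs_of_nonneg ht.1]
      calc _ = η * ‖e‖ ^ 2 * t := by ring
        _ ≤ _ := mul_le_mul_of_nonneg_left ht.2 (by positivity)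
    have hm := (convex_Icc (0:ℝ) s).norm_image_sub_le_of_norm_hasDerivWithin_le hg hbd
      (left_mem_Icc.2 hsp.le) (right_mem_Icc.2 hsp.le)
    simp only [zero_smul, hR0] at hm
    have hr := (hball (y := s) (by rw [Real.dist_eq, sub_zero, abs_of_pos hsp]; linarith)).2
    rw [norm_smul, Real.norm_eq_abs, abs_of_pos hsp] at hr
    have hr2 : |R (s • e)| ≤ s ^ 2 * (|B e e| / 8) := by
      refine hr.trans ?_
      calc _ = C * (s ^ 3 * ‖e‖ ^ 3) := by ring
        _ ≤ |C| * (s ^ 3 * ‖e‖ ^ 3) := mul_le_mul_of_nonneg_right (le_abs_self _) (by positivity)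
        _ = s ^ 2 * (s * D) := by rw [hD]; ring
        _ ≤ _ := by gcongr; nlinarith
    have hη2 : η * ‖e‖ ^ 2 ≤ |B e e| / 8 := by
      have : η * (‖e‖ ^ 2 + 1) = |B e e| / 8 := by rw [hη]; field_simp
      nlinarith
    rw [Real.norm_eq_abs, Real.norm_eq_abs, sub_zero, abs_of_pos hsp] at hm
    have hm2 : |R (s • e) - s ^ 2 / 2 * B e e| ≤ s ^ 2 * (|B e e| / 8) := by
      have : R (s • e) - s ^ 2 / 2 * B e e - (0 - 0 ^ 2 / 2 * B e e) = R (s • e) - s ^ 2 / 2 * B e e := by ring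
      rw [this] at hm
      refine hm.trans ?_
      calc _ = s ^ 2 * (η * ‖e‖ ^ 2) := by ring
        _ ≤ _ := by gcongr
    have hf : |s ^ 2 / 2 * B e e| ≤ |R (s • e)| + |R (s • e) - s ^ 2 / 2 * B e e| := by
      have := abs_sub (R (s • e)) (R (s • e) - s ^ 2 / 2 * B e e)
      rwa [sub_sub_cancel] at this
    rw [abs_mul, abs_of_pos (by positivity : 0 < s ^ 2 / 2)] at hf
    nlinarith [mul_pos (pow_pos hsp 2) hpos]
  ext a b
  have h1 := hdiag (a + b)
  simp only [map_add, ContinuousLinearMap.add_apply, hdiag] at h1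
  have := hsym a b
  simp
  linarith

theorem cubic_lip {R : E → ℝ} (hR : ContDiff ℝ (⊤ : ℕ∞) R) {C : ℝ}
    (h3 : ∀ᶠ z in 𝓝 0, |R z| ≤ C * ‖z‖ ^ 3) (M : ℝ) (hM : 0 ≤ M) :
    ∃ L, 0 ≤ L ∧ ∀ ρ ≤ M, ∀ z z', ‖z‖ ≤ ρ → ‖z'‖ ≤ ρ → |R z - R z'| ≤ L * ρ ^ 2 * ‖z - z'‖ := by
  obtain ⟨d1, d2⟩ := cubic_D2 hR h3
  have hDR : ContDiff ℝ (⊤ : ℕ∞) (fderiv ℝ R) := hR.fderiv_right (by simp)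
  have hDDR : ContDiff ℝ (⊤ : ℕ∞) (fderiv ℝ (fderiv ℝ R)) := hDR.fderiv_right (by simp)
  obtain ⟨L, hL⟩ := (hDDR.contDiffOn (s := Metric.closedBall 0 M)).exists_lipschitzOnWith
    (by simp) (convex_closedBall _ _) (isCompact_closedBall _ _)
  have k2 : ∀ z, ‖z‖ ≤ M → ‖fderiv ℝ (fderiv ℝ R) z‖ ≤ L * ‖z‖ := by
    intro z hz
    have := hL.norm_sub_le (x := z) (y := 0) (by simpa using hz) (by simpa using hM)
    simpa [d2] using this
  have k1 : ∀ ρ ≤ M, ∀ z, ‖z‖ ≤ ρ → ‖fderiv ℝ R z‖ ≤ L * ρ ^ 2 := by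
    intro ρ hρ z hz
    have := (convex_closedBall (0 : E) ρ).norm_image_sub_le_of_norm_fderiv_le (f := fderiv ℝ R)
      (C := L * ρ) (𝕜 := ℝ)
      (fun y _ => hDR.differentiable (by simp) y)
      (fun y hy => by
        have hy' : ‖y‖ ≤ ρ := by simpa using hy
        exact (k2 y (hy'.trans hρ)).trans (mul_le_mul_of_nonneg_left hy' L.2))
      (x := 0) (y := z) (by simpa using (norm_nonneg z).trans hz) (by simpa using hz)
    rw [d1, sub_zero, sub_zero] at this
    refine this.trans ?_
    have h0 : 0 ≤ ρ := (norm_nonneg z).trans hz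
    calc _ ≤ L * ρ * ρ := mul_le_mul_of_nonneg_left hz (mul_nonneg L.2 h0)
      _ = _ := by ring
  refine ⟨L, L.2, fun ρ hρ z z' hz hz' => ?_⟩
  exact (convex_closedBall (0 : E) ρ).norm_image_sub_le_of_norm_fderiv_le (f := R) (𝕜 := ℝ)
      (fun y _ => hR.differentiable (by simp) y)
      (fun y hy => k1 ρ hρ y (by simpa using hy))
      (x := z') (y := z) (by simpa using hz') (by simpa using hz)
end cubic

theorem null_alg {A : Fin 4 → Fin 4 → ℝ} {h b c : Fin 4 → ℝ} {M W W' B B' : ℝ}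
    (hA : ∀ α β, |A α β| ≤ M) (hnull : ∑ α, ∑ β, A α β * h α * h β = 0) (hh : ∀ α, |h α| ≤ 1)
    (hW : |c 0| ≤ W) (hW' : ∀ α, |c α + h α * c 0| ≤ W') (hB : ∀ α, |b α| ≤ B)
    (hB' : ∀ α, |b α + h α * b 0| ≤ B') :
    |∑ α, ∑ β, A α β * c α * b β| ≤ 16 * (M * (W * B' + W' * B)) := by
  have e : ∑ α, ∑ β, A α β * c α * b β = ∑ α, ∑ β, (A α β * ((-(h α * c 0)) * (b β + h β * b 0) +
      (c α + h α * c 0) * b β)) := by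
    have : ∑ α, ∑ β, A α β * c α * b β = ∑ α, ∑ β, (A α β * ((-(h α * c 0)) * (b β + h β * b 0) +
      (c α + h α * c 0) * b β)) + (c 0 * b 0) * ∑ α, ∑ β, A α β * h α * h β := by
      simp only [Finset.mul_sum, ← Finset.sum_add_distrib]
      refine Finset.sum_congr rfl fun α _ => Finset.sum_congr rfl fun β _ => ?_
      ring
    rw [this, hnull]; ring
  rw [e]
  have hM : 0 ≤ M := (abs_nonneg _).trans (hA 0 0)
  have hW0 : 0 ≤ W := (abs_nonneg _).trans hW
  have hW'0 : 0 ≤ W' := (abs_nonneg _).trans (hW' 0)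
  have ht : ∀ α β, |A α β * ((-(h α * c 0)) * (b β + h β * b 0) + (c α + h α * c 0) * b β)| ≤
      M * (W * B' + W' * B) := by
    intro α β
    rw [abs_mul]
    refine mul_le_mul (hA α β) ?_ (abs_nonneg _) hM
    refine (abs_add_le _ _).trans (add_le_add ?_ ?_)
    · rw [abs_mul, abs_neg, abs_mul]
      refine mul_le_mul ?_ (hB' β) (abs_nonneg _) hW0
      calc _ ≤ 1 * W := mul_le_mul (hh α) hW (abs_nonneg _) zero_le_one
        _ = W := one_mul _
    · rw [abs_mul]
      exact mul_le_mul (hW' α) (hB β) (abs_nonneg _) hW'0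
  calc _ ≤ ∑ α : Fin 4, ∑ β : Fin 4, M * (W * B' + W' * B) :=
        (Finset.abs_sum_le_sum_abs _ _).trans (Finset.sum_le_sum fun α _ =>
          (Finset.abs_sum_le_sum_abs _ _).trans (Finset.sum_le_sum fun β _ => ht α β))
    _ = _ := by simp; ring

end part10

section part11
open Asymptotics

theorem unifO {ι : Type*} [Fintype ι] {S : Set Spc} {f : ι → Spc → ℝ} {g : Spc → ℝ}
    (h : ∀ i, f i =O[𝓟 S] g) : ∃ C, 0 ≤ C ∧ ∀ i, ∀ p ∈ S, |f i p| ≤ C * |g p| := by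
  choose c hc using fun i => isBigO_principal.1 (h i)
  refine ⟨∑ i, |c i|, Finset.sum_nonneg fun i _ => abs_nonneg _, fun i p hp => ?_⟩
  refine (hc i p hp).trans (mul_le_mul_of_nonneg_right ?_ (abs_nonneg _))
  exact (le_abs_self _).trans (Finset.single_le_sum (f := fun i => |c i|)
    (fun i _ => abs_nonneg _) (Finset.mem_univ i))

/-- the null covector -/
def hat (α : Fin 4) (p : Spc) : ℝ := if α = 0 then -1 else omg α p

theorem abs_hat_le (α : Fin 4) (p : Spc) : |hat α p| ≤ 1 := by
  unfold hat
  split_ifs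
  · simp
  · exact abs_omg_le α p

theorem hat_eq {p : Spc} (α : Fin 4) : hatSph ((rr p)⁻¹ • p.2) α = hat α p := by
  refine Fin.cases ?_ (fun i => ?_) α
  · simp [hatSph, hat]
  · have : crd i.succ p = p.2 i := rfl
    simp [hatSph, hat, omg, this]
    ring

/-- quadratic part -/
def quad {N : ℕ} (A : Fin N → Fin N → Fin N → Fin 4 → Fin 4 → ℝ) (I : Fin N)
    (z : (Fin N → ℝ) × (Fin N → Fin 4 → ℝ)) : ℝ :=
  ∑ J : Fin N, ∑ K : Fin N, ∑ α : Fin 4, ∑ β : Fin 4, A I J K α β * z.2 J α * z.2 K β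

theorem rem_lip {N : ℕ} {Q : ((Fin N → ℝ) × (Fin N → Fin 4 → ℝ)) → Fin N → ℝ}
    {A : Fin N → Fin N → Fin N → Fin 4 → Fin 4 → ℝ} (hQ : HasNullForm Q A) (M : ℝ) (hM : 0 ≤ M) :
    ∃ L, 0 ≤ L ∧ ∀ I, ∀ ρ ≤ M, ∀ z z', ‖z‖ ≤ ρ → ‖z'‖ ≤ ρ →
      |(Q z I - quad A I z) - (Q z' I - quad A I z')| ≤ L * ρ ^ 2 * ‖z - z'‖ := by
  obtain ⟨h1, ⟨C, ε, hC, hε, h2⟩, -⟩ := hQ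
  have h : ∀ I, ∃ L, 0 ≤ L ∧ ∀ ρ ≤ M, ∀ z z', ‖z‖ ≤ ρ → ‖z'‖ ≤ ρ →
      |(Q z I - quad A I z) - (Q z' I - quad A I z')| ≤ L * ρ ^ 2 * ‖z - z'‖ := by
    intro I
    refine cubic_lip (R := fun z => Q z I - quad A I z) (C := C * 8) ?_ ?_ M hM
    · refine ((contDiff_pi.1 h1) I).sub ?_
      unfold quad
      fun_prop
    · have hb : ∀ᶠ z : (Fin N → ℝ) × (Fin N → Fin 4 → ℝ) in 𝓝 0, ‖z‖ < ε / 2 := by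
        have := continuous_norm.tendsto (0 : (Fin N → ℝ) × (Fin N → Fin 4 → ℝ))
        rw [norm_zero] at this
        exact this.eventually (gt_mem_nhds (by positivity))
      filter_upwards [hb] with z hz
      have n1 : ‖z.1‖ ≤ ‖z‖ := norm_fst_le z
      have n2 : ‖z.2‖ ≤ ‖z‖ := norm_snd_le z
      refine (h2 z (by linarith) I).trans ?_
      calc C * (‖z.1‖ + ‖z.2‖) ^ 3 ≤ C * (2 * ‖z‖) ^ 3 := by gcongr; linarith
        _ = _ := by ring
  choose L hL0 hL using h
  refine ⟨∑ I, L I, Finset.sum_nonneg fun I _ => hL0 I, fun I ρ hρ z z' hz hz' => ?_⟩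
  refine (hL I ρ hρ z z' hz hz').trans ?_
  have := Finset.single_le_sum (f := L) (fun i _ => hL0 i) (Finset.mem_univ I)
  gcongr

theorem quad_sub {N : ℕ} (A : Fin N → Fin N → Fin N → Fin 4 → Fin 4 → ℝ) (I : Fin N)
    (z z' : (Fin N → ℝ) × (Fin N → Fin 4 → ℝ)) : quad A I z - quad A I z' =
    ∑ J, ∑ K, ((∑ α, ∑ β, A I J K α β * (z.2 J α - z'.2 J α) * z.2 K β) +
      ∑ α, ∑ β, A I J K β α * (z.2 K α - z'.2 K α) * z'.2 J β) := by
  unfold quad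
  simp only [← Finset.sum_sub_distrib]
  refine Finset.sum_congr rfl fun J _ => Finset.sum_congr rfl fun K _ => ?_
  rw [Finset.sum_comm (f := fun α β => A I J K β α * (z.2 K α - z'.2 K α) * z'.2 J β)]
  simp only [← Finset.sum_add_distrib]
  refine Finset.sum_congr rfl fun α _ => Finset.sum_congr rfl fun β _ => ?_
  ring

theorem fam {N : ℕ} {Q : ((Fin N → ℝ) × (Fin N → Fin 4 → ℝ)) → Fin N → ℝ}
    {w : Fin N → Spc → ℝ} {G : ℝ → EuclideanSpace ℝ (Fin 3) → Fin N → ℝ}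
    (hw : IsGlobalSolution Q w) (hG : IsRadiationField w G) (R₁ R₂ : ℝ) : ∃ C, 0 ≤ C ∧ ∀ p ∈ Reg R₁ R₂,
        (∀ J, |w J p| ≤ C * sd p) ∧ (∀ J α, |pd α (w J) p| ≤ C * sd p) ∧
        (∀ J α, |pd α (w J) p + hat α p * pd 0 (w J) p| ≤ C * sd p ^ 2) := by
  obtain ⟨C1, c1, k1⟩ := unifO (fun I => A1 hw.1 hG I R₁ R₂)
  obtain ⟨C2, c2, k2⟩ := unifO (fun i : Fin N × Fin 4 => A1' hw.1 hG i.1 R₁ R₂ i.2)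
  obtain ⟨C3, c3, k3⟩ := unifO (f := fun (i : Fin N × Fin 4) p =>
    pd i.2 (w i.1) p + hat i.2 p * pd 0 (w i.1) p) (S := Reg R₁ R₂) (g := fun p => sd p ^ 2) (by
      rintro ⟨J, α⟩
      by_cases hα : α = 0
      · subst hα
        simp only [hat, if_true]
        refine (isBigO_zero (fun p => sd p ^ 2) _).congr_left fun p => by ring
      · have := A2 hw.1 hG J R₁ R₂ α hα
        refine this.congr_left fun p => ?_
        simp [hat, hα])
  refine ⟨C1 + C2 + C3, by positivity, fun p hp => ?_⟩
  have hs := sd_pos hp.1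
  refine ⟨fun J => ?_, fun J α => ?_, fun J α => ?_⟩
  · have := k1 J p hp
    rw [abs_of_pos hs] at this
    nlinarith [mul_nonneg c2 hs.le, mul_nonneg c3 hs.le]
  · have := k2 (J, α) p hp
    rw [abs_of_pos hs] at this
    simp only at this
    nlinarith [mul_nonneg c1 hs.le, mul_nonneg c3 hs.le]
  · have := k3 (J, α) p hp
    rw [abs_of_pos (pow_pos hs 2)] at this
    simp only at this
    nlinarith [mul_nonneg c1 (pow_pos hs 2).le, mul_nonneg c2 (pow_pos hs 2).le]

theorem A_bdd {N : ℕ} (A : Fin N → Fin N → Fin N → Fin 4 → Fin 4 → ℝ) :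
    ∃ M, 0 ≤ M ∧ ∀ I J K α β, |A I J K α β| ≤ M := by
  refine ⟨∑ I, ∑ J, ∑ K, ∑ α, ∑ β, |A I J K α β|, by positivity, ?_⟩
  intro I J K α β
  refine le_trans ?_ (Finset.single_le_sum (f := fun I => ∑ J, ∑ K, ∑ α, ∑ β, |A I J K α β|)
    (fun _ _ => by positivity) (Finset.mem_univ I))
  refine le_trans ?_ (Finset.single_le_sum (f := fun J => ∑ K, ∑ α, ∑ β, |A I J K α β|)
    (fun _ _ => by positivity) (Finset.mem_univ J))
  refine le_trans ?_ (Finset.single_le_sum (f := fun K => ∑ α, ∑ β, |A I J K α β|)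
    (fun _ _ => by positivity) (Finset.mem_univ K))
  refine le_trans ?_ (Finset.single_le_sum (f := fun α => ∑ β, |A I J K α β|)
    (fun _ _ => by positivity) (Finset.mem_univ α))
  exact (Finset.single_le_sum (f := fun β => |A I J K α β|)
    (fun _ _ => by positivity) (Finset.mem_univ β))

set_option maxHeartbeats 800000 in
theorem box_null {N : ℕ} {Q : ((Fin N → ℝ) × (Fin N → Fin 4 → ℝ)) → Fin N → ℝ}
    {A : Fin N → Fin N → Fin N → Fin 4 → Fin 4 → ℝ} (hQ : HasNullForm Q A)
    {u v : Fin N → Spc → ℝ} (hu : IsGlobalSolution Q u) (hv : IsGlobalSolution Q v)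
    {F F' : ℝ → EuclideanSpace ℝ (Fin 3) → Fin N → ℝ}
    (hF : IsRadiationField u F) (hF' : IsRadiationField v F') (R₁ R₂ : ℝ) :
    ∃ C, 0 ≤ C ∧ ∀ p ∈ Reg R₁ R₂, ∀ W W', (∀ J, |dif u v J p| ≤ W) →
      (∀ J α, |pd α (dif u v J) p| ≤ W) →
      (∀ J α, |pd α (dif u v J) p + hat α p * pd 0 (dif u v J) p| ≤ W') →
      ∀ I, |box (dif u v I) p| ≤ C * (sd p * W' + sd p ^ 2 * W) := by
  obtain ⟨Cu, cu0, cu⟩ := fam hu hF R₁ R₂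
  obtain ⟨Cv, cv0, cv⟩ := fam hv hF' R₁ R₂
  obtain ⟨C, hC⟩ : ∃ C, C = Cu + Cv := ⟨_, rfl⟩
  have hC0 : 0 ≤ C := by linarith
  obtain ⟨L, hL0, hL⟩ := rem_lip hQ C hC0
  obtain ⟨M, hM0, hA⟩ := A_bdd A
  refine ⟨L * C ^ 2 + N * (N * (32 * M * C)), by positivity, fun p hp W W' w0 w1 w2 I => ?_⟩
  have hs := sd_pos hp.1
  have hs1 : sd p ≤ 1 := by
    unfold sd; exact inv_le_one_of_one_le₀ (by linarith [hp.1])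
  have hbox : box (dif u v I) p = ((Q (jet u p) I - quad A I (jet u p)) - (Q (jet v p) I - quad A I (jet v p)))
      + (quad A I (jet u p) - quad A I (jet v p)) := by
    rw [box_dif hu.1 hv.1, hu.2.2.2 p hp.1.le I, hv.2.2.2 p hp.1.le I]
    unfold jet; ring
  have hW0 : 0 ≤ W := (abs_nonneg _).trans (w0 I)
  have hW'0 : 0 ≤ W' := (abs_nonneg _).trans (w2 I 0)
  have lu : Cu ≤ C := by linarith
  have lv : Cv ≤ C := by linarith
  have hju : ‖jet u p‖ ≤ C * sd p := jet_norm_le u p (by positivity)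
    (fun J => ((cu p hp).1 J).trans (by gcongr)) (fun J α => ((cu p hp).2.1 J α).trans (by gcongr))
  have hjv : ‖jet v p‖ ≤ C * sd p := jet_norm_le v p (by positivity)
    (fun J => ((cv p hp).1 J).trans (by gcongr)) (fun J α => ((cv p hp).2.1 J α).trans (by gcongr))
  have t1 := hL I (C * sd p) (by nlinarith) _ _ hju hjv
  rw [jet_sub hu.1 hv.1] at t1
  have hjw : ‖jet (dif u v) p‖ ≤ W := jet_norm_le _ p hW0 w0 w1
  have t1' := t1.trans (mul_le_mul_of_nonneg_left hjw (by positivity))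
  have hnull : ∀ J K, ∑ α, ∑ β, A I J K α β * hat α p * hat β p = 0 := by
    intro J K
    have hn : ‖(rr p)⁻¹ • p.2‖ = 1 := by
      rw [norm_smul, norm_inv, Real.norm_eq_abs, abs_of_pos hp.2.2.2]
      exact inv_mul_cancel₀ hp.2.2.2.ne'
    have := hQ.2.2 I J K _ hn
    simpa only [hat_eq] using this
  have hnull' : ∀ J K, ∑ α, ∑ β, A I J K β α * hat α p * hat β p = 0 := by
    intro J K
    rw [← hnull J K, Finset.sum_comm]
    exact Finset.sum_congr rfl fun α _ => Finset.sum_congr rfl fun β _ => by ring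
  have t2 : |quad A I (jet u p) - quad A I (jet v p)| ≤
      ∑ J : Fin N, ∑ K : Fin N, 32 * (M * (W * (C * sd p ^ 2) + W' * (C * sd p))) := by
    rw [quad_sub]
    refine (Finset.abs_sum_le_sum_abs _ _).trans (Finset.sum_le_sum fun J _ =>
          (Finset.abs_sum_le_sum_abs _ _).trans (Finset.sum_le_sum fun K _ => ?_))
    have hd : ∀ J α, (jet u p).2 J α - (jet v p).2 J α = pd α (dif u v J) p := by
      intro J α
      rw [pd_dif hu.1 hv.1]; rfl
    simp only [hd]
    have q1 := null_alg (c := fun α => pd α (dif u v J) p) (b := (jet u p).2 K) (W := W) (W' := W')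
      (B := C * sd p) (B' := C * sd p ^ 2) (hA I J K) (hnull J K) (fun α => abs_hat_le α p)
      (w1 J 0) (w2 J) (fun α => ((cu p hp).2.1 K α).trans (by gcongr))
      (fun α => ((cu p hp).2.2 K α).trans (by gcongr))
    have q2 := null_alg (A := fun α β => A I J K β α) (c := fun α => pd α (dif u v K) p)
      (b := (jet v p).2 J) (W := W) (W' := W')
      (B := C * sd p) (B' := C * sd p ^ 2) (fun α β => hA I J K β α) (hnull' J K) (fun α => abs_hat_le α p)
      (w1 K 0) (w2 K) (fun α => ((cv p hp).2.1 J α).trans (by gcongr))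
      (fun α => ((cv p hp).2.2 J α).trans (by gcongr))
    refine (abs_add_le _ _).trans ?_
    linarith
  rw [hbox]
  refine (abs_add_le _ _).trans ((add_le_add t1' t2).trans ?_)
  simp only [Finset.sum_const, Finset.card_univ, Fintype.card_fin, nsmul_eq_mul]
  have : 0 ≤ L * C ^ 2 * (sd p * W') := by positivity
  nlinarith

end part11

section part12

/-- shift in time -/
def sft (m : ℝ) (h : Spc → ℝ) (P : Spc) : ℝ := h (P - (m, 0))

theorem pd_sft (m : ℝ) (h : Spc → ℝ) (α : Fin 4) :
    pd α (sft m h) = sft m (pd α h) := by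
  funext P
  unfold sft pd
  rw [fderiv_comp_sub]

theorem sft_contDiff {n : WithTop ℕ∞} (m : ℝ) {h : Spc → ℝ} (hh : ContDiff ℝ n h) : ContDiff ℝ n (sft m h) :=
  hh.comp (contDiff_id.sub contDiff_const)

/-- back to the original frame -/
def bk (m : ℝ) (y : Spc) : Spc := inv y - (m, 0)

theorem sft_inv (m : ℝ) (h : Spc → ℝ) (y : Spc) : sft m h (inv y) = h (bk m y) := rfl

theorem bk_fst (m : ℝ) (y : Spc) : (bk m y).1 = y.1 / Dm y - m := by
  simp [bk, inv]; ring

theorem bk_snd (m : ℝ) (y : Spc) : (bk m y).2 = (Dm y)⁻¹ • y.2 := by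
  simp [bk, inv]

theorem bk_rr (m : ℝ) {y : Spc} (hD : 0 < Dm y) : rr (bk m y) = ‖y.2‖ / Dm y := by
  unfold rr
  rw [bk_snd, norm_smul, Real.norm_eq_abs, abs_of_pos (inv_pos.2 hD)]; ring

/-- weight polynomial -/
def Gp (R₁ R₂ : ℝ) (y : Spc) : ℝ :=
  ((R₁ + 1 - R₂) ^ 2 + (R₁ ^ 2 - R₂ ^ 2)) * (‖y.2‖ ^ 2 - y.1 ^ 2) + 2 * (R₁ + 1 - R₂) * y.1 - 1

theorem geo_alg1 {a s D m n k t r R₂ cc : ℝ} (hD : D = a ^ 2 - s ^ 2) (hDp : 0 < D) (hn : n = m - R₂)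
    (hk : k = n ^ 2 + cc) (ht : t = a / D - m) (hr : r = s / D) :
    r ^ 2 - (t + R₂) ^ 2 - cc = (k * (s ^ 2 - a ^ 2) + 2 * n * a - 1) / D := by
  have e1 : t + R₂ = a / D - n := by rw [ht, hn]; ring
  rw [e1, hr, hk, eq_div_iff hDp.ne']
  have e2 : s ^ 2 - a ^ 2 = - D := by rw [hD]; ring
  rw [e2]
  have e3 : ((s / D) ^ 2 - (a / D - n) ^ 2 - cc) * D = (s ^ 2 - a ^ 2) / D + 2 * n * a - n ^ 2 * D - cc * D := by
    field_simp
    ring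
  rw [e3, e2, neg_div, div_self hDp.ne']
  ring

theorem geo_alg2 {R₁ R₂ t r : ℝ} (hR₁ : 0 < R₁) (hR₂ : |R₂| < R₁) (hr : 0 ≤ r)
    (hf : R₁ ^ 2 - R₂ ^ 2 < r ^ 2 - (t + R₂) ^ 2) (hq : r - t ≤ R₁) :
    0 < t ∧ 0 < r ∧ R₂ < r - t := by
  obtain ⟨h1, h2⟩ := abs_lt.1 hR₂
  have hcc : 0 < R₁ ^ 2 - R₂ ^ 2 := by nlinarith
  have hr0 : 0 < r := by
    rcases hr.eq_or_lt with h | h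
    · exfalso; rw [← h] at hf; nlinarith [sq_nonneg (t + R₂)]
    · exact h
  have h3 : t + R₂ < r := by
    by_contra hc
    push Not at hc
    nlinarith
  have h4 : r ^ 2 ≤ (t + R₁) ^ 2 := by
    have : r ≤ t + R₁ := by linarith
    nlinarith
  refine ⟨?_, hr0, by linarith⟩
  by_contra hc
  push Not at hc
  nlinarith

theorem geo_alg3 {R₁ R₂ a s t r : ℝ} (hR₁ : 0 < R₁) (hs : 0 ≤ s) (hsa : s < a)
    (hx : (a - s) * (t + (R₁ + 1) + r) = 1) (hz : (a + s) * (R₁ + 1 - (r - t)) = 1) (ht : 0 < t)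
    (hq1 : R₂ < r - t) (hq2 : r - t ≤ R₁) (h2 : |R₂| < R₁) :
    (1 + t)⁻¹ ≤ 2 * (R₁ + 1) * (R₁ + 1 - R₂) * (a ^ 2 - s ^ 2) ∧
      a - s ≤ (R₁ + 1 - R₂) * (a ^ 2 - s ^ 2) := by
  obtain ⟨h1, h2⟩ := abs_lt.1 h2
  have hb : a - s ≤ (R₁ + 1 - R₂) * (a ^ 2 - s ^ 2) := by
    have e : (R₁ + 1 - R₂) * (a ^ 2 - s ^ 2) = (a - s) * ((a + s) * (R₁ + 1 - R₂)) := by ring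
    rw [e]
    have : 1 ≤ (a + s) * (R₁ + 1 - R₂) := by
      rw [← hz]
      exact mul_le_mul_of_nonneg_left (by linarith) (by linarith)
    nlinarith
  refine ⟨?_, hb⟩
  have : (1 + t)⁻¹ ≤ 2 * (R₁ + 1) * (a - s) := by
    rw [inv_eq_one_div, div_le_iff₀ (by linarith)]
    have : t + (R₁ + 1) + r ≤ 2 * (R₁ + 1) * (1 + t) := by nlinarith
    calc (1:ℝ) = (a - s) * (t + (R₁ + 1) + r) := hx.symm
      _ ≤ (a - s) * (2 * (R₁ + 1) * (1 + t)) := mul_le_mul_of_nonneg_left this (by linarith)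
      _ = _ := by ring
  refine this.trans ?_
  rw [mul_assoc (2 * (R₁ + 1))]
  exact mul_le_mul_of_nonneg_left hb (by linarith)

theorem Dm_pos {y : Spc} (h : ‖y.2‖ < y.1) : 0 < Dm y := by
  rw [Dm_eq]; nlinarith [norm_nonneg y.2]

theorem bk_id {R₁ : ℝ} {y : Spc} (h : ‖y.2‖ < y.1) :
    (y.1 - ‖y.2‖) * ((bk (R₁ + 1) y).1 + (R₁ + 1) + rr (bk (R₁ + 1) y)) = 1 ∧
    (y.1 + ‖y.2‖) * (R₁ + 1 - (rr (bk (R₁ + 1) y) - (bk (R₁ + 1) y).1)) = 1 := by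
  have hD := Dm_pos h
  have hDe := Dm_eq y
  rw [bk_fst, bk_rr _ hD]
  constructor
  · have : (y.1 - ‖y.2‖) * (y.1 / Dm y - (R₁ + 1) + (R₁ + 1) + ‖y.2‖ / Dm y) = (y.1 ^ 2 - ‖y.2‖ ^ 2) / Dm y := by
      ring
    rw [this, ← hDe, div_self hD.ne']
  · have : (y.1 + ‖y.2‖) * (R₁ + 1 - (‖y.2‖ / Dm y - (y.1 / Dm y - (R₁ + 1)))) = (y.1 ^ 2 - ‖y.2‖ ^ 2) / Dm y := by
      ring
    rw [this, ← hDe, div_self hD.ne']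

/-- geometry of the conformal frame -/
theorem geo {R₁ R₂ : ℝ} (hR₁ : 0 < R₁) (hR₂ : |R₂| < R₁) {y : Spc} (h : ‖y.2‖ < y.1)
    (hB : y.1 + ‖y.2‖ ≤ 1) (hG : 0 < Gp R₁ R₂ y) :
    0 < (bk (R₁ + 1) y).1 ∧ R₂ < rr (bk (R₁ + 1) y) - (bk (R₁ + 1) y).1 ∧
    rr (bk (R₁ + 1) y) - (bk (R₁ + 1) y).1 ≤ R₁ ∧ 0 < rr (bk (R₁ + 1) y) ∧
    sd (bk (R₁ + 1) y) ≤ 2 * (R₁ + 1) * (R₁ + 1 - R₂) * Dm y ∧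
    y.1 - ‖y.2‖ ≤ (R₁ + 1 - R₂) * Dm y := by
  have hD := Dm_pos h
  obtain ⟨hx, hz⟩ := bk_id (R₁ := R₁) h
  have hn := norm_nonneg y.2
  have hq : rr (bk (R₁ + 1) y) - (bk (R₁ + 1) y).1 ≤ R₁ := by
    by_contra hc
    push Not at hc
    have : (y.1 + ‖y.2‖) * (R₁ + 1 - (rr (bk (R₁ + 1) y) - (bk (R₁ + 1) y).1)) < 1 := by
      rcases le_or_gt (R₁ + 1 - (rr (bk (R₁ + 1) y) - (bk (R₁ + 1) y).1)) 0 with h0 | h0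
      · nlinarith
      · nlinarith
    linarith
  have hf := geo_alg1 (R₂ := R₂) (cc := R₁ ^ 2 - R₂ ^ 2) (Dm_eq y) hD rfl rfl (bk_fst (R₁ + 1) y) (bk_rr (R₁ + 1) hD)
  have hf2 : R₁ ^ 2 - R₂ ^ 2 < rr (bk (R₁ + 1) y) ^ 2 - ((bk (R₁ + 1) y).1 + R₂) ^ 2 := by
    have : 0 < Gp R₁ R₂ y / Dm y := div_pos hG hD
    unfold Gp at this
    linarith
  obtain ⟨h1, h2, h3⟩ := geo_alg2 hR₁ hR₂ (norm_nonneg _) hf2 hq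
  obtain ⟨h4, h5⟩ := geo_alg3 hR₁ hn h hx hz h1 h3 hq hR₂
  rw [← Dm_eq] at h4 h5
  exact ⟨h1, h3, hq, h2, h4, h5⟩

/-- good region -/
def Gd (R₁ R₂ : ℝ) : Set Spc := {y | ‖y.2‖ < y.1 ∧ y.1 + ‖y.2‖ < 1 ∧ 0 < Gp R₁ R₂ y}

theorem geo_reg {R₁ R₂ : ℝ} (hR₁ : 0 < R₁) (hR₂ : |R₂| < R₁) {y : Spc} (h : y ∈ Gd R₁ R₂) :
    bk (R₁ + 1) y ∈ Reg R₁ R₂ := by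
  obtain ⟨h1, h2, h3⟩ := h
  obtain ⟨g1, g2, g3, g4, -, -⟩ := geo hR₁ hR₂ h1 h2.le h3
  refine ⟨g1, g2, lt_of_le_of_ne g3 fun he => ?_, g4⟩
  have := (bk_id (R₁ := R₁) h1).2
  rw [he] at this
  linarith

theorem crd_le1 {y : Spc} (h1 : ‖y.2‖ < y.1) (h2 : y.1 + ‖y.2‖ < 1) (α : Fin 4) : |crd α y| ≤ 1 := by
  have hn := norm_nonneg y.2
  by_cases h : α = 0
  · subst h
    rw [crd_zero, abs_of_pos (by linarith)]; linarith
  · refine (abs_crd_le α h y).trans ?_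
    unfold rr; linarith

theorem Dm_le1 {y : Spc} (h1 : ‖y.2‖ < y.1) (h2 : y.1 + ‖y.2‖ < 1) : Dm y ≤ 1 := by
  have hn := norm_nonneg y.2
  rw [Dm_eq]; nlinarith

end part12

section part13

theorem abs_le_H {X a b H0 m E : ℝ} (hm : 0 < m) (hX : X = a + m * b) (ha : |a| ≤ H0 * E) (hb : |b| ≤ H0 * E) :
    |X| ≤ (1 + m) * H0 * E := by
  rw [hX]
  calc |a + m * b| ≤ |a| + m * |b| := by
        refine (abs_add_le _ _).trans ?_
        rw [abs_mul, abs_of_pos hm]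
    _ ≤ H0 * E + m * (H0 * E) := by gcongr
    _ = _ := by ring

theorem null_id {P0 x y z a b c d D B : ℝ} (hD : D * (P0 ^ 2 - (x ^ 2 + y ^ 2 + z ^ 2)) = 1) (hDp : 0 < D)
    (h0 : |P0 * a + (x * b + y * c + z * d)| ≤ B) (h1 : |x * a + P0 * b| ≤ B)
    (h2 : |y * a + P0 * c| ≤ B) (h3 : |z * a + P0 * d| ≤ B)
    (h4 : |x * c - y * b| ≤ B) (h5 : |x * d - z * b| ≤ B) (h6 : |y * d - z * c| ≤ B) :
    |-(a * a) + b * b + c * c + d * d| ≤ 7 * B ^ 2 * D := by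
  have sq : ∀ X : ℝ, |X| ≤ B → X ^ 2 ≤ B ^ 2 := fun X hX => by
    rw [← sq_abs]; gcongr
  have e : -(a * a) + b * b + c * c + d * d = D * (-(P0 * a + (x * b + y * c + z * d)) ^ 2 +
      (x * a + P0 * b) ^ 2 + (y * a + P0 * c) ^ 2 + (z * a + P0 * d) ^ 2
      - (x * c - y * b) ^ 2 - (x * d - z * b) ^ 2 - (y * d - z * c) ^ 2) := by
    have : -(a * a) + b * b + c * c + d * d = (D * (P0 ^ 2 - (x ^ 2 + y ^ 2 + z ^ 2))) *
      (-(a * a) + b * b + c * c + d * d) := by rw [hD, one_mul]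
    rw [this]; ring
  rw [e, abs_mul, abs_of_pos hDp, mul_comm]
  refine mul_le_mul_of_nonneg_right ?_ hDp.le
  have := sq _ h0
  have := sq _ h1
  have := sq _ h2
  have := sq _ h3
  have := sq _ h4
  have := sq _ h5
  have := sq _ h6
  rw [abs_le]
  constructor <;> linarith [sq_nonneg (P0 * a + (x * b + y * c + z * d)), sq_nonneg (x * a + P0 * b),
    sq_nonneg (y * a + P0 * c), sq_nonneg (z * a + P0 * d), sq_nonneg (x * c - y * b),
    sq_nonneg (x * d - z * b), sq_nonneg (y * d - z * c), sq_nonneg B]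

theorem inv_eq_bk (m : ℝ) (y : Spc) : inv y = bk m y + (m, 0) := by simp [bk]

theorem pd_sft_inv (m : ℝ) (w : Spc → ℝ) (α : Fin 4) (y : Spc) :
    pd α (sft m w) (inv y) = pd α w (bk m y) := by rw [pd_sft]; rfl

theorem Eu_sft (m : ℝ) (w : Spc → ℝ) (y : Spc) :
    Eu (sft m w) (inv y) = Sc w (bk m y) + m * pd 0 w (bk m y) := by
  unfold Eu
  simp only [pd_sft_inv]
  rw [inv_eq_bk m y]
  simp [Fin.sum_univ_four, Fin.sum_univ_three, Sc, dt, dxi]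
  ring

theorem decay {N : ℕ} {u v : Fin N → Spc → ℝ} {F F' : ℝ → EuclideanSpace ℝ (Fin 3) → Fin N → ℝ}
    (hu : ∀ I, ContDiff ℝ (⊤ : ℕ∞) (u I)) (hv : ∀ I, ContDiff ℝ (⊤ : ℕ∞) (v I))
    (hF : IsRadiationField u F) (hF' : IsRadiationField v F') {R₁ R₂ : ℝ}
    (hR₁ : 0 < R₁) (hR₂ : |R₂| < R₁)
    (hrad : ∀ (q : ℝ) (ω : EuclideanSpace ℝ (Fin 3)), ‖ω‖ = 1 → R₂ < q → F q ω = F' q ω) :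
    ∃ H, 0 ≤ H ∧ ∀ I, ∀ y ∈ Gd R₁ R₂,
      |sft (R₁ + 1) (dif u v I) (inv y)| ≤ H * Dm y ^ 2 ∧
      (∀ α, |pd α (sft (R₁ + 1) (dif u v I)) (inv y)| ≤ H * Dm y ^ 2) ∧
      |Eu (sft (R₁ + 1) (dif u v I)) (inv y)| ≤ H * Dm y ^ 2 ∧
      |∑ α, eta α * (pd α (sft (R₁ + 1) (dif u v I)) (inv y) * pd α (sft (R₁ + 1) (dif u v I)) (inv y))|
        ≤ 7 * (H * Dm y ^ 2) ^ 2 * Dm y := by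
  have A := fun I => A3 hu hv hF hF' I R₁ R₂ hrad
  obtain ⟨C1, c1, k1⟩ := unifO fun I => (A I).1
  obtain ⟨C2, c2, k2⟩ := unifO (ι := Fin N × Fin 4) fun i => (A i.1).2.1 i.2
  obtain ⟨C3, c3, k3⟩ := unifO fun I => (A I).2.2.1
  obtain ⟨C4, c4, k4⟩ := unifO (ι := Fin N × Fin 3) fun i => (A i.1).2.2.2.1 i.2
  obtain ⟨C5, c5, k5⟩ := unifO fun I => (A I).2.2.2.2.1
  obtain ⟨C6, c6, k6⟩ := unifO fun I => (A I).2.2.2.2.2.1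
  obtain ⟨C7, c7, k7⟩ := unifO fun I => (A I).2.2.2.2.2.2
  obtain ⟨C, hC⟩ : ∃ C, C = C1 + C2 + C3 + C4 + C5 + C6 + C7 := ⟨_, rfl⟩
  obtain ⟨K, hK⟩ : ∃ K, K = 2 * (R₁ + 1) * (R₁ + 1 - R₂) := ⟨_, rfl⟩
  obtain ⟨H0, hH0⟩ : ∃ H0, H0 = C * K ^ 2 := ⟨_, rfl⟩
  have hCp : 0 ≤ C := by rw [hC]; positivity
  have hH0p : 0 ≤ H0 := by rw [hH0]; positivity
  refine ⟨(1 + (R₁ + 1)) * H0, by positivity, fun I y hy => ?_⟩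
  have hp := geo_reg hR₁ hR₂ hy
  have hD := Dm_pos hy.1
  have hs : sd (bk (R₁ + 1) y) ≤ K * Dm y := by
    rw [hK]; exact (geo hR₁ hR₂ hy.1 hy.2.1.le hy.2.2).2.2.2.2.1
  have hs2 : |sd (bk (R₁ + 1) y) ^ 2| ≤ K ^ 2 * Dm y ^ 2 := by
    rw [abs_of_nonneg (sq_nonneg _), ← mul_pow]
    have := (sd_pos hp.1).le
    gcongr
  have key : ∀ {X c : ℝ}, |X| ≤ c * |sd (bk (R₁ + 1) y) ^ 2| → c ≤ C → |X| ≤ H0 * Dm y ^ 2 := by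
    intro X c hX hc
    calc |X| ≤ c * |sd (bk (R₁ + 1) y) ^ 2| := hX
      _ ≤ C * (K ^ 2 * Dm y ^ 2) := by gcongr
      _ = _ := by rw [hH0]; ring
  have l1 := key (k1 I _ hp) (by linarith)
  have l2 := fun α => key (k2 (I, α) _ hp) (by linarith)
  have l3 := key (k3 I _ hp) (by linarith)
  have l4 := fun i => key (k4 (I, i) _ hp) (by linarith)
  have l5 := key (k5 I _ hp) (by linarith)
  have l6 := key (k6 I _ hp) (by linarith)
  have l7 := key (k7 I _ hp) (by linarith)
  have hm : 0 < R₁ + 1 := by linarith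
  have mono : ∀ {X : ℝ}, |X| ≤ H0 * Dm y ^ 2 → |X| ≤ (1 + (R₁ + 1)) * H0 * Dm y ^ 2 := by
    intro X hX
    refine hX.trans ?_
    have : 0 ≤ H0 * Dm y ^ 2 := by positivity
    nlinarith
  have hE := abs_le_H hm (Eu_sft (R₁ + 1) (dif u v I) y) l3 (l2 0)
  refine ⟨mono l1, fun α => ?_, hE, ?_⟩
  · rw [pd_sft_inv]; exact mono (l2 α)
  · rw [Fin.sum_univ_four]
    simp only [eta_zero, eta_one, eta_two, eta_three, one_mul, neg_mul, pd_sft_inv]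
    have hDi : Dm y * Dm (inv y) = 1 := by rw [Dm_inv hD.ne']; exact mul_inv_cancel₀ hD.ne'
    rw [Dm_eq (inv y), normsq3] at hDi
    refine null_id hDi hD ?_ ?_ ?_ ?_ ?_ ?_ ?_
    · convert hE using 2
      unfold Eu
      simp [Fin.sum_univ_four, pd_sft_inv]
      ring
    · refine abs_le_H hm ?_ (l4 0) (l2 1)
      simp [inv_eq_bk (R₁ + 1) y, Lor, dt, dxi]; ring
    · refine abs_le_H hm ?_ (l4 1) (l2 2)
      simp [inv_eq_bk (R₁ + 1) y, Lor, dt, dxi]; ring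
    · refine abs_le_H hm ?_ (l4 2) (l2 3)
      simp [inv_eq_bk (R₁ + 1) y, Lor, dt, dxi]; ring
    · convert mono l5 using 2
      simp [inv_eq_bk (R₁ + 1) y, Rot, dxi]
    · convert mono l6 using 2
      simp [inv_eq_bk (R₁ + 1) y, Rot, dxi]
    · convert mono l7 using 2
      simp [inv_eq_bk (R₁ + 1) y, Rot, dxi]

end part13

section part14

theorem Tr_bounds {h : Spc → ℝ} (hh : ContDiff ℝ (⊤ : ℕ∞) h) {y : Spc} (h1 : ‖y.2‖ < y.1)
    (h2 : y.1 + ‖y.2‖ < 1) {H : ℝ}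
    (k1 : |h (inv y)| ≤ H * Dm y ^ 2) (k2 : ∀ α, |pd α h (inv y)| ≤ H * Dm y ^ 2)
    (k3 : |Eu h (inv y)| ≤ H * Dm y ^ 2)
    (k4 : |∑ α, eta α * (pd α h (inv y) * pd α h (inv y))| ≤ 7 * (H * Dm y ^ 2) ^ 2 * Dm y) :
    |Tr h y| ≤ H * Dm y ∧ (∀ α, |pd α (Tr h) y| ≤ 5 * H) ∧
    |∑ α, eta α * (pd α Dm y * pd α (Tr h) y)| ≤ 10 * H * Dm y ∧
    |∑ α, eta α * (pd α (Tr h) y * pd α (Tr h) y)| ≤ 15 * H ^ 2 * Dm y := by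
  have hD := Dm_pos h1
  have hi : 0 < (Dm y)⁻¹ := inv_pos.2 hD
  have hiD : (Dm y)⁻¹ * Dm y = 1 := inv_mul_cancel₀ hD.ne'
  have hk : |kk h (inv y)| ≤ 2 * (H * Dm y ^ 2) := by
    unfold kk
    refine (abs_add_le _ _).trans ?_; linarith
  refine ⟨?_, fun α => ?_, ?_, ?_⟩
  · unfold Tr
    rw [abs_mul, abs_of_pos hi]
    calc (Dm y)⁻¹ * |h (inv y)| ≤ (Dm y)⁻¹ * (H * Dm y ^ 2) := by gcongr
      _ = ((Dm y)⁻¹ * Dm y) * (H * Dm y) := by ring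
      _ = _ := by rw [hiD, one_mul]
  · rw [(hasPd_Tr α hD.ne' hh).2, abs_mul, abs_of_pos (by positivity)]
    have he : |2 * (eta α * crd α y) * kk h (inv y)| ≤ 2 * (2 * (H * Dm y ^ 2)) := by
      rw [abs_mul, abs_mul, abs_two, abs_mul]
      have e1 : |eta α| = 1 := by unfold eta; split_ifs <;> simp
      rw [e1, one_mul]
      have := crd_le1 h1 h2 α
      calc 2 * |crd α y| * |kk h (inv y)| ≤ 2 * 1 * (2 * (H * Dm y ^ 2)) := by gcongr
        _ = _ := by ring
    calc (Dm y)⁻¹ ^ 2 * |pd α h (inv y) + 2 * (eta α * crd α y) * kk h (inv y)|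
        ≤ (Dm y)⁻¹ ^ 2 * (H * Dm y ^ 2 + 2 * (2 * (H * Dm y ^ 2))) := by
          gcongr
          exact (abs_add_le _ _).trans (add_le_add (k2 α) he)
      _ = ((Dm y)⁻¹ * Dm y) ^ 2 * (5 * H) := by ring
      _ = _ := by rw [hiD]; ring
  · have e : ∑ α, eta α * (pd α Dm y * pd α (Tr h) y) = -2 * ∑ α, crd α y * pd α (Tr h) y := by
      rw [Finset.mul_sum]
      refine Finset.sum_congr rfl fun α _ => ?_
      rw [(hasPd_Dm α y).2]
      linear_combination (-2 * crd α y * pd α (Tr h) y) * eta_sq α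
    rw [e, Tr_b3 hD.ne' hh, abs_mul, abs_mul, abs_of_pos hi, abs_neg, abs_two]
    have : |Eu h (inv y) - 2 * kk h (inv y)| ≤ 5 * (H * Dm y ^ 2) := by
      have a1 := abs_le.1 k3
      have a2 := abs_le.1 hk
      rw [abs_le]; constructor <;> linarith [a1.1, a1.2, a2.1, a2.2]
    calc 2 * ((Dm y)⁻¹ * |Eu h (inv y) - 2 * kk h (inv y)|) ≤ 2 * ((Dm y)⁻¹ * (5 * (H * Dm y ^ 2))) := by gcongr
      _ = ((Dm y)⁻¹ * Dm y) * (10 * H * Dm y) := by ring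
      _ = _ := by rw [hiD, one_mul]
  · rw [Tr_b4 hD.ne' hh, abs_mul, abs_of_pos (by positivity)]
    have e : Eu h (inv y) - kk h (inv y) = - h (inv y) := by unfold kk; ring
    rw [e]
    have : |4 * Dm y * kk h (inv y) * (-h (inv y))| ≤ 4 * Dm y * (2 * (H * Dm y ^ 2)) * (H * Dm y ^ 2) := by
      rw [abs_mul, abs_mul, abs_neg, abs_of_pos (show 0 < 4 * Dm y by positivity)]
      have : 0 ≤ H * Dm y ^ 2 := (abs_nonneg _).trans k1
      gcongr
    calc _ ≤ (Dm y)⁻¹ ^ 4 * (7 * (H * Dm y ^ 2) ^ 2 * Dm y + 4 * Dm y * (2 * (H * Dm y ^ 2)) * (H * Dm y ^ 2)) := by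
          gcongr
          exact (abs_add_le _ _).trans (add_le_add k4 this)
      _ = ((Dm y)⁻¹ * Dm y) ^ 4 * (15 * H ^ 2 * Dm y) := by ring
      _ = _ := by rw [hiD]; ring

/-- good derivative coefficient -/
theorem good_coef {R₁ R₂ : ℝ} {y : Spc} (h1 : ‖y.2‖ < y.1) (hp : 0 < rr (bk (R₁ + 1) y))
    (hb : y.1 - ‖y.2‖ ≤ (R₁ + 1 - R₂) * Dm y) (α : Fin 4) (hα : α ≠ 0) :
    |crd α y - hat α (bk (R₁ + 1) y) * crd 0 y| ≤ (R₁ + 1 - R₂) * Dm y := by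
  have hD := Dm_pos h1
  have hi : 0 < (Dm y)⁻¹ := inv_pos.2 hD
  rw [bk_rr _ hD] at hp
  have hy : 0 < ‖y.2‖ := by
    by_contra hc
    have : ‖y.2‖ = 0 := le_antisymm (not_lt.1 hc) (norm_nonneg _)
    rw [this] at hp; simp at hp
  have e : hat α (bk (R₁ + 1) y) = crd α y / ‖y.2‖ := by
    unfold hat omg
    rw [if_neg hα, if_neg hα, bk_rr _ hD]
    have : crd α (bk (R₁ + 1) y) = (Dm y)⁻¹ * crd α y := by
      obtain ⟨i, rfl⟩ := Fin.exists_succ_eq.2 hα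
      show (bk (R₁ + 1) y).2 i = (Dm y)⁻¹ * y.2 i
      rw [bk_snd]; simp
    rw [this]
    field_simp
  rw [e, crd_zero]
  have e2 : crd α y - crd α y / ‖y.2‖ * y.1 = - (crd α y * ((y.1 - ‖y.2‖) / ‖y.2‖)) := by
    field_simp; ring
  rw [e2, abs_neg, abs_mul, abs_of_nonneg (div_nonneg (by linarith) hy.le)]
  refine le_trans ?_ hb
  have := abs_crd_le α hα y
  unfold rr at this
  calc _ ≤ ‖y.2‖ * ((y.1 - ‖y.2‖) / ‖y.2‖) := by
        refine mul_le_mul_of_nonneg_right this (div_nonneg (by linarith) hy.le)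
    _ = _ := by field_simp

theorem Tr_inv_bounds {h : Spc → ℝ} (hh : ContDiff ℝ (⊤ : ℕ∞) h) {y : Spc} (h1 : ‖y.2‖ < y.1)
    (h2 : y.1 + ‖y.2‖ < 1) {X : ℝ} (k1 : |Tr h y| ≤ X) (k2 : ∀ α, |pd α (Tr h) y| ≤ X) :
    |h (inv y)| ≤ Dm y * X ∧ (∀ α, |pd α h (inv y)| ≤ 11 * Dm y * X) ∧
    ∀ α, α ≠ 0 → ∀ o n, |o| ≤ 1 → |crd α y - o * crd 0 y| ≤ n * Dm y →
      |pd α h (inv y) + o * pd 0 h (inv y)| ≤ (2 + 10 * n) * Dm y ^ 2 * X := by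
  have hD := Dm_pos h1
  have hD1 := Dm_le1 h1 h2
  have hX : 0 ≤ X := (abs_nonneg _).trans k1
  have e0 : h (inv y) = Dm y * Tr h y := by
    unfold Tr; rw [← mul_assoc, mul_inv_cancel₀ hD.ne', one_mul]
  have hs : |Tr h y + ∑ μ, crd μ y * pd μ (Tr h) y| ≤ 5 * X := by
    refine (abs_add_le _ _).trans ?_
    have : |∑ μ, crd μ y * pd μ (Tr h) y| ≤ ∑ μ : Fin 4, X := by
      refine (Finset.abs_sum_le_sum_abs _ _).trans (Finset.sum_le_sum fun μ _ => ?_)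
      rw [abs_mul]
      calc _ ≤ 1 * X := mul_le_mul (crd_le1 h1 h2 μ) (k2 μ) (abs_nonneg _) zero_le_one
        _ = X := one_mul X
    simp at this
    linarith
  refine ⟨?_, fun α => ?_, fun α hα o n ho hn => ?_⟩
  · rw [e0, abs_mul, abs_of_pos hD]; gcongr
  · rw [pd_of_Tr hD.ne' hh]
    have e1 : |eta α| = 1 := by unfold eta; split_ifs <;> simp
    have c1 := crd_le1 h1 h2 α
    refine (abs_add_le _ _).trans ?_
    rw [abs_mul, abs_mul, abs_mul, abs_mul, abs_mul, e1, abs_two, abs_of_pos hD, abs_of_pos (by positivity)]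
    calc _ ≤ Dm y ^ 2 * X + 2 * (1 * 1) * Dm y * (5 * X) := by gcongr; exact k2 α
      _ ≤ (Dm y * 1) * X + 2 * (1 * 1) * Dm y * (5 * X) := by
        rw [pow_two]; gcongr
      _ = _ := by ring
  · rw [pd_of_Tr hD.ne' hh, pd_of_Tr hD.ne' hh]
    have e1 : eta α = 1 := by unfold eta; rw [if_neg hα]
    rw [e1, eta_zero]
    have e : ∀ s, Dm y ^ 2 * pd α (Tr h) y + 2 * (1 * crd α y) * Dm y * s
      + o * (Dm y ^ 2 * pd 0 (Tr h) y + 2 * (-1 * crd 0 y) * Dm y * s) =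
      Dm y ^ 2 * (pd α (Tr h) y + o * pd 0 (Tr h) y) + 2 * (crd α y - o * crd 0 y) * Dm y * s := by
      intro s; ring
    rw [e]
    refine (abs_add_le _ _).trans ?_
    rw [abs_mul, abs_mul, abs_mul, abs_mul, abs_two, abs_of_pos hD, abs_of_pos (by positivity)]
    have a1 : |pd α (Tr h) y + o * pd 0 (Tr h) y| ≤ 2 * X := by
      refine (abs_add_le _ _).trans ?_
      rw [abs_mul]
      have := mul_le_mul ho (k2 0) (abs_nonneg _) zero_le_one
      linarith [k2 α]
    have n0 : 0 ≤ n * Dm y := (abs_nonneg _).trans hn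
    have n1 : 0 ≤ 2 * (n * Dm y) * Dm y := by positivity
    calc _ ≤ Dm y ^ 2 * (2 * X) + 2 * (n * Dm y) * Dm y * (5 * X) := by gcongr
      _ = _ := by ring

theorem all_bounds {N : ℕ} {Q : ((Fin N → ℝ) × (Fin N → Fin 4 → ℝ)) → Fin N → ℝ}
    {A : Fin N → Fin N → Fin N → Fin 4 → Fin 4 → ℝ} (hQ : HasNullForm Q A)
    {u v : Fin N → Spc → ℝ} (hu : IsGlobalSolution Q u) (hv : IsGlobalSolution Q v)
    {F F' : ℝ → EuclideanSpace ℝ (Fin 3) → Fin N → ℝ}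
    (hF : IsRadiationField u F) (hF' : IsRadiationField v F') {R₁ R₂ : ℝ}
    (hR₁ : 0 < R₁) (hR₂ : |R₂| < R₁)
    (hrad : ∀ (q : ℝ) (ω : EuclideanSpace ℝ (Fin 3)), ‖ω‖ = 1 → R₂ < q → F q ω = F' q ω) :
    ∃ C, 0 ≤ C ∧ ∀ y ∈ Gd R₁ R₂, ∀ I,
      (∑ α, eta α * pd α (pd α (Tr (sft (R₁ + 1) (dif u v I)))) y) ^ 2 ≤
        C * S2 (fun J => Tr (sft (R₁ + 1) (dif u v J))) y ∧
      |Tr (sft (R₁ + 1) (dif u v I)) y| ≤ C * Dm y ∧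
      (∀ α, |pd α (Tr (sft (R₁ + 1) (dif u v I))) y| ≤ C) ∧
      |∑ α, eta α * (pd α Dm y * pd α (Tr (sft (R₁ + 1) (dif u v I))) y)| ≤ C * Dm y ∧
      |∑ α, eta α * (pd α (Tr (sft (R₁ + 1) (dif u v I))) y * pd α (Tr (sft (R₁ + 1) (dif u v I))) y)|
        ≤ C * Dm y := by
  have hw : ∀ I, ContDiff ℝ (⊤ : ℕ∞) (sft (R₁ + 1) (dif u v I)) := fun I =>
    sft_contDiff _ (dif_contDiff hu.1 hv.1 I)
  obtain ⟨H, hH, dec⟩ := decay hu.1 hv.1 hF hF' hR₁ hR₂ hrad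
  obtain ⟨B, hB, bn⟩ := box_null hQ hu hv hF hF' R₁ R₂
  obtain ⟨K, hK⟩ : ∃ K, K = 2 * (R₁ + 1) * (R₁ + 1 - R₂) := ⟨_, rfl⟩
  obtain ⟨n, hn⟩ : ∃ n, n = R₁ + 1 - R₂ := ⟨_, rfl⟩
  have hn0 : 0 < n := by rw [hn]; linarith [(abs_lt.1 hR₂).2]
  have hK0 : 0 < K := by rw [hK, ← hn]; positivity
  obtain ⟨C', hC'⟩ : ∃ C', C' = B * (K * (2 + 10 * n) + K ^ 2 * 11) := ⟨_, rfl⟩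
  have hC'0 : 0 ≤ C' := by rw [hC']; positivity
  refine ⟨10 * H + 15 * H ^ 2 + C' ^ 2, by positivity, fun y hy I => ?_⟩
  have q1 := sq_nonneg H
  have q2 := sq_nonneg C'
  have hD := Dm_pos hy.1
  have hi : 0 < (Dm y)⁻¹ := inv_pos.2 hD
  have hp := geo_reg hR₁ hR₂ hy
  have hg := geo hR₁ hR₂ hy.1 hy.2.1.le hy.2.2
  obtain ⟨d1, d2, d3, d4⟩ := dec I y hy
  obtain ⟨t1, t2, t3, t4⟩ := Tr_bounds (hw I) hy.1 hy.2.1 d1 d2 d3 d4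
  refine ⟨?_, t1.trans ?_, fun α => (t2 α).trans ?_, t3.trans ?_, t4.trans ?_⟩
  · obtain ⟨X, hX⟩ : ∃ X, X = Real.sqrt (S2 (fun J => Tr (sft (R₁ + 1) (dif u v J))) y) := ⟨_, rfl⟩
    have hX0 : 0 ≤ X := by rw [hX]; exact Real.sqrt_nonneg _
    have tb := fun J => Tr_inv_bounds (hw J) hy.1 hy.2.1 (X := X)
      (by rw [hX]; exact Real.abs_le_sqrt (sq_le_S2 (fun J => Tr (sft (R₁ + 1) (dif u v J))) y J))
      (fun α => by rw [hX]; exact Real.abs_le_sqrt (sq_pd_le_S2 (fun J => Tr (sft (R₁ + 1) (dif u v J))) y J α))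
    have hs : sd (bk (R₁ + 1) y) ≤ K * Dm y := by rw [hK]; exact hg.2.2.2.2.1
    have hs0 := (sd_pos hp.1).le
    have hbox := bn _ hp (11 * Dm y * X) ((2 + 10 * n) * Dm y ^ 2 * X)
      (fun J => by
        rw [← sft_inv (R₁ + 1) (dif u v J) y]
        refine (tb J).1.trans ?_
        have : 0 ≤ Dm y * X := by positivity
        nlinarith)
      (fun J α => by rw [← pd_sft_inv]; exact (tb J).2.1 α)
      (fun J α => by
        by_cases hα : α = 0
        · subst hα
          simp only [hat, if_true, neg_mul, one_mul, add_neg_cancel, abs_zero]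
          positivity
        · rw [← pd_sft_inv, ← pd_sft_inv]
          refine (tb J).2.2 α hα _ n (abs_hat_le α _) ?_
          rw [hn]
          exact good_coef hy.1 hp.2.2.2 hg.2.2.2.2.2 α hα) I
    have hbox2 : |box (dif u v I) (bk (R₁ + 1) y)| ≤ C' * Dm y ^ 3 * X := by
      refine hbox.trans ?_
      calc _ ≤ B * (K * Dm y * ((2 + 10 * n) * Dm y ^ 2 * X) + (K * Dm y) ^ 2 * (11 * Dm y * X)) := by gcongr
        _ = _ := by rw [hC']; ring
    rw [box_eq] at hbox2
    have e : ∀ α, pd α (pd α (dif u v I)) (bk (R₁ + 1) y) = pd α (pd α (sft (R₁ + 1) (dif u v I))) (inv y) := by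
      intro α; rw [pd_sft, pd_sft]; rfl
    simp only [e] at hbox2
    rw [box_Tr hD.ne' (hw I), ← sq_abs, abs_mul, abs_of_pos (by positivity)]
    have h5 : (Dm y)⁻¹ ^ 3 * |∑ α, eta α * pd α (pd α (sft (R₁ + 1) (dif u v I))) (inv y)| ≤ C' * X := by
      calc _ ≤ (Dm y)⁻¹ ^ 3 * (C' * Dm y ^ 3 * X) := by gcongr
        _ = ((Dm y)⁻¹ * Dm y) ^ 3 * (C' * X) := by ring
        _ = _ := by rw [inv_mul_cancel₀ hD.ne']; ring
    calc _ ≤ (C' * X) ^ 2 := by gcongr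
      _ = C' ^ 2 * S2 (fun J => Tr (sft (R₁ + 1) (dif u v J))) y := by
          rw [mul_pow, hX, Real.sq_sqrt (S2_nonneg _ _)]
      _ ≤ _ := by
          refine mul_le_mul_of_nonneg_right ?_ (S2_nonneg _ _)
          linarith
  · refine mul_le_mul_of_nonneg_right ?_ hD.le
    linarith
  · linarith
  · refine mul_le_mul_of_nonneg_right ?_ hD.le
    linarith
  · refine mul_le_mul_of_nonneg_right ?_ hD.le
    linarith

end part14

section part15

theorem uc_alg {k b K X2 s2 : ℝ} (hb : 0 < b) (hkb : b ≤ k) (hK : 0 < K) (hX : 0 ≤ X2)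
    (hW : 0 < -b * X2 + k * s2 - K) :
    16 * k ^ 2 * K ≤ (4 * -b + -(2 * k + 2 * b)) * (4 * (-b) ^ 2 * X2) +
      (4 * k - -(2 * k + 2 * b)) * (4 * k ^ 2 * s2) := by
  have hk : 0 < k := by linarith
  have e : (4 * -b + -(2 * k + 2 * b)) * (4 * (-b) ^ 2 * X2) +
      (4 * k - -(2 * k + 2 * b)) * (4 * k ^ 2 * s2) =
      4 * ((6 * k + 2 * b) * k * (k * s2 - b * X2) + ((6 * k + 2 * b) * k - (6 * b + 2 * k) * b) * (b * X2)) := by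
    ring
  rw [e]
  have h1 : 0 ≤ ((6 * k + 2 * b) * k - (6 * b + 2 * k) * b) * (b * X2) := by
    refine mul_nonneg ?_ (by positivity)
    nlinarith
  have h2 : (6 * k + 2 * b) * k * K ≤ (6 * k + 2 * b) * k * (k * s2 - b * X2) := by
    refine mul_le_mul_of_nonneg_left (by linarith) (by positivity)
  have h3 : 0 ≤ b * k * K := by positivity
  have h4 : 0 ≤ k ^ 2 * K := by positivity
  nlinarith

theorem uc_main {N : ℕ} {Q : ((Fin N → ℝ) × (Fin N → Fin 4 → ℝ)) → Fin N → ℝ}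
    {A : Fin N → Fin N → Fin N → Fin 4 → Fin 4 → ℝ} (hQ : HasNullForm Q A)
    {u v : Fin N → Spc → ℝ} (hu : IsGlobalSolution Q u) (hv : IsGlobalSolution Q v)
    {F F' : ℝ → EuclideanSpace ℝ (Fin 3) → Fin N → ℝ}
    (hF : IsRadiationField u F) (hF' : IsRadiationField v F') {R₁ R₂ : ℝ}
    (hR₁ : 0 < R₁) (hR₂ : |R₂| < R₁)
    (hdata : ∀ x : EuclideanSpace ℝ (Fin 3), R₁ ≤ ‖x‖ → ∀ I,
      u I (0, x) = v I (0, x) ∧ dt (u I) (0, x) = dt (v I) (0, x))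
    (hrad : ∀ (q : ℝ) (ω : EuclideanSpace ℝ (Fin 3)), ‖ω‖ = 1 → R₂ < q → F q ω = F' q ω)
    (y : Spc) (hy : y ∈ Gd R₁ R₂) (I : Fin N) : Tr (sft (R₁ + 1) (dif u v I)) y = 0 := by
  obtain ⟨C, hC, bds⟩ := all_bounds hQ hu hv hF hF' hR₁ hR₂ hrad
  obtain ⟨cc, hcc⟩ : ∃ cc, cc = R₁ ^ 2 - R₂ ^ 2 := ⟨_, rfl⟩
  obtain ⟨n, hn⟩ : ∃ n, n = R₁ + 1 - R₂ := ⟨_, rfl⟩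
  obtain ⟨k, hk⟩ : ∃ k, k = n ^ 2 + cc := ⟨_, rfl⟩
  have hcc0 : 0 < cc := by
    obtain ⟨h1, h2⟩ := abs_lt.1 hR₂
    rw [hcc]; nlinarith
  have hn0 : 0 < n := by rw [hn]; linarith [(abs_lt.1 hR₂).2]
  have hGp : ∀ z, Gp R₁ R₂ z = k * (‖z.2‖ ^ 2 - z.1 ^ 2) + 2 * n * z.1 - 1 := by
    intro z; unfold Gp; rw [hk, hn, hcc]
  obtain ⟨ε, hε⟩ : ∃ ε, ε = min cc (Gp R₁ R₂ y / 2) := ⟨_, rfl⟩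
  have hε0 : 0 < ε := by
    rw [hε]; exact lt_min hcc0 (by linarith [hy.2.2])
  have hεc : ε ≤ cc := by rw [hε]; exact min_le_left _ _
  have hεG : ε < Gp R₁ R₂ y := by
    have : ε ≤ Gp R₁ R₂ y / 2 := by rw [hε]; exact min_le_right _ _
    linarith [hy.2.2]
  obtain ⟨b, hb⟩ : ∃ b, b = k - ε := ⟨_, rfl⟩
  have hbn : n ^ 2 ≤ b := by rw [hb, hk]; linarith
  have hb0 : 0 < b := lt_of_lt_of_le (by positivity) hbn
  have hbk : b ≤ k := by rw [hb]; linarith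
  obtain ⟨K, hK⟩ : ∃ K, K = 1 + ε - n ^ 2 / b := ⟨_, rfl⟩
  have hKε : ε ≤ K := by
    have : n ^ 2 / b ≤ 1 := (div_le_one hb0).2 hbn
    rw [hK]; linarith
  have hKp : 0 < K := by linarith
  set κ : Fin 4 → ℝ := Fin.cons (-b) fun _ => k with hκ
  set c : Fin 4 → ℝ := fun α => crd α (n / b, (0 : EuclideanSpace ℝ (Fin 3))) with hc
  have hW : ∀ y, Wt κ c K y = -b * (y.1 - n / b) ^ 2 + k * ‖y.2 - 0‖ ^ 2 - K := fun y =>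
    Wt_eq4 (-b) k K (n / b) 0 y
  have hW2 : ∀ y, Wt κ c K y = Gp R₁ R₂ y - ε * (1 - y.1 ^ 2) := by
    intro z
    rw [hW, hGp, sub_zero, hK]
    have : -b * (z.1 - n / b) ^ 2 = - b * z.1 ^ 2 + 2 * n * z.1 - n ^ 2 / b := by
      field_simp; ring
    rw [this, hb]; ring
  set V : Set Spc := {y | ‖y.2‖ < y.1 ∧ y.1 + ‖y.2‖ < 1 ∧ 0 < Wt κ c K y} with hV
  set O : Set Spc := {y | ‖y.2‖ < y.1 ∧ 0 < Wt κ c K y} with hO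
  have hWc : Continuous (Wt κ c K) := (contDiff_Wt (n := 0) κ c K).continuous
  have hnc : Continuous fun y : Spc => ‖y.2‖ := continuous_snd.norm
  have hVo : IsOpen V := (isOpen_lt hnc continuous_fst).inter
    ((isOpen_lt (continuous_fst.add hnc) continuous_const).inter (isOpen_lt continuous_const hWc))
  have hOo : IsOpen O := (isOpen_lt hnc continuous_fst).inter (isOpen_lt continuous_const hWc)
  have hGW : ∀ z : Spc, ‖z.2‖ < z.1 → z.1 + ‖z.2‖ ≤ 1 → 0 < Wt κ c K z → 0 < Gp R₁ R₂ z := by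
    intro z h1 h2 h3
    rw [hW2] at h3
    have h4 := norm_nonneg z.2
    have : 0 ≤ 1 - z.1 ^ 2 := by nlinarith
    have : 0 ≤ ε * (1 - z.1 ^ 2) := by positivity
    linarith
  have hVG : ∀ z ∈ V, z ∈ Gd R₁ R₂ := fun z hz => ⟨hz.1, hz.2.1, hGW z hz.1 hz.2.1.le hz.2.2⟩
  have hVb : Bornology.IsBounded V := by
    refine (Metric.isBounded_closedBall (x := ((0:ℝ), (0 : EuclideanSpace ℝ (Fin 3)))) (r := 1)).subset ?_
    rintro z ⟨h1, h2, h3⟩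
    have h4 := norm_nonneg z.2
    rw [Metric.mem_closedBall, Prod.dist_eq, dist_eq_norm, dist_eq_norm]
    simp only [sub_zero, Real.norm_eq_abs]
    refine max_le ?_ (by linarith)
    rw [abs_of_pos (by linarith)]; linarith
  have hclV : ∀ z ∈ closure V, ‖z.2‖ ≤ z.1 ∧ z.1 + ‖z.2‖ ≤ 1 := by
    have hcl : IsClosed {y : Spc | ‖y.2‖ ≤ y.1 ∧ y.1 + ‖y.2‖ ≤ 1} :=
      (isClosed_le hnc continuous_fst).inter
        (isClosed_le (continuous_fst.add hnc) continuous_const)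
    exact fun y hy => closure_minimal (t := {y : Spc | ‖y.2‖ ≤ y.1 ∧ y.1 + ‖y.2‖ ≤ 1})
      (fun z (hz : z ∈ V) => ⟨hz.1.le, hz.2.1.le⟩) hcl hy
  have hw : ∀ I, ContDiff ℝ (⊤ : ℕ∞) (sft (R₁ + 1) (dif u v I)) := fun I =>
    sft_contDiff _ (dif_contDiff hu.1 hv.1 I)
  have H : UCHyp (-(2 * k + 2 * b)) (16 * k ^ 2 * K) (2 * ε) C κ c K Dm V O
      (fun I => Tr (sft (R₁ + 1) (dif u v I))) := by
    have hk0 : 0 < k := by linarith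
    refine ⟨by positivity, by linarith, hC, hVo, hVb, hOo, fun y hy => ⟨hy.1, hy.2.2⟩, ?_,
      contDiff_Dm, ?_, ?_, fun z hz => Dm_pos hz.1,
      fun y hy => hy.2.2, ?_, ?_, fun z hz I => (bds z (hVG z hz) I).1,
      fun I z hz => (bds z (hVG z hz) I).2.1, fun I z hz => (bds z (hVG z hz) I).2.2.1,
      fun I z hz => (bds z (hVG z hz) I).2.2.2.1, fun I z hz => (bds z (hVG z hz) I).2.2.2.2⟩
    · intro k' hk' δ hδ z hz hkW hD
      refine ⟨lt_of_le_of_ne (hclV z hz).1 fun he => ?_, hk'.trans_le hkW⟩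
      rw [Dm_eq, he] at hD
      linarith
    · intro I z hz
      exact Tr_contDiffAt (Dm_pos hz.1).ne' ((hw I).of_le (by norm_cast))
    · intro z hzO hzc hzV I
      have h1 : z.1 + ‖z.2‖ = 1 := by
        by_contra hne
        exact hzV ⟨hzO.1, lt_of_le_of_ne (hclV z hzc).2 hne, hzO.2⟩
      have hD := (Dm_pos hzO.1).ne'
      have hg := geo hR₁ hR₂ hzO.1 h1.le (hGW z hzO.1 h1.le hzO.2)
      have hq := (bk_id (R₁ := R₁) hzO.1).2
      rw [h1] at hq
      have fs := finite_speed hQ.1 hu hv R₁ hR₁ hdata (bk (R₁ + 1) z) hg.1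
        (by unfold rr at hq; linarith) I
      have f0 : sft (R₁ + 1) (dif u v I) (inv z) = 0 := fs.1
      have f1 : ∀ α, pd α (sft (R₁ + 1) (dif u v I)) (inv z) = 0 := fun α => by
        rw [pd_sft_inv]; exact fs.2 α
      have f2 : kk (sft (R₁ + 1) (dif u v I)) (inv z) = 0 := by
        unfold kk Eu
        simp [f0, f1]
      refine ⟨?_, fun α => ?_⟩
      · simp [Tr, f0]
      · rw [(hasPd_Tr α hD (hw I)).2, f1, f2]; simp
    · intro α
      fin_cases α <;> simp [hκ, Fin.cons, Fin.cases, Fin.induction, Fin.induction.go] <;> linarith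
    · intro z hz
      have e := Wd_sum4 (-b) k (n / b) 4 (-(2 * k + 2 * b)) 0 z
      rw [← hκ, ← hc] at e
      have e2 : ∑ α, (4 * κ α - (-(2 * k + 2 * b)) * eta α) * (Wd κ c α z) ^ 2 =
        (∑ α, 4 * κ α * (Wd κ c α z) ^ 2) - (-(2 * k + 2 * b)) * (∑ β, eta β * (Wd κ c β z) ^ 2) := by
        rw [Finset.mul_sum, ← Finset.sum_sub_distrib]
        exact Finset.sum_congr rfl fun α _ => by ring
      rw [← e2, e]
      have h3 := hz.2.2
      rw [hW] at h3
      exact uc_alg hb0 hbk hKp (sq_nonneg _) h3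
  refine H.vanish y ⟨hy.1, hy.2.1, ?_⟩ I
  rw [hW2]
  nlinarith [sq_nonneg y.1]

/-- strict version -/
theorem strict_case {N : ℕ} {Q : ((Fin N → ℝ) × (Fin N → Fin 4 → ℝ)) → Fin N → ℝ}
    {A : Fin N → Fin N → Fin N → Fin 4 → Fin 4 → ℝ} (hQ : HasNullForm Q A)
    {u v : Fin N → Spc → ℝ} (hu : IsGlobalSolution Q u) (hv : IsGlobalSolution Q v)
    {F F' : ℝ → EuclideanSpace ℝ (Fin 3) → Fin N → ℝ}
    (hF : IsRadiationField u F) (hF' : IsRadiationField v F') {R₁ R₂ : ℝ}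
    (hR₁ : 0 < R₁) (hR₂ : |R₂| < R₁)
    (hdata : ∀ x : EuclideanSpace ℝ (Fin 3), R₁ ≤ ‖x‖ → ∀ I,
      u I (0, x) = v I (0, x) ∧ dt (u I) (0, x) = dt (v I) (0, x))
    (hrad : ∀ (q : ℝ) (ω : EuclideanSpace ℝ (Fin 3)), ‖ω‖ = 1 → R₂ < q → F q ω = F' q ω)
    (p : Spc) (hp : 0 < p.1) (hf : R₁ ^ 2 - R₂ ^ 2 < ‖p.2‖ ^ 2 - (p.1 + R₂) ^ 2) (I : Fin N) :
    u I p = v I p := by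
  rcases le_or_gt (R₁ + p.1) ‖p.2‖ with h | h
  · exact sub_eq_zero.1 (finite_speed hQ.1 hu hv R₁ hR₁ hdata p hp h I).1
  · set P : Spc := p + (R₁ + 1, 0) with hP
    have P1 : P.1 = p.1 + (R₁ + 1) := by simp [hP]
    have P2 : P.2 = p.2 := by simp [hP]
    have hPs : ‖P.2‖ < P.1 := by rw [P1, P2]; linarith
    have hDP := Dm_pos hPs
    have hDPe := Dm_eq P
    have hi : 0 < (Dm P)⁻¹ := inv_pos.2 hDP
    have y1 : (inv P).1 = (Dm P)⁻¹ * P.1 := by simp [inv]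
    have y2 : ‖(inv P).2‖ = (Dm P)⁻¹ * ‖P.2‖ := by
      simp only [inv, Prod.smul_snd, norm_smul, Real.norm_eq_abs, abs_of_pos hi]
    have hDi := Dm_inv hDP.ne'
    have hs : ‖(inv P).2‖ < (inv P).1 := by
      rw [y1, y2]; exact mul_lt_mul_of_pos_left hPs hi
    have hbk : bk (R₁ + 1) (inv P) = p := by
      unfold bk; rw [inv_inv' hDP.ne', hP]; simp
    have hyG : inv P ∈ Gd R₁ R₂ := by
      refine ⟨hs, ?_, ?_⟩
      · have := (bk_id (R₁ := R₁) hs).2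
        rw [hbk] at this
        unfold rr at this
        have h3 : 0 < (inv P).1 + ‖(inv P).2‖ := by linarith [norm_nonneg (inv P).2]
        nlinarith
      · have hD' := Dm_pos hs
        have hf' := geo_alg1 (R₂ := R₂) (cc := R₁ ^ 2 - R₂ ^ 2) (Dm_eq (inv P)) hD' rfl rfl
          (bk_fst (R₁ + 1) (inv P)) (bk_rr (R₁ + 1) hD')
        rw [hbk] at hf'
        unfold rr at hf'
        have : 0 < Gp R₁ R₂ (inv P) / Dm (inv P) := by
          unfold Gp
          rw [← hf']; linarith
        by_contra hcon
        exact absurd this (not_lt.2 (div_nonpos_of_nonpos_of_nonneg (not_lt.1 hcon) hD'.le))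
    have h0 := uc_main hQ hu hv hF hF' hR₁ hR₂ hdata hrad (inv P) hyG I
    unfold Tr at h0
    rw [sft_inv, hbk] at h0
    have h1 := (mul_eq_zero.1 h0).resolve_left (inv_ne_zero (Dm_pos hs).ne')
    exact sub_eq_zero.1 h1

theorem full_case {N : ℕ} {Q : ((Fin N → ℝ) × (Fin N → Fin 4 → ℝ)) → Fin N → ℝ}
    {A : Fin N → Fin N → Fin N → Fin 4 → Fin 4 → ℝ} (hQ : HasNullForm Q A)
    {u v : Fin N → Spc → ℝ} (hu : IsGlobalSolution Q u) (hv : IsGlobalSolution Q v)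
    {F F' : ℝ → EuclideanSpace ℝ (Fin 3) → Fin N → ℝ}
    (hF : IsRadiationField u F) (hF' : IsRadiationField v F') {R₁ R₂ : ℝ}
    (hR₁ : 0 < R₁) (hR₂ : |R₂| < R₁)
    (hdata : ∀ x : EuclideanSpace ℝ (Fin 3), R₁ ≤ ‖x‖ → ∀ I,
      u I (0, x) = v I (0, x) ∧ dt (u I) (0, x) = dt (v I) (0, x))
    (hrad : ∀ (q : ℝ) (ω : EuclideanSpace ℝ (Fin 3)), ‖ω‖ = 1 → R₂ < q → F q ω = F' q ω)
    (p : Spc) (hp : 0 < p.1) (hf : R₁ ^ 2 - R₂ ^ 2 ≤ rr p ^ 2 - (p.1 + R₂) ^ 2) (I : Fin N) :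
    u I p = v I p := by
  have hcc0 : 0 < R₁ ^ 2 - R₂ ^ 2 := by
    obtain ⟨h1, h2⟩ := abs_lt.1 hR₂
    nlinarith
  unfold rr at hf
  have hr : 0 < ‖p.2‖ ^ 2 := by nlinarith [sq_nonneg (p.1 + R₂)]
  have hc : Continuous fun s : ℝ => dif u v I (p.1, (1 + s) • p.2) :=
    (dif_contDiff hu.1 hv.1 I).continuous.comp (by fun_prop)
  have ht : Tendsto (fun s : ℝ => dif u v I (p.1, (1 + s) • p.2)) (𝓝[>] 0) (𝓝 (dif u v I p)) := by
    have := hc.tendsto 0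
    simp only [add_zero, one_smul] at this
    exact this.mono_left nhdsWithin_le_nhds
  have h0 : ∀ᶠ s in 𝓝[>] (0:ℝ), dif u v I (p.1, (1 + s) • p.2) = 0 := by
    filter_upwards [self_mem_nhdsWithin] with s hs
    have hs : 0 < s := hs
    refine sub_eq_zero.2 (strict_case hQ hu hv hF hF' hR₁ hR₂ hdata hrad (p.1, (1 + s) • p.2) hp ?_ I)
    simp only [norm_smul, mul_pow, Real.norm_eq_abs, sq_abs]
    have h5 : 0 < s * ‖p.2‖ ^ 2 := by positivity
    have h6 : 0 < s ^ 2 * ‖p.2‖ ^ 2 := by positivity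
    have h7 : (1 + s) ^ 2 * ‖p.2‖ ^ 2 = ‖p.2‖ ^ 2 + 2 * (s * ‖p.2‖ ^ 2) + s ^ 2 * ‖p.2‖ ^ 2 := by ring
    rw [h7]
    linarith
  exact sub_eq_zero.1 (tendsto_nhds_unique (ht.congr' h0) tendsto_const_nhds)

end part15

/-- Theorem 1.1 (i) of the paper: if two global solutions of a
semilinear system satisfying the null condition have equal data outside the ball
`{|x| ≤ R₁}` and equal radiation fields for `q > R₂` with `|R₂| < R₁`, then they agree
outside the hyperboloid `|x|² - (t+R₂)² = R₁² - R₂²`. -/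
theorem stmt0 {N : ℕ}
    (Q : ((Fin N → ℝ) × (Fin N → Fin 4 → ℝ)) → Fin N → ℝ)
    (A : Fin N → Fin N → Fin N → Fin 4 → Fin 4 → ℝ)
    (hQ : HasNullForm Q A)
    (u v : Fin N → Spc → ℝ)
    (hu : IsGlobalSolution Q u) (hv : IsGlobalSolution Q v)
    (F F' : ℝ → EuclideanSpace ℝ (Fin 3) → Fin N → ℝ)
    (hF : IsRadiationField u F) (hF' : IsRadiationField v F')
    (R₁ R₂ : ℝ) (hR₁ : 0 < R₁) (hR₂ : |R₂| < R₁)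
    (hdata : ∀ x : EuclideanSpace ℝ (Fin 3), R₁ ≤ ‖x‖ → ∀ I,
      u I (0, x) = v I (0, x) ∧ dt (u I) (0, x) = dt (v I) (0, x))
    (hrad : ∀ (q : ℝ) (ω : EuclideanSpace ℝ (Fin 3)), ‖ω‖ = 1 → R₂ < q →
      F q ω = F' q ω) :
    ∀ p : Spc, 0 < p.1 → R₁ ^ 2 - R₂ ^ 2 ≤ rr p ^ 2 - (p.1 + R₂) ^ 2 →
      ∀ I, u I p = v I p := by
  intro p hp hf I
  exact full_case hQ hu hv hF hF' hR₁ hR₂ hdata hrad p hp hf I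

end UCP
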